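/- arXiv:2410.14510 — 3 statements merged into one kernel-verified Lean document; each statement's English description precedes it below -/
import Mathlib

section
/- Let L be a finite simple graph with vertex set S, and let W = W(L) be the associated right angled Coxeter group, with generators the elements of S and relations s² = 1 for all s ∈ S and (st)² = 1 for all edges {s,t} of L. Then for every integer n ≥ 1, the number of orbits of the simultaneous conjugation action of W on W_{n,2} equals Σ_{l=0}^{|S|} s(l)·(2ⁿ−1)^l, where s(l) is the number of subsets T ⊆ S of cardinality l that span a complete subgraph of L (with s(0) = 1, counting the empty set). -/
/-- `pTuples G p n` is the set `G_{n,p}` of `n`-tuples of pairwise commuting elements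
of `G`, each of order a power of `p`. -/
def pTuples (G : Type*) [Group G] (p n : ℕ) : Set (Fin n → G) :=
  {v | (∀ i j, Commute (v i) (v j)) ∧ ∀ i, ∃ k : ℕ, orderOf (v i) = p ^ k}

/-- Simultaneous conjugation relation on a set of tuples. -/
def tupleConj {G : Type*} [Group G] {n : ℕ} (s : Set (Fin n → G)) (a b : s) : Prop :=
  ∃ g : G, ∀ i, g * a.1 i * g⁻¹ = b.1 i

/-- The Coxeter matrix of the right angled Coxeter group of a finite simple graph `L`:
diagonal entries `1`, entries `2` on edges, entries `0` (no relation) on non-adjacent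
pairs of distinct vertices. -/
def racMatrix {S : Type*} [DecidableEq S] (L : SimpleGraph S) [DecidableRel L.Adj] :
    CoxeterMatrix S where
  M := Matrix.of fun s t => if s = t then 1 else if L.Adj s t then 2 else 0
  isSymm := by
    ext s t
    simp only [Matrix.transpose_apply, Matrix.of_apply]
    by_cases h : s = t
    · subst h; simp
    · simp only [if_neg h, if_neg (Ne.symm h), SimpleGraph.adj_comm]
  diagonal := fun i => by simp
  off_diagonal := fun i i' h => by
    simp only [Matrix.of_apply, if_neg h]
    split <;> decide

/-- The right angled Coxeter group `W(L)` of a finite simple graph `L`. -/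
def RACoxeterGroup {S : Type*} [DecidableEq S] (L : SimpleGraph S) [DecidableRel L.Adj] :
    Type _ :=
  (racMatrix L).Group

noncomputable instance {S : Type*} [DecidableEq S] (L : SimpleGraph S)
    [DecidableRel L.Adj] : Group (RACoxeterGroup L) :=
  inferInstanceAs (Group (racMatrix L).Group)

namespace RACaux

variable {S : Type*} [DecidableEq S] (L : SimpleGraph S) [DecidableRel L.Adj]

/-- The generator. -/
noncomputable def gen (s : S) : RACoxeterGroup L := (racMatrix L).simple s

lemma exists_lift {G : Type*} [Group G] (f : S → G) (h1 : ∀ s, f s * f s = 1)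
    (h2 : ∀ s t, L.Adj s t → f s * f t = f t * f s) :
    ∃ φ : RACoxeterGroup L →* G, ∀ s, φ (gen L s) = f s := by
  have hl : (racMatrix L).IsLiftable f := by
    intro s t
    by_cases hst : s = t
    · subst hst
      simp [racMatrix, h1]
    · by_cases ha : L.Adj s t
      · simp only [racMatrix, Matrix.of_apply, if_neg hst, if_pos ha]
        rw [pow_two]
        calc f s * f t * (f s * f t) = (f s * f t) * (f t * f s) := by rw [h2 s t ha]
          _ = f s * (f t * f t) * f s := by group
          _ = 1 := by rw [h1, mul_one, h1]
      · simp only [racMatrix, Matrix.of_apply, if_neg hst, if_neg ha, pow_zero]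
  exact ⟨(racMatrix L).toCoxeterSystem.lift ⟨f, hl⟩,
    fun s => (racMatrix L).toCoxeterSystem.lift_apply_simple hl s⟩

lemma gen_sq (s : S) : gen L s * gen L s = 1 :=
  (racMatrix L).toCoxeterSystem.simple_mul_simple_self s

lemma gen_inv (s : S) : (gen L s)⁻¹ = gen L s := inv_eq_of_mul_eq_one_right (gen_sq L s)

lemma gen_comm {s t : S} (h : L.Adj s t) : gen L s * gen L t = gen L t * gen L s := by
  have h2 : (gen L s * gen L t) ^ 2 = 1 := by
    have := (racMatrix L).toCoxeterSystem.simple_mul_simple_pow s t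
    have e : (racMatrix L).M s t = 2 := by
      simp [racMatrix, h, h.ne]
    rw [e] at this
    exact this
  rw [pow_two] at h2
  have := eq_inv_of_mul_eq_one_left h2
  rw [mul_inv_rev, gen_inv, gen_inv] at this
  exact this

lemma gen_induction {p : RACoxeterGroup L → Prop} (w : RACoxeterGroup L) (h1 : p 1)
    (hs : ∀ s w, p w → p (gen L s * w)) : p w :=
  (racMatrix L).toCoxeterSystem.simple_induction_left w h1 (fun w s h => hs s w h)

/-- The special subgroup. -/
noncomputable def WS (A : Set S) : Subgroup (RACoxeterGroup L) :=
  Subgroup.closure (gen L '' A)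

variable {L} in
lemma gen_mem {A : Set S} {s : S} (h : s ∈ A) : gen L s ∈ WS L A :=
  Subgroup.subset_closure ⟨s, h, rfl⟩

lemma WS_mono {A B : Set S} (h : A ⊆ B) : WS L A ≤ WS L B :=
  Subgroup.closure_mono (Set.image_mono h)

lemma commute_of_mem {A : Set S} {z : RACoxeterGroup L}
    (h : ∀ t ∈ A, z * gen L t = gen L t * z) {c : RACoxeterGroup L} (hc : c ∈ WS L A) :
    z * c = c * z := by
  have : WS L A ≤ Subgroup.centralizer {z} := by
    rw [WS, Subgroup.closure_le]
    rintro _ ⟨t, ht, rfl⟩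
    simp [Subgroup.mem_centralizer_iff, h t ht]
  have := Subgroup.mem_centralizer_iff.1 (this hc) z (by simp)
  exact this

open Classical in
lemma exists_retract (A : Set S) :
    ∃ ρ : RACoxeterGroup L →* RACoxeterGroup L,
      ∀ s, ρ (gen L s) = if s ∈ A then gen L s else 1 := by
  apply exists_lift
  · intro s
    split_ifs <;> simp [gen_sq]
  · intro s t h
    split_ifs <;> simp [gen_comm L h]

/-- The retraction onto a special subgroup. -/
noncomputable def ret (A : Set S) : RACoxeterGroup L →* RACoxeterGroup L :=
  (exists_retract L A).choose

lemma ret_gen_mem {A : Set S} {s : S} (h : s ∈ A) : ret L A (gen L s) = gen L s := by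
  rw [ret, (exists_retract L A).choose_spec, if_pos h]

lemma ret_gen_not {A : Set S} {s : S} (h : s ∉ A) : ret L A (gen L s) = 1 := by
  rw [ret, (exists_retract L A).choose_spec, if_neg h]

lemma ret_of_mem {A : Set S} {w : RACoxeterGroup L} (h : w ∈ WS L A) : ret L A w = w := by
  have : Set.EqOn (ret L A) (MonoidHom.id _) (WS L A) := by
    apply MonoidHom.eqOn_closure
    rintro _ ⟨t, ht, rfl⟩
    simp [ret_gen_mem L ht]
  exact this h

lemma ret_mem_inter {A B : Set S} {w : RACoxeterGroup L} (h : w ∈ WS L B) :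
    ret L A w ∈ WS L (A ∩ B) := by
  have : WS L B ≤ (WS L (A ∩ B)).comap (ret L A) := by
    rw [WS, Subgroup.closure_le]
    rintro _ ⟨t, ht, rfl⟩
    by_cases hA : t ∈ A
    · simpa [ret_gen_mem L hA] using gen_mem (L := L) (show t ∈ A ∩ B from ⟨hA, ht⟩)
    · simp [ret_gen_not L hA, one_mem]
  exact this h

lemma mem_WS_univ (w : RACoxeterGroup L) : w ∈ WS L Set.univ := by
  induction w using gen_induction with
  | h1 => exact one_mem _
  | hs s w h => exact mul_mem (gen_mem (Set.mem_univ s)) h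

lemma ret_mem (A : Set S) (w : RACoxeterGroup L) : ret L A w ∈ WS L A := by
  simpa using ret_mem_inter L (A := A) (mem_WS_univ L w)

lemma mem_insert_cases {A : Set S} {s : S} (h : ∀ t ∈ A, L.Adj s t) {w : RACoxeterGroup L}
    (hw : w ∈ WS L (insert s A)) : ∃ c ∈ WS L A, w = c ∨ w = gen L s * c := by
  have hcom : ∀ c ∈ WS L A, gen L s * c = c * gen L s := fun c hc =>
    commute_of_mem L (fun t ht => gen_comm L (h t ht)) hc
  induction hw using Subgroup.closure_induction with
  | mem x hx =>
    obtain ⟨t, ht, rfl⟩ := hx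
    rcases ht with rfl | ht
    · exact ⟨1, one_mem _, Or.inr (by simp)⟩
    · exact ⟨_, gen_mem ht, Or.inl rfl⟩
  | one => exact ⟨1, one_mem _, Or.inl rfl⟩
  | mul x y _ _ hx hy =>
    obtain ⟨c, hc, hx⟩ := hx
    obtain ⟨d, hd, hy⟩ := hy
    refine ⟨c * d, mul_mem hc hd, ?_⟩
    rcases hx with rfl | rfl <;> rcases hy with rfl | rfl
    · left; rfl
    · right; rw [← mul_assoc, ← hcom _ hc, mul_assoc]
    · right; rw [mul_assoc]
    · left
      rw [hcom c hc, mul_assoc, ← mul_assoc (gen L s) (gen L s), gen_sq, one_mul]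
  | inv x _ hx =>
    obtain ⟨c, hc, hx⟩ := hx
    refine ⟨c⁻¹, inv_mem hc, ?_⟩
    rcases hx with rfl | rfl
    · left; rfl
    · right; rw [mul_inv_rev, gen_inv, hcom _ (inv_mem hc)]

section tree

variable (s : S)

/-- The subgroup generated by the generators other than `s`. -/
noncomputable abbrev W' : Subgroup (RACoxeterGroup L) := WS L {s}ᶜ

/-- The link subgroup. -/
noncomputable abbrev C' : Subgroup (W' L s) := (WS L (L.neighborSet s)).subgroupOf (W' L s)

/-- Letters. -/
abbrev X := (W' L s) ⧸ (C' L s)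

/-- Reduced words. -/
abbrev R := {l : List (X L s) // l.IsChain (· ≠ ·)}

/-- Relabelling. -/
noncomputable def relFun (a : W' L s) (l : R L s) : R L s :=
  ⟨l.1.map (fun x => a • x), by
    rw [List.isChain_map]
    exact l.2.imp (fun x y h h' => h (smul_left_cancel a h'))⟩

/-- Relabelling as a homomorphism. -/
noncomputable def rel : W' L s →* Equiv.Perm (R L s) :=
  @MulAction.toPermHom (W' L s) (R L s) _
    { smul := relFun L s
      one_smul := fun l => Subtype.ext (by
        change l.1.map (fun x => (1 : W' L s) • x) = l.1
        simp)
      mul_smul := fun a b l => Subtype.ext (by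
        change l.1.map (fun x => (a * b) • x) = (l.1.map (fun x => b • x)).map (fun x => a • x)
        simp [mul_smul]) }

lemma rel_apply (a : W' L s) (l : R L s) : (rel L s a l).1 = l.1.map (fun x => a • x) := rfl

open Classical in
/-- Toggling the head letter. -/
noncomputable def tog (x : X L s) : R L s → R L s
  | ⟨[], _⟩ => ⟨[x], by simp⟩
  | ⟨y :: l, h⟩ => if hxy : x = y then ⟨l, (List.isChain_cons.1 h).2⟩ else
      ⟨x :: y :: l, List.isChain_cons_cons.2 ⟨hxy, h⟩⟩

lemma tog_of_chain (x : X L s) (l : List (X L s)) (h : (x :: l).IsChain (· ≠ ·)) :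
    tog L s x ⟨l, (List.isChain_cons.1 h).2⟩ = ⟨x :: l, h⟩ := by
  cases l with
  | nil => rfl
  | cons y l =>
    have := (List.isChain_cons_cons.1 h).1
    simp [tog, this]

lemma tog_cons (x : X L s) (l : List (X L s)) (h : (x :: l).IsChain (· ≠ ·)) :
    tog L s x ⟨x :: l, h⟩ = ⟨l, (List.isChain_cons.1 h).2⟩ := by
  simp [tog]

lemma tog_cases (x : X L s) (l : R L s) :
    (∃ (m : List (X L s)) (h : (x :: m).IsChain (· ≠ ·)), l = ⟨x :: m, h⟩) ∨
      (x :: l.1).IsChain (· ≠ ·) := by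
  obtain ⟨l, hl⟩ := l
  cases l with
  | nil => right; simp
  | cons y l =>
    by_cases hxy : x = y
    · subst hxy; left; exact ⟨l, hl, rfl⟩
    · right; exact List.isChain_cons_cons.2 ⟨hxy, hl⟩

lemma tog_tog (x : X L s) (l : R L s) : tog L s x (tog L s x l) = l := by
  rcases tog_cases L s x l with ⟨m, h, rfl⟩ | h
  · rw [tog_cons, tog_of_chain]
  · obtain ⟨l, hl⟩ := l
    rw [tog_of_chain L s x l h, tog_cons]

/-- Toggling as a permutation. -/
noncomputable def togP (x : X L s) : Equiv.Perm (R L s) :=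
  ⟨tog L s x, tog L s x, tog_tog L s x, tog_tog L s x⟩

lemma togP_sq (x : X L s) : togP L s x * togP L s x = 1 := Equiv.ext (tog_tog L s x)

lemma togP_apply (x : X L s) (l : R L s) : togP L s x l = tog L s x l := rfl

lemma rel_tog (a : W' L s) (x : X L s) : rel L s a * togP L s x = togP L s (a • x) * rel L s a := by
  ext1 l
  change rel L s a (tog L s x l) = tog L s (a • x) (rel L s a l)
  have key : ∀ (m : List (X L s)) (h : (x :: m).IsChain (· ≠ ·)),
      ∃ h' : ((a • x) :: m.map (fun x => a • x)).IsChain (· ≠ ·),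
      rel L s a ⟨x :: m, h⟩ = ⟨(a • x) :: m.map (fun x => a • x), h'⟩ := fun m h =>
    ⟨(rel L s a ⟨x :: m, h⟩).2, rfl⟩
  rcases tog_cases L s x l with ⟨m, h, rfl⟩ | h
  · rw [tog_cons]
    obtain ⟨h', e⟩ := key m h
    rw [e, tog_cons]
    rfl
  · obtain ⟨l, hl⟩ := l
    rw [tog_of_chain L s x l h]
    obtain ⟨h', e⟩ := key l h
    rw [e, ← tog_of_chain _ _ _ _ h']
    rfl

/-- The base letter. -/
noncomputable def o : X L s := QuotientGroup.mk 1

lemma smul_o (a : W' L s) : a • o L s = o L s ↔ a.1 ∈ WS L (L.neighborSet s) := by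
  have : a • o L s = QuotientGroup.mk a := by
    change QuotientGroup.mk (a * 1) = _
    rw [mul_one]
  rw [this, eq_comm, o, QuotientGroup.eq]
  simp [Subgroup.mem_subgroupOf]

lemma exists_act : ∃ φ : RACoxeterGroup L →* Equiv.Perm (R L s),
    ∀ t, φ (gen L t) = if h : t = s then togP L s (o L s) else rel L s ⟨gen L t, gen_mem h⟩ := by
  have key : ∀ t (h : t ≠ s), L.Adj s t → togP L s (o L s) * rel L s ⟨gen L t, gen_mem h⟩ =
      rel L s ⟨gen L t, gen_mem h⟩ * togP L s (o L s) := by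
    intro t h ha
    rw [rel_tog, (smul_o L s _).2 (gen_mem ha)]
  apply exists_lift
  · intro t
    split_ifs with h
    · exact togP_sq _ _ _
    · rw [← map_mul]
      convert map_one (rel L s)
      exact Subtype.ext (gen_sq L t)
  · intro t u ha
    by_cases ht : t = s <;> by_cases hu : u = s
    · subst ht; subst hu; rfl
    · subst ht
      simpa [hu] using key u hu ha
    · subst hu
      simpa [ht] using (key t ht ha.symm).symm
    · simp only [ht, hu, dite_false]
      rw [← map_mul, ← map_mul]
      congr 1
      exact Subtype.ext (gen_comm L ha)

/-- The action on reduced words. -/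
noncomputable def act : RACoxeterGroup L →* Equiv.Perm (R L s) := (exists_act L s).choose

lemma act_s : act L s (gen L s) = togP L s (o L s) := by
  rw [act, (exists_act L s).choose_spec, dif_pos rfl]

lemma act_W' (a : W' L s) : act L s a.1 = rel L s a := by
  obtain ⟨a, ha⟩ := a
  induction ha using Subgroup.closure_induction with
  | mem x hx =>
    obtain ⟨t, ht, rfl⟩ := hx
    have ht' : ¬ t = s := ht
    rw [act, (exists_act L s).choose_spec, dif_neg ht']
  | one => exact (map_one _).trans (map_one (rel L s)).symm
  | mul x y hx hy h1 h2 =>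
    change act L s (x * y) = rel L s (⟨x, hx⟩ * ⟨y, hy⟩)
    rw [map_mul, map_mul]
    exact congrArg₂ _ h1 h2
  | inv x hx h1 =>
    change act L s (x⁻¹) = rel L s (⟨x, hx⟩⁻¹)
    rw [map_inv, map_inv]
    exact congrArg _ h1

/-- The element of a letter. -/
noncomputable def el : X L s → RACoxeterGroup L :=
  Quotient.lift (fun a : W' L s => a.1 * gen L s * a.1⁻¹) (by
    intro a b hab
    have hab : (a⁻¹ * b) ∈ C' L s := QuotientGroup.leftRel_apply.1 hab
    have hc : gen L s * (a.1⁻¹ * b.1) = (a.1⁻¹ * b.1) * gen L s :=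
      commute_of_mem L (A := L.neighborSet s) (fun t ht => gen_comm L ht) hab
    have : b.1 = a.1 * (a.1⁻¹ * b.1) := by group
    change a.1 * gen L s * a.1⁻¹ = b.1 * gen L s * b.1⁻¹
    calc a.1 * gen L s * a.1⁻¹ = a.1 * (gen L s * (a.1⁻¹ * b.1)) * b.1⁻¹ := by group
      _ = b.1 * gen L s * b.1⁻¹ := by rw [hc]; group)

lemma el_mk (a : W' L s) : el L s (QuotientGroup.mk a) = a.1 * gen L s * a.1⁻¹ := rfl

lemma el_smul (a : W' L s) (x : X L s) : el L s (a • x) = a.1 * el L s x * a.1⁻¹ := by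
  obtain ⟨b, rfl⟩ := QuotientGroup.mk_surjective x
  change el L s (QuotientGroup.mk (a * b)) = _
  rw [el_mk, el_mk]
  simp only [Subgroup.coe_mul]
  group

lemma el_o : el L s (o L s) = gen L s := by
  rw [o, el_mk]; simp

lemma el_sq (x : X L s) : el L s x * el L s x = 1 := by
  obtain ⟨b, rfl⟩ := QuotientGroup.mk_surjective x
  rw [el_mk]
  calc _ = b.1 * (gen L s * gen L s) * b.1⁻¹ := by group
    _ = 1 := by rw [gen_sq]; group

lemma act_el (x : X L s) : act L s (el L s x) = togP L s x := by
  obtain ⟨b, rfl⟩ := QuotientGroup.mk_surjective x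
  rw [el_mk, map_mul, map_mul, map_inv, act_s, act_W', rel_tog, mul_assoc, mul_inv_cancel, mul_one]
  congr 1
  change QuotientGroup.mk (b * 1) = _
  rw [mul_one]

/-- Empty word. -/
def nil : R L s := ⟨[], by simp⟩

/-- Normal form. -/
noncomputable def nf (w : RACoxeterGroup L) : R L s := act L s w (nil L s)

lemma nf_mul (w y : RACoxeterGroup L) : nf L s (w * y) = act L s w (nf L s y) := by
  simp [nf]

lemma nf_el_mul (x : X L s) (y : RACoxeterGroup L) :
    nf L s (el L s x * y) = tog L s x (nf L s y) := by
  rw [nf_mul, act_el]; rfl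

lemma nf_W'_mul (a : W' L s) (y : RACoxeterGroup L) :
    (nf L s (a.1 * y)).1 = (nf L s y).1.map (fun x => a • x) := by
  rw [nf_mul, act_W']; rfl

lemma nf_one : nf L s 1 = nil L s := by simp [nf]

lemma nf_W' {a : RACoxeterGroup L} (ha : a ∈ W' L s) : nf L s a = nil L s := by
  have := nf_W'_mul L s ⟨a, ha⟩ 1
  simp only [mul_one, nf_one] at this
  exact Subtype.ext this

/-- Product of the letters of a word. -/
noncomputable def P (l : List (X L s)) : RACoxeterGroup L := (l.map (el L s)).prod

lemma P_map (a : W' L s) (l : List (X L s)) :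
    P L s (l.map (fun x => a • x)) = a.1 * P L s l * a.1⁻¹ := by
  induction l with
  | nil => simp [P]
  | cons x l ih =>
    simp only [P, List.map_cons, List.prod_cons] at ih ⊢
    rw [ih, el_smul]
    group

lemma P_cons (x : X L s) (l : List (X L s)) : P L s (x :: l) = el L s x * P L s l := by
  simp [P]

lemma P_tog (x : X L s) (l : R L s) : P L s (tog L s x l).1 = el L s x * P L s l.1 := by
  rcases tog_cases L s x l with ⟨m, h, rfl⟩ | h
  · rw [tog_cons]
    simp only [P_cons]
    rw [← mul_assoc, el_sq, one_mul]
  · obtain ⟨l, hl⟩ := l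
    rw [tog_of_chain L s x l h]
    simp only [P_cons]

lemma decomp (w : RACoxeterGroup L) : (P L s (nf L s w).1)⁻¹ * w ∈ W' L s := by
  induction w using gen_induction with
  | h1 =>
    rw [nf_one]
    simp [nil, P, one_mem]
  | hs t w ih =>
    by_cases h : t = s
    · subst h
      rw [nf_mul, act_s, togP_apply, P_tog, el_o]
      convert ih using 1
      rw [mul_inv_rev]
      group
    · have := nf_W'_mul L s ⟨gen L t, gen_mem h⟩ w
      rw [this, P_map]
      have h2 := mul_mem (gen_mem (L := L) (show t ∈ ({s} : Set S)ᶜ from h)) ih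
      convert h2 using 1
      simp only
      group

lemma nf_P_mul (l : List (X L s)) (z : RACoxeterGroup L)
    (h : (l ++ (nf L s z).1).IsChain (· ≠ ·)) :
    nf L s (P L s l * z) = ⟨l ++ (nf L s z).1, h⟩ := by
  induction l with
  | nil => simp [P]
  | cons x l ih =>
    rw [P_cons, mul_assoc, nf_el_mul, ih (List.isChain_cons.1 h).2]
    exact tog_of_chain L s x (l ++ (nf L s z).1) h

lemma P_inv (l : List (X L s)) : (P L s l)⁻¹ = P L s l.reverse := by
  have : ∀ x, (el L s x)⁻¹ = el L s x := fun x => inv_eq_of_mul_eq_one_right (el_sq L s x)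
  simp only [P, List.prod_inv_reverse, List.map_map, List.map_reverse]
  congr 2
  apply List.map_congr_left
  intro x _
  exact this x

/-- Length. -/
noncomputable def len (w : RACoxeterGroup L) : ℕ := (nf L s w).1.length

lemma len_W'_mul {a : RACoxeterGroup L} (ha : a ∈ W' L s) (w : RACoxeterGroup L) :
    len L s (a * w) = len L s w := by
  have := nf_W'_mul L s ⟨a, ha⟩ w
  simp only at this
  simp [len, this]

lemma convex {w : RACoxeterGroup L} {x y : X L s} {l : List (X L s)}
    (hw : (nf L s w).1 = x :: y :: l) (z : RACoxeterGroup L) :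
    len L s ((el L s x)⁻¹ * z) < len L s z ∨
      len L s ((el L s x)⁻¹ * z) < len L s (w⁻¹ * z) := by
  have hinv : (el L s x)⁻¹ = el L s x := inv_eq_of_mul_eq_one_right (el_sq L s x)
  rw [hinv]
  rcases tog_cases L s x (nf L s z) with ⟨m, h, e⟩ | h
  · left
    rw [len, len, nf_el_mul, e, tog_cons]
    simp
  · right
    have hz : (nf L s (el L s x * z)).1 = x :: (nf L s z).1 := by
      rw [nf_el_mul]
      exact congrArg Subtype.val (tog_of_chain L s x _ h)
    have hch := (nf L s w).2
    rw [hw] at hch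
    have hc1 : ((y :: l).reverse ++ (nf L s (el L s x * z)).1).IsChain (· ≠ ·) := by
      rw [hz, List.isChain_append]
      refine ⟨?_, h, ?_⟩
      · rw [List.isChain_reverse]
        exact (List.isChain_cons.1 hch).2.imp (fun _ _ h => h.symm)
      · simp
        exact fun h => (List.isChain_cons_cons.1 hch).1 h.symm
    have hd := decomp L s w
    rw [hw] at hd
    have e : w⁻¹ * z = ((P L s (x :: y :: l))⁻¹ * w)⁻¹ *
        (P L s (y :: l).reverse * (el L s x * z)) := by
      rw [← P_inv, P_cons L s x]
      calc w⁻¹ * z = w⁻¹ * (el L s x * el L s x) * z := by rw [el_sq, mul_one]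
        _ = _ := by group
    rw [e, len_W'_mul L s (inv_mem hd)]
    conv_rhs => rw [len, nf_P_mul L s _ _ hc1]
    simp [len]
    omega

lemma exists_small (H : Subgroup (RACoxeterGroup L)) [Finite H] :
    ∃ k : RACoxeterGroup L, ∀ h ∈ H, len L s (k⁻¹ * h * k) ≤ 1 := by
  have := Fintype.ofFinite H
  let E : RACoxeterGroup L → ℕ := fun k =>
    (Finset.univ : Finset H).sup (fun h => len L s (k⁻¹ * h.1))
  obtain ⟨k, hk⟩ : ∃ k, ∀ k', E k ≤ E k' := ⟨Function.argmin E, fun k' => Function.argmin_le E k'⟩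
  refine ⟨k, fun h hh => ?_⟩
  by_contra hcon
  have : ∃ x y l, (nf L s (k⁻¹ * h * k)).1 = x :: y :: l := by
    rw [len] at hcon
    match hl : (nf L s (k⁻¹ * h * k)).1 with
    | [] => simp [hl] at hcon
    | [x] => simp [hl] at hcon
    | x :: y :: l => exact ⟨x, y, l, rfl⟩
  obtain ⟨x, y, l, hl⟩ := this
  have hle : ∀ h' : H, len L s (k⁻¹ * h'.1) ≤ E k := fun h' =>
    Finset.le_sup (f := fun h : H => len L s (k⁻¹ * h.1)) (Finset.mem_univ h')
  have key : ∀ h' : H, len L s ((k * el L s x)⁻¹ * h'.1) < E k := by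
    intro h'
    rcases convex L s hl (k⁻¹ * h'.1) with h1 | h1
    · refine lt_of_lt_of_le ?_ (hle h')
      rwa [show (k * el L s x)⁻¹ * h'.1 = (el L s x)⁻¹ * (k⁻¹ * h'.1) by group]
    · refine lt_of_lt_of_le ?_ (hle (⟨h, hh⟩⁻¹ * h'))
      rw [show (k * el L s x)⁻¹ * h'.1 = (el L s x)⁻¹ * (k⁻¹ * h'.1) by group]
      have e2 : k⁻¹ * (((⟨h, hh⟩ : H)⁻¹ * h' : H) : RACoxeterGroup L) =
          (k⁻¹ * h * k)⁻¹ * (k⁻¹ * h'.1) := by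
        simp only [Subgroup.coe_mul, Subgroup.coe_inv]
        group
      rwa [e2]
  have : E (k * el L s x) < E k := by
    refine (Finset.sup_lt_iff (lt_of_le_of_lt bot_le (key 1))).2 (fun h' _ => key h')
  exact absurd (hk (k * el L s x)) (not_le.2 this)

lemma mem_W'_of_nf {w : RACoxeterGroup L} (h : (nf L s w).1 = []) : w ∈ W' L s := by
  have := decomp L s w
  rw [h] at this
  simpa [P] using this

lemma small_o (K : Subgroup (RACoxeterGroup L))
    (hK : ∀ h ∈ K, (nf L s h).1 = [] ∨ (nf L s h).1 = [o L s])
    (h0 : RACoxeterGroup L) (hh0 : h0 ∈ K) (hn : (nf L s h0).1 = [o L s])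
    (h : RACoxeterGroup L) (hh : h ∈ K) :
    ∃ c ∈ WS L (L.neighborSet s), h = c ∨ h = gen L s * c := by
  rcases hK h hh with h1 | h1
  · have hW := mem_W'_of_nf L s h1
    refine ⟨h, ?_, Or.inl rfl⟩
    have h2 := nf_W'_mul L s ⟨h, hW⟩ h0
    rw [hn] at h2
    have h3 := hK _ (mul_mem hh hh0)
    simp only at h2
    rw [h2] at h3
    simp at h3
    exact (smul_o L s ⟨h, hW⟩).1 h3
  · have hW : gen L s * h ∈ W' L s := by
      have := decomp L s h
      rw [h1] at this
      simpa [P, el_o, gen_inv] using this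
    refine ⟨gen L s * h, ?_, Or.inr (by rw [← mul_assoc, gen_sq, one_mul])⟩
    rw [← smul_o L s ⟨_, hW⟩]
    by_contra hne
    have h2 := nf_W'_mul L s ⟨gen L s * h, hW⟩ h0
    rw [hn] at h2
    have h3 : h * h0 = el L s (o L s) * (gen L s * h * h0) := by
      rw [el_o, ← mul_assoc, ← mul_assoc, gen_sq, one_mul]
    have h4 := nf_el_mul L s (o L s) (gen L s * h * h0)
    rw [← h3] at h4
    have h5 : nf L s (gen L s * h * h0) = ⟨[(⟨gen L s * h, hW⟩ : W' L s) • o L s], by simp⟩ :=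
      Subtype.ext h2
    rw [h5, tog_of_chain L s _ _ (by simpa using fun h => hne h.symm)] at h4
    have h6 := hK _ (mul_mem hh hh0)
    rw [h4] at h6
    simp at h6

lemma dichotomy (H : Subgroup (RACoxeterGroup L)) [Finite H] :
    ∃ g : RACoxeterGroup L, (∀ h ∈ H, g * h * g⁻¹ ∈ WS L {s}ᶜ) ∨
      (∀ h ∈ H, ∃ c ∈ WS L (L.neighborSet s), g * h * g⁻¹ = c ∨ g * h * g⁻¹ = gen L s * c) := by
  obtain ⟨k, hk⟩ := exists_small L s H
  by_cases hall : ∀ h ∈ H, (nf L s (k⁻¹ * h * k)).1 = []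
  · refine ⟨k⁻¹, Or.inl fun h hh => ?_⟩
    rw [inv_inv]
    exact mem_W'_of_nf L s (hall h hh)
  push Not at hall
  obtain ⟨h0, hh0, hne⟩ := hall
  obtain ⟨x, hx⟩ : ∃ x, (nf L s (k⁻¹ * h0 * k)).1 = [x] := by
    have := hk h0 hh0
    rw [len] at this
    match hl : (nf L s (k⁻¹ * h0 * k)).1 with
    | [] => exact absurd hl hne
    | [x] => exact ⟨x, rfl⟩
    | x :: y :: l => simp [hl] at this
  have honly : ∀ h ∈ H, (nf L s (k⁻¹ * h * k)).1 = [] ∨ (nf L s (k⁻¹ * h * k)).1 = [x] := by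
    intro h hh
    have hlen := hk h hh
    rw [len] at hlen
    match hl : (nf L s (k⁻¹ * h * k)).1 with
    | [] => exact Or.inl rfl
    | x :: y :: l => simp [hl] at hlen
    | [y] =>
      right
      by_contra hyx
      have hxy : x ≠ y := fun h => hyx (by rw [h])
      have h1 := hk _ (mul_mem (inv_mem hh0) hh)
      have hd := decomp L s (k⁻¹ * h0 * k)
      rw [hx] at hd
      have e : k⁻¹ * (h0⁻¹ * h) * k = ((P L s [x])⁻¹ * (k⁻¹ * h0 * k))⁻¹ *
          (el L s x * (k⁻¹ * h * k)) := by
        have hP : P L s [x] = el L s x := by simp [P]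
        rw [hP]
        calc k⁻¹ * (h0⁻¹ * h) * k =
            (k⁻¹ * h0 * k)⁻¹ * 1 * (k⁻¹ * h * k) := by group
          _ = (k⁻¹ * h0 * k)⁻¹ * (el L s x * el L s x) * (k⁻¹ * h * k) := by rw [el_sq]
          _ = _ := by group
      rw [e, len_W'_mul L s (inv_mem hd), len, nf_el_mul] at h1
      have h5 : nf L s (k⁻¹ * h * k) = ⟨[y], by simp⟩ := Subtype.ext hl
      rw [h5, tog_of_chain L s _ _ (by simpa using hxy)] at h1
      simp at h1
  obtain ⟨a, rfl⟩ := QuotientGroup.mk_surjective x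
  have hao : a⁻¹ • (QuotientGroup.mk a : X L s) = o L s := by
    change QuotientGroup.mk (a⁻¹ * a) = _
    rw [inv_mul_cancel]; rfl
  have hnf : ∀ w, (nf L s (a.1⁻¹ * w * a.1)).1 = (nf L s w).1.map (fun x => a⁻¹ • x) := by
    intro w
    have h1 : nf L s (w * a.1) = nf L s w := by
      rw [nf_mul, nf_W' L s a.2]; rfl
    have h2 := nf_W'_mul L s a⁻¹ (w * a.1)
    rw [h1] at h2
    rw [← h2, mul_assoc]; rfl
  let g := a.1⁻¹ * k⁻¹
  have hg : ∀ h, g * h * g⁻¹ = a.1⁻¹ * (k⁻¹ * h * k) * a.1 := fun h => by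
    simp only [g]; group
  refine ⟨g, Or.inr fun h hh => ?_⟩
  have hmem : ∀ h ∈ H, g * h * g⁻¹ ∈ H.map (MulAut.conj g).toMonoidHom := fun h hh =>
    ⟨h, hh, by simp⟩
  refine small_o L s (H.map (MulAut.conj g).toMonoidHom) ?_ (g * h0 * g⁻¹) (hmem _ hh0) ?_ _
    (hmem h hh)
  · rintro _ ⟨h, hh, rfl⟩
    have : (MulAut.conj g).toMonoidHom h = g * h * g⁻¹ := by simp
    rw [this, hg, hnf]
    rcases honly h hh with h1 | h1
    · left; simp [h1]
    · right; rw [h1, List.map_singleton, hao]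
  · rw [hg, hnf, hx, List.map_singleton, hao]

end tree

lemma finite_conj (m : ℕ) : ∀ A : Finset S, A.card = m →
    ∀ H : Subgroup (RACoxeterGroup L), Finite H → H ≤ WS L A →
    ∃ g ∈ WS L (A : Set S), ∃ T : Finset S, T ⊆ A ∧ (∀ a ∈ T, ∀ b ∈ T, a ≠ b → L.Adj a b) ∧
      ∀ h ∈ H, g * h * g⁻¹ ∈ WS L (T : Set S) := by
  induction m using Nat.strong_induction_on with
  | _ m IH =>
  intro A hA H hf hH
  rcases A.eq_empty_or_nonempty with rfl | ⟨s, hs⟩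
  · exact ⟨1, one_mem _, ∅, by simp, by simp, fun h hh => by simpa using hH hh⟩
  obtain ⟨g, hg⟩ := dichotomy L s H
  have hk : ret L A g ∈ WS L (A : Set S) := ret_mem L _ g
  set k := ret L A g with hkdef
  have hret : ∀ h ∈ H, k * h * k⁻¹ = ret L A (g * h * g⁻¹) := by
    intro h hh
    rw [map_mul, map_mul, map_inv, ret_of_mem L (hH hh)]
  rcases hg with hg | hg
  · have hfin : Finite (H.map (MulAut.conj k).toMonoidHom) :=
      Set.Finite.to_subtype (Set.Finite.image _ (Set.toFinite (H : Set (RACoxeterGroup L))))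
    obtain ⟨g', hg', T, hT, hcl, hT'⟩ := IH (A.erase s).card
      (hA ▸ Finset.card_erase_lt_of_mem hs) (A.erase s) rfl
      (H.map (MulAut.conj k).toMonoidHom) hfin (by
        rintro _ ⟨h, hh, rfl⟩
        have : (MulAut.conj k).toMonoidHom h = k * h * k⁻¹ := by simp
        rw [this, hret h hh]
        refine WS_mono L ?_ (ret_mem_inter L (A := (A : Set S)) (hg h hh))
        intro x hx
        simpa [and_comm] using hx)
    refine ⟨g' * k, mul_mem (WS_mono L (by simp) hg') hk, T,
      hT.trans (Finset.erase_subset _ _), hcl, fun h hh => ?_⟩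
    have := hT' (k * h * k⁻¹) ⟨h, hh, by simp⟩
    convert this using 1
    group
  · let B : Finset S := A.filter (fun t => L.Adj s t)
    have hB : (B : Set S) = (A : Set S) ∩ L.neighborSet s := by
      ext x; simp [B]
    have hcase : ∀ h ∈ H, ∃ c ∈ WS L (B : Set S),
        k * h * k⁻¹ = c ∨ k * h * k⁻¹ = gen L s * c := by
      intro h hh
      obtain ⟨c, hc, hor⟩ := hg h hh
      refine ⟨ret L A c, hB ▸ ret_mem_inter L hc, ?_⟩
      rw [hret h hh]
      rcases hor with e | e
      · left; rw [e]
      · right; rw [e, map_mul, ret_gen_mem L (by simpa using hs)]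
    have hsB : s ∉ (B : Set S) := by simp [B]
    let H' := H.map ((ret L (B : Set S)).comp (MulAut.conj k).toMonoidHom)
    have hfin : Finite H' :=
      Set.Finite.to_subtype (Set.Finite.image _ (Set.toFinite (H : Set (RACoxeterGroup L))))
    obtain ⟨g', hg', T, hT, hcl, hT'⟩ := IH B.card
      (hA ▸ Finset.card_lt_card (Finset.filter_ssubset.2 ⟨s, hs, by simp⟩)) B rfl H' hfin (by
        rintro _ ⟨h, hh, rfl⟩
        exact ret_mem L _ _)
    have hBA : (B : Set S) ⊆ (A : Set S) := hB ▸ Set.inter_subset_left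
    have hcom : g' * gen L s = gen L s * g' :=
      (commute_of_mem L (A := (B : Set S)) (z := gen L s)
        (fun t ht => gen_comm L (by simpa using (hB ▸ ht).2)) hg').symm
    refine ⟨g' * k, mul_mem (WS_mono L hBA hg') hk, insert s T, ?_, ?_, fun h hh => ?_⟩
    · exact Finset.insert_subset hs (hT.trans (Finset.filter_subset _ _))
    · have hadj : ∀ b ∈ T, L.Adj s b := fun b hb => (Finset.mem_filter.1 (hT hb)).2
      intro a ha b hb hab
      rcases Finset.mem_insert.1 ha with ha' | ha' <;> rcases Finset.mem_insert.1 hb with hb' | hb'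
      · exact absurd (ha'.trans hb'.symm) hab
      · rw [ha']; exact hadj b hb'
      · rw [hb']; exact (hadj a ha').symm
      · exact hcl a ha' b hb' hab
    · obtain ⟨c, hc, hor⟩ := hcase h hh
      have hc' : ret L (B : Set S) (k * h * k⁻¹) = c := by
        rcases hor with e | e
        · rw [e, ret_of_mem L hc]
        · rw [e, map_mul, ret_gen_not L hsB, one_mul, ret_of_mem L hc]
      have h1 : g' * c * g'⁻¹ ∈ WS L (T : Set S) := hT' c ⟨h, hh, by simpa using hc'⟩
      have h2 : g' * c * g'⁻¹ ∈ WS L ((insert s T : Finset S) : Set S) := WS_mono L (by simp) h1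
      have e : g' * k * h * (g' * k)⁻¹ = g' * (k * h * k⁻¹) * g'⁻¹ := by group
      rw [e]
      rcases hor with e | e
      · rw [e]; exact h2
      · rw [e, ← mul_assoc, hcom, mul_assoc, mul_assoc]
        refine mul_mem (gen_mem (by simp)) ?_
        rw [← mul_assoc]; exact h2

/-- Value group. -/
abbrev Z2 := Multiplicative (ZMod 2)

/-- The generator of the value group. -/
def zz : Z2 := Multiplicative.ofAdd 1

lemma z2_sq (z : Z2) : z * z = 1 := by
  revert z; decide

lemma zz_ne : zz ≠ 1 := by decide

lemma z2_cases (z : Z2) : z = 1 ∨ z = zz := by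
  revert z; decide

lemma exists_ab : ∃ φ : RACoxeterGroup L →* (S → Z2), ∀ s, φ (gen L s) = Pi.mulSingle s zz := by
  apply exists_lift
  · intro s
    ext1 t
    exact z2_sq _
  · intro s t _
    exact mul_comm _ _

/-- Abelianization. -/
noncomputable def ab : RACoxeterGroup L →* (S → Z2) := (exists_ab L).choose

lemma ab_gen (s : S) : ab L (gen L s) = Pi.mulSingle s zz := (exists_ab L).choose_spec s

lemma ab_supp {A : Set S} {w : RACoxeterGroup L} (h : w ∈ WS L A) {s : S} (hs : s ∉ A) :
    ab L w s = 1 := by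
  have : WS L A ≤ ((Pi.evalMonoidHom (fun _ : S => Z2) s).comp (ab L)).ker := by
    rw [WS, Subgroup.closure_le]
    rintro _ ⟨t, ht, rfl⟩
    have hts : s ≠ t := fun e => hs (e ▸ ht)
    simp [MonoidHom.mem_ker, ab_gen, hts]
  exact this h

/-- Cliques. -/
def Clq (T : Finset S) : Prop := ∀ a ∈ T, ∀ b ∈ T, a ≠ b → L.Adj a b

lemma ab_inj (T : Finset S) : Clq L T → ∀ w ∈ WS L (T : Set S), ab L w = 1 → w = 1 := by
  induction T using Finset.induction_on with
  | empty =>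
    intro _ w hw _
    simpa [WS] using hw
  | insert s T hs ih =>
    intro hc w hw h1
    rw [Finset.coe_insert] at hw
    obtain ⟨c, hcm, hor⟩ := mem_insert_cases L (A := (T : Set S)) (fun t ht =>
      hc s (by simp) t (by simp at ht; simp [ht]) (fun e => hs (by simpa [e] using ht))) hw
    have hcs : ab L c s = 1 := ab_supp L hcm (by simpa using hs)
    rcases hor with rfl | rfl
    · exact ih (fun a ha b hb => hc a (by simp [ha]) b (by simp [hb])) _ hcm h1
    · have := congrFun h1 s
      simp [ab_gen, hcs] at this
      exact absurd this zz_ne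

lemma ab_ret (A : Set S) (w : RACoxeterGroup L) (h : ∀ s, s ∉ A → ab L w s = 1) :
    ab L (ret L A w) = ab L w := by
  ext1 s
  by_cases hs : s ∈ A
  · have : (Pi.evalMonoidHom (fun _ : S => Z2) s).comp ((ab L).comp (ret L A)) =
        (Pi.evalMonoidHom (fun _ : S => Z2) s).comp (ab L) := by
      ext1 w
      induction w using gen_induction with
      | h1 => simp
      | hs t w ih =>
        rw [map_mul, map_mul, ih]
        congr 1
        by_cases ht : t ∈ A
        · simp [ret_gen_mem L ht]
        · have hst : s ≠ t := fun e => ht (e ▸ hs)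
          simp [ret_gen_not L ht, ab_gen, hst]
    exact DFunLike.congr_fun this w
  · rw [h s hs, ab_supp L (ret_mem L A w) hs]

lemma ab_determines {T T' : Finset S} (hT : Clq L T) (hT' : Clq L T') {w w' : RACoxeterGroup L}
    (hw : w ∈ WS L (T : Set S)) (hw' : w' ∈ WS L (T' : Set S)) (h : ab L w = ab L w') :
    w = w' := by
  have h1 : ab L (ret L (T' : Set S) w) = ab L w := by
    apply ab_ret
    intro s hs
    rw [h]
    exact ab_supp L hw' hs
  have h2 : ret L (T' : Set S) w ∈ WS L (T : Set S) :=
    WS_mono L Set.inter_subset_right (ret_mem_inter L hw)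
  have h3 : w⁻¹ * ret L (T' : Set S) w = 1 := by
    apply ab_inj L T hT _ (mul_mem (inv_mem hw) h2)
    rw [map_mul, map_inv, h1, inv_mul_cancel]
  have h4 : w ∈ WS L (T' : Set S) := by
    rw [inv_mul_eq_one.1 h3]
    exact ret_mem L _ _
  have h5 : w⁻¹ * w' = 1 := by
    apply ab_inj L T' hT' _ (mul_mem (inv_mem h4) hw')
    rw [map_mul, map_inv, h, inv_mul_cancel]
  exact inv_mul_eq_one.1 h5

lemma ab_surj (T : Finset S) : ∀ f : S → Z2, (∀ s, s ∉ T → f s = 1) →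
    ∃ w ∈ WS L (T : Set S), ab L w = f := by
  induction T using Finset.induction_on with
  | empty =>
    intro f hf
    exact ⟨1, one_mem _, by ext1 s; simp [hf s]⟩
  | insert s T hs ih =>
    intro f hf
    obtain ⟨w, hw, e⟩ := ih (Function.update f s 1) (by
      intro t ht
      by_cases hts : t = s
      · subst hts; simp
      · simp [hts, hf t (by simp [hts, ht])])
    have hw' : w ∈ WS L ((insert s T : Finset S) : Set S) := WS_mono L (by simp) hw
    rcases z2_cases (f s) with h1 | h1
    · refine ⟨w, hw', ?_⟩
      rw [e, ← h1, Function.update_eq_self]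
    · refine ⟨gen L s * w, mul_mem (gen_mem (by simp)) hw', ?_⟩
      rw [map_mul, e, ab_gen]
      ext1 t
      by_cases hts : t = s
      · subst hts; simp [h1]
      · simp [hts]

variable [Fintype S]

lemma tuple_conj {n : ℕ} {v : Fin n → RACoxeterGroup L} (hv : v ∈ pTuples (RACoxeterGroup L) 2 n) :
    ∃ g, ∃ T : Finset S, Clq L T ∧ ∀ i, g * v i * g⁻¹ ∈ WS L (T : Set S) := by
  obtain ⟨hc, ho⟩ := hv
  have hcomm : Pairwise fun i j : Fin n => ∀ x y : RACoxeterGroup L,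
      x ∈ Subgroup.zpowers (v i) → y ∈ Subgroup.zpowers (v j) → Commute x y := by
    rintro i j _ _ _ ⟨a, rfl⟩ ⟨b, rfl⟩
    exact ((hc i j).zpow_zpow a b)
  have hfin : ∀ i, Finite (Subgroup.zpowers (v i)) := by
    intro i
    obtain ⟨k, hk⟩ := ho i
    refine Set.Finite.to_subtype (finite_zpowers.2 ?_)
    rw [← orderOf_pos_iff, hk]
    positivity
  let φ := Subgroup.noncommPiCoprod (H := fun i => Subgroup.zpowers (v i)) hcomm
  have hH : Finite φ.range := Set.Finite.to_subtype (Set.finite_range φ)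
  obtain ⟨g, _, T, _, hT, h⟩ := finite_conj L _ Finset.univ rfl φ.range hH (by
    intro w _
    rw [Finset.coe_univ]
    exact mem_WS_univ L w)
  refine ⟨g, T, hT, fun i => h _ ?_⟩
  rw [Subgroup.noncommPiCoprod_range]
  exact Subgroup.mem_iSup_of_mem i (Subgroup.mem_zpowers _)

/-- Target set: tuples with clique support. -/
def Tgt (n : ℕ) : Set (S → (Fin n → Z2)) :=
  {f | ∃ T : Finset S, Clq L T ∧ ∀ s, f s ≠ 1 ↔ s ∈ T}

/-- The invariant of a tuple. -/
noncomputable def inv' {n : ℕ} (v : Fin n → RACoxeterGroup L) : S → Fin n → Z2 :=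
  fun s i => ab L (v i) s

lemma inv'_conj {n : ℕ} {v v' : Fin n → RACoxeterGroup L} {g : RACoxeterGroup L}
    (h : ∀ i, g * v i * g⁻¹ = v' i) : inv' L v = inv' L v' := by
  ext1 s
  ext1 i
  simp only [inv', ← h, map_mul, map_inv]
  rw [mul_comm (ab L g), mul_assoc, mul_inv_cancel, mul_one]

lemma card_quot (n : ℕ) :
    Nat.card (Quot (tupleConj (pTuples (RACoxeterGroup L) 2 n))) = Nat.card (Tgt L n) := by
  classical
  let F : Quot (tupleConj (pTuples (RACoxeterGroup L) 2 n)) → (S → Fin n → Z2) :=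
    Quot.lift (fun v => inv' L v.1) (fun a b ⟨g, hg⟩ => inv'_conj L hg)
  have hinj : Function.Injective F := by
    rintro ⟨v⟩ ⟨v'⟩ h
    replace h : inv' L v.1 = inv' L v'.1 := h
    obtain ⟨g, T, hT, hg⟩ := tuple_conj L v.2
    obtain ⟨g', T', hT', hg'⟩ := tuple_conj L v'.2
    apply Quot.sound
    have key : ∀ i, g * v.1 i * g⁻¹ = g' * v'.1 i * g'⁻¹ := by
      intro i
      apply ab_determines L hT hT' (hg i) (hg' i)
      ext1 s
      have h1 := inv'_conj L (v := v.1) (g := g) (fun i => rfl)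
      have h2 := inv'_conj L (v := v'.1) (g := g') (fun i => rfl)
      rw [h1, h2] at h
      exact congrFun (congrFun h s) i
    refine ⟨g'⁻¹ * g, fun i => ?_⟩
    calc g'⁻¹ * g * v.1 i * (g'⁻¹ * g)⁻¹ = g'⁻¹ * (g * v.1 i * g⁻¹) * g' := by group
      _ = v'.1 i := by rw [key]; group
  have hrange : Set.range F = Tgt L n := by
    ext f
    constructor
    · rintro ⟨⟨v⟩, rfl⟩
      obtain ⟨g, T, hT, hg⟩ := tuple_conj L v.2
      have h1 := inv'_conj L (v := v.1) (g := g) (fun i => rfl)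
      change inv' L v.1 ∈ _
      rw [h1]
      have hsub : ∀ s, inv' L (fun i => g * v.1 i * g⁻¹) s ≠ 1 → s ∈ T := by
        intro s hs
        by_contra hsT
        apply hs
        ext1 i
        exact ab_supp L (hg i) (by simpa using hsT)
      refine ⟨Finset.univ.filter (fun s => inv' L (fun i => g * v.1 i * g⁻¹) s ≠ 1), ?_, ?_⟩
      · intro a ha b hb
        exact hT a (hsub a (by simpa using ha)) b (hsub b (by simpa using hb))
      · intro s; simp
    · rintro ⟨T, hT, hf⟩
      have := fun i : Fin n => ab_surj L T (fun s => f s i) (by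
        intro s hs
        have : f s = 1 := by
          by_contra h
          exact hs ((hf s).1 h)
        simp [this])
      choose v hv hab using this
      refine ⟨Quot.mk _ ⟨v, ?_, ?_⟩, ?_⟩
      · intro i j
        apply ab_determines L hT hT (mul_mem (hv i) (hv j)) (mul_mem (hv j) (hv i))
        rw [map_mul, map_mul, mul_comm]
      · intro i
        have h2 : v i ^ 2 = 1 := by
          apply ab_inj L T hT _ (pow_mem (hv i) 2)
          rw [map_pow, pow_two]
          ext1 s
          exact z2_sq _
        have h3 : orderOf (v i) ∣ 2 ^ 1 := by
          rw [pow_one]; exact orderOf_dvd_of_pow_eq_one h2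
        obtain ⟨k, _, hk⟩ := (Nat.dvd_prime_pow Nat.prime_two).1 h3
        exact ⟨k, hk⟩
      · change inv' L v = f
        ext1 s
        ext1 i
        exact congrFun (hab i) s
  rw [← hrange]
  exact Nat.card_congr (Equiv.ofInjective F hinj)

open Classical in
lemma card_Tgt (n : ℕ) : Nat.card (Tgt L n) =
    ∑ T ∈ Finset.univ.filter (fun T : Finset S => Clq L T), (2 ^ n - 1) ^ T.card := by
  let supp : (S → Fin n → Z2) → Finset S := fun f => Finset.univ.filter (fun s => f s ≠ 1)
  have h1 : Nat.card (Tgt L n) =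
      (Finset.univ.filter (fun f : S → Fin n → Z2 => Clq L (supp f))).card := by
    rw [Nat.card_coe_set_eq, ← Set.ncard_coe_finset]
    congr 1
    ext f
    simp only [Finset.coe_filter, Finset.mem_univ, true_and, Set.mem_setOf_eq, Tgt]
    constructor
    · rintro ⟨T, hT, hf⟩
      have : supp f = T := by
        ext s
        simpa [supp] using hf s
      rwa [this]
    · intro h
      exact ⟨supp f, h, fun s => by simp [supp]⟩
  rw [h1, Finset.card_eq_sum_card_fiberwise (f := supp)
    (t := Finset.univ.filter (fun T : Finset S => Clq L T)) (by
      intro f hf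
      simpa using hf)]
  apply Finset.sum_congr rfl
  intro T hT
  have hT' : Clq L T := by simpa using hT
  have : (Finset.univ.filter (fun f : S → Fin n → Z2 => Clq L (supp f))).filter
      (fun f => supp f = T) =
      Fintype.piFinset (fun s => if s ∈ T then Finset.univ.erase (1 : Fin n → Z2) else {1}) := by
    ext f
    simp only [Finset.mem_filter, Finset.mem_univ, true_and, Fintype.mem_piFinset]
    constructor
    · rintro ⟨_, rfl⟩ s
      by_cases hs : f s = 1 <;> simp [supp, hs]
    · intro h
      have e : supp f = T := by
        ext s
        have := h s
        by_cases hs : s ∈ T <;> simp [hs] at this <;> simp [supp, hs, this]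
      exact ⟨e ▸ hT', e⟩
  rw [this, Fintype.card_piFinset]
  have hz : ∀ s, (if s ∈ T then Finset.univ.erase (1 : Fin n → Z2) else {1}).card =
      if s ∈ T then 2 ^ n - 1 else 1 := by
    intro s
    split_ifs
    · rw [Finset.card_erase_of_mem (Finset.mem_univ _), Finset.card_univ, Fintype.card_fun]
      simp [Z2, ZMod.card]
    · simp
  simp only [hz]
  rw [Finset.prod_ite_mem]
  simp

end RACaux

/-- For a right angled Coxeter group `W = W(L)` on a finite graph with vertex set `S`, the
number of orbits of `W` acting by simultaneous conjugation on `W_{n,2}` equals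
`Σ_{l=0}^{|S|} s(l)·(2ⁿ−1)^l`, where `s(l)` is the number of `l`-element subsets of `S`
spanning a complete subgraph of `L`. -/
theorem rac_orbit_count {S : Type*} [Fintype S] [DecidableEq S]
    (L : SimpleGraph S) [DecidableRel L.Adj] (n : ℕ) (hn : 1 ≤ n) :
    Nat.card (Quot (tupleConj (pTuples (RACoxeterGroup L) 2 n))) =
      ∑ l ∈ Finset.range (Fintype.card S + 1),
        (Finset.univ.powerset.filter
          (fun T : Finset S => T.card = l ∧ ∀ a ∈ T, ∀ b ∈ T, a ≠ b → L.Adj a b)).card *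
        (2 ^ n - 1) ^ l := by
  classical
  rw [RACaux.card_quot, RACaux.card_Tgt]
  rw [← Finset.sum_fiberwise_of_maps_to (g := Finset.card)
    (t := Finset.range (Fintype.card S + 1)) (by
      intro T _
      rw [Finset.mem_range]
      exact Nat.lt_succ_of_le (Finset.card_le_univ T))]
  apply Finset.sum_congr rfl
  intro l _
  rw [Finset.sum_congr rfl (g := fun _ => (2 ^ n - 1) ^ l) (by
    intro T hT
    rw [(Finset.mem_filter.1 hT).2]), Finset.sum_const, smul_eq_mul]
  congr 2
  ext T
  rw [Finset.mem_filter, Finset.mem_filter, Finset.mem_filter]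
  simp only [RACaux.Clq, Finset.mem_univ, Finset.mem_powerset, Finset.subset_univ, true_and]
  exact and_comm
end

section
/- Let n ≥ 1. The number of orbits of the simultaneous conjugation action of SL_3(ℤ) on the set SL_3(ℤ)_{n,3} of n-tuples of pairwise commuting elements of 3-power order equals 3ⁿ. -/
namespace SL3Three
open Matrix

abbrev M3 := Matrix (Fin 3) (Fin 3) ℤ

/-- Conjugacy by a unimodular integer matrix. -/
def Rel (X Y : M3) : Prop := ∃ M : M3, (M.det = 1 ∨ M.det = -1) ∧ M * X = Y * M

lemma Rel.trans {X Y Z : M3} (h : Rel X Y) (h' : Rel Y Z) : Rel X Z := by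
  obtain ⟨M, hM, e⟩ := h
  obtain ⟨N, hN, e'⟩ := h'
  refine ⟨N * M, ?_, by rw [mul_assoc, e, ← mul_assoc, e', mul_assoc]⟩
  rw [det_mul]
  rcases hM with h | h <;> rcases hN with h' | h' <;> simp [h, h']

/-- Block upper triangular matrices with lower block of trace `-1`. -/
def tri (a b p q r : ℤ) : M3 := !![1, a, b; 0, p, q; 0, r, -1 - p]

lemma rel_translate (a b p q r k : ℤ) :
    ∃ a' b', Rel (tri a b p q r) (tri a' b' (p + k * r) (q - k * (2 * p + 1) - k ^ 2 * r) r) := by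
  refine ⟨a, b - k * a, !![1, 0, 0; 0, 1, k; 0, 0, 1], Or.inl ?_, ?_⟩
  · simp [det_fin_three]
  · ext i j
    fin_cases i <;> fin_cases j <;> simp [tri, mul_apply, Fin.sum_univ_three] <;> ring

lemma rel_swap (a b p q r : ℤ) :
    ∃ a' b', Rel (tri a b p q r) (tri a' b' (-1 - p) r q) := by
  refine ⟨b, a, !![1, 0, 0; 0, 0, 1; 0, 1, 0], Or.inr ?_, ?_⟩
  · simp [det_fin_three]
  · ext i j
    fin_cases i <;> fin_cases j <;> simp [tri, mul_apply, Fin.sum_univ_three]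

lemma rel_neg (a b p q r : ℤ) :
    ∃ a' b', Rel (tri a b p q r) (tri a' b' p (-q) (-r)) := by
  refine ⟨a, -b, !![1, 0, 0; 0, 1, 0; 0, 0, -1], Or.inr ?_, ?_⟩
  · simp [det_fin_three]
  · ext i j
    fin_cases i <;> fin_cases j <;> simp [tri, mul_apply, Fin.sum_univ_three]

lemma exists_center (p r : ℤ) (hr : 0 < r) : ∃ k : ℤ, |2 * (p + k * r) + 1| ≤ r := by
  refine ⟨-((2 * p + 1 + r) / (2 * r)), ?_⟩
  have h1 := Int.mul_ediv_add_emod (2 * p + 1 + r) (2 * r)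
  have h2 := Int.emod_nonneg (2 * p + 1 + r) (b := 2 * r) (by omega)
  have h3 := Int.emod_lt_of_pos (2 * p + 1 + r) (b := 2 * r) (by omega)
  rw [abs_le]
  constructor <;> nlinarith

lemma descent (n : ℕ) : ∀ a b p q r : ℤ, r.natAbs ≤ n → p ^ 2 + p + 1 = -(q * r) →
    ∃ a' b', Rel (tri a b p q r) (tri a' b' 0 (-1) 1) := by
  induction n with
  | zero =>
    intro a b p q r hr h
    have : r = 0 := by omega
    subst this
    nlinarith [sq_nonneg (2 * p + 1)]
  | succ n ih =>
    have pos : ∀ a b p q r : ℤ, 0 < r → r.natAbs ≤ n + 1 → p ^ 2 + p + 1 = -(q * r) →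
        ∃ a' b', Rel (tri a b p q r) (tri a' b' 0 (-1) 1) := by
      intro a b p q r hr0 hr h
      rcases eq_or_lt_of_le (show 1 ≤ r by omega) with h1 | h1
      · subst h1
        obtain ⟨a', b', H⟩ := rel_translate a b p q 1 (-p)
        have e1 : p + -p * 1 = 0 := by ring
        have e2 : q - -p * (2 * p + 1) - (-p) ^ 2 * 1 = -1 := by linarith
        rw [e1, e2] at H
        exact ⟨a', b', H⟩
      · obtain ⟨k, hk⟩ := exists_center p r hr0
        obtain ⟨a', b', H⟩ := rel_translate a b p q r k
        have h' : (p + k * r) ^ 2 + (p + k * r) + 1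
            = -((q - k * (2 * p + 1) - k ^ 2 * r) * r) := by linarith
        generalize p + k * r = p' at *
        generalize q - k * (2 * p + 1) - k ^ 2 * r = q' at *
        obtain ⟨a2, b2, H2⟩ := rel_swap a' b' p' q' r
        have hq : q'.natAbs ≤ n := by
          rw [abs_le] at hk
          have hq0 : q' < 0 := by
            by_contra hc
            push Not at hc
            nlinarith [sq_nonneg (2 * p' + 1), mul_nonneg hc hr0.le]
          have : -q' < r := by
            by_contra hc
            push Not at hc
            nlinarith [mul_le_mul_of_nonneg_right hc hr0.le]
          omega
        obtain ⟨a3, b3, H3⟩ := ih a2 b2 (-1 - p') r q' hq (by linarith)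
        exact ⟨a3, b3, (H.trans H2).trans H3⟩
    intro a b p q r hr h
    rcases lt_trichotomy r 0 with h0 | h0 | h0
    · obtain ⟨a', b', H⟩ := rel_neg a b p q r
      obtain ⟨a2, b2, H2⟩ := pos a' b' p (-q) (-r) (by omega) (by omega) (by linarith)
      exact ⟨a2, b2, H.trans H2⟩
    · subst h0
      nlinarith [sq_nonneg (2 * p + 1)]
    · exact pos a b p q r h0 hr h

def Dm : M3 := tri 0 0 0 (-1) 1
def Em : M3 := tri 1 0 0 (-1) 1

lemma rel_final (a b : ℤ) : Rel (tri a b 0 (-1) 1) Dm ∨ Rel (tri a b 0 (-1) 1) Em := by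
  have key : ∀ u k : ℤ, a - b + 3 * u = k → Rel (tri a b 0 (-1) 1) (tri k 0 0 (-1) 1) := by
    rintro u k rfl
    refine ⟨!![1, b - 2 * u, u; 0, 1, 0; 0, 0, 1], Or.inl ?_, ?_⟩
    · simp [det_fin_three]
    · ext i j
      fin_cases i <;> fin_cases j <;> simp [tri, mul_apply, Fin.sum_univ_three] <;> ring
  have neg : Rel (tri (-1) 0 0 (-1) 1) Em := by
    refine ⟨!![-1, 0, 0; 0, 1, 0; 0, 0, 1], Or.inr ?_, ?_⟩
    · simp [det_fin_three]
    · ext i j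
      fin_cases i <;> fin_cases j <;> simp [Em, tri, mul_apply, Fin.sum_univ_three]
  have : (a - b) % 3 = 0 ∨ (a - b) % 3 = 1 ∨ (a - b) % 3 = 2 := by omega
  rcases this with h | h | h
  · exact Or.inl (key (-((a - b) / 3)) 0 (by omega))
  · exact Or.inr (key (-((a - b) / 3)) 1 (by omega))
  · exact Or.inr ((key (-((a - b) / 3) - 1) (-1) (by omega)).trans neg)

lemma rel_of_fix (X : M3) (h0 : X 0 0 = 1) (h1 : X 1 0 = 0) (h2 : X 2 0 = 0)
    (hd : X.det = 1) (h3 : X * X * X = 1) (hne : X ≠ 1) : Rel X Dm ∨ Rel X Em := by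
  obtain ⟨a, ha⟩ : ∃ a, X 0 1 = a := ⟨_, rfl⟩
  obtain ⟨b, hb⟩ : ∃ a, X 0 2 = a := ⟨_, rfl⟩
  obtain ⟨p, hp⟩ : ∃ a, X 1 1 = a := ⟨_, rfl⟩
  obtain ⟨q, hq⟩ : ∃ a, X 1 2 = a := ⟨_, rfl⟩
  obtain ⟨r, hr⟩ : ∃ a, X 2 1 = a := ⟨_, rfl⟩
  obtain ⟨s, hs⟩ : ∃ a, X 2 2 = a := ⟨_, rfl⟩
  rw [det_fin_three] at hd
  simp only [h0, h1, h2, ha, hb, hp, hq, hr, hs] at hd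
  have e := fun i j => congrFun (congrFun h3 i) j
  have e01 := e 0 1
  have e02 := e 0 2
  have e11 := e 1 1
  have e12 := e 1 2
  have e21 := e 2 1
  have e22 := e 2 2
  simp [mul_apply, Fin.sum_univ_three, h0, h1, h2, ha, hb, hp, hq, hr, hs] at e01 e02 e11 e12 e21 e22
  have hX : X = !![1, a, b; 0, p, q; 0, r, s] := by
    ext i j
    fin_cases i <;> fin_cases j <;> simp [*]
  have d : p * s - q * r = 1 := by linarith
  have k12 : q * ((p + s) ^ 2 - 1) = 0 := by linear_combination e12 + q * d
  have k21 : r * ((p + s) ^ 2 - 1) = 0 := by linear_combination e21 + r * d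
  have k11 : p * ((p + s) ^ 2 - 1) - (p + s) = 1 := by
    linear_combination e11 + (2 * p + s) * d
  by_cases ht : (p + s) ^ 2 - 1 = 0
  · rw [ht] at k11
    have hs' : s = -1 - p := by linarith
    subst hs'
    obtain ⟨a', b', H⟩ := descent r.natAbs a b p q r le_rfl (by linarith)
    have : X = tri a b p q r := by rw [hX]; rfl
    rw [this]
    exact (rel_final a' b').imp H.trans H.trans
  · exfalso
    have hq0 : q = 0 := by simpa [ht] using k12
    have hr0 : r = 0 := by simpa [ht] using k21
    subst hq0 hr0
    have hps : p * s = 1 := by linarith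
    rcases Int.eq_one_or_neg_one_of_mul_eq_one hps with h | h
    · have : s = 1 := by rw [h] at hps; linarith
      subst h this
      apply hne
      have ha0 : a = 0 := by linarith
      have hb0 : b = 0 := by linarith
      rw [hX, ha0, hb0]
      ext i j
      fin_cases i <;> fin_cases j <;> simp
    · have : s = -1 := by rw [h] at hps; linarith
      subst h this
      norm_num at k11

lemma exists_complete2 (a b : ℤ) : ∃ x y z w d : ℤ, x * w - y * z = 1 ∧ x * a + y * b = d ∧
    z * a + w * b = 0 ∧ d = Int.gcd a b := by
  by_cases h : Int.gcd a b = 0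
  · rw [Int.gcd_eq_zero_iff] at h
    obtain ⟨rfl, rfl⟩ := h
    exact ⟨1, 0, 0, 1, 0, by simp⟩
  · have hg : (Int.gcd a b : ℤ) ≠ 0 := by exact_mod_cast h
    obtain ⟨a', ha⟩ := Int.gcd_dvd_left a b
    obtain ⟨b', hb⟩ := Int.gcd_dvd_right a b
    have hbz := Int.gcd_eq_gcd_ab a b
    refine ⟨Int.gcdA a b, Int.gcdB a b, -b', a', _, ?_, ?_, ?_, rfl⟩
    · apply mul_left_cancel₀ hg
      linear_combination (-Int.gcdA a b) * ha - Int.gcdB a b * hb - hbz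
    · linear_combination -hbz
    · generalize (Int.gcd a b : ℤ) = g at *
      rw [ha, hb]; ring

lemma exists_complete3 (v : Fin 3 → ℤ) : ∃ (M : M3) (d : ℤ), M.det = 1 ∧ M *ᵥ v = ![d, 0, 0] := by
  obtain ⟨x, y, z, w, d, h1, h2, h3, -⟩ := exists_complete2 (v 1) (v 2)
  obtain ⟨x', y', z', w', d', h1', h2', h3', -⟩ := exists_complete2 (v 0) d
  refine ⟨!![x', y', 0; z', w', 0; 0, 0, 1] * !![1, 0, 0; 0, x, y; 0, z, w], d', ?_, ?_⟩
  · rw [det_mul, det_fin_three, det_fin_three]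
    simp
    rw [h1, h1']; norm_num
  · rw [← mulVec_mulVec]
    have : !![1, 0, 0; 0, x, y; 0, z, w] *ᵥ v = ![v 0, d, 0] := by
      ext i
      fin_cases i <;> simp [mulVec, dotProduct, Fin.sum_univ_three, h2, h3]
    rw [this]
    ext i
    fin_cases i <;> simp [mulVec, dotProduct, Fin.sum_univ_three, h2', h3']

lemma classify (X : M3) (hd : X.det = 1) (h3 : X * X * X = 1) (hne : X ≠ 1) :
    Rel X Dm ∨ Rel X Em := by
  have hsing : (X - 1).det = 0 := by
    by_contra hc
    have e : (X - 1) * (X * X + X + 1) = 0 := by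
      have : (X - 1) * (X * X + X + 1) = X * X * X - 1 := by noncomm_ring
      rw [this, h3, sub_self]
    have e' : X * X + X + 1 = 0 := by
      have := congrArg (fun Y => (X - 1).adjugate * Y) e
      simp only [← mul_assoc, adjugate_mul, mul_zero, smul_mul_assoc, one_mul] at this
      exact (smul_eq_zero.mp this).resolve_left hc
    have e2 : (2 * X + 1) * (2 * X + 1) = (-3 : ℤ) • (1 : M3) := by
      have : (2 * X + 1) * (2 * X + 1) = (4 : ℤ) • (X * X + X + 1) + (-3 : ℤ) • (1 : M3) := by
        noncomm_ring
      rw [this, e', smul_zero, zero_add]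
    have := congrArg det e2
    rw [det_mul, det_smul] at this
    simp at this
    nlinarith [mul_self_nonneg (2 * X + 1).det]
  obtain ⟨v, hv, hXv⟩ := exists_mulVec_eq_zero_iff.mpr hsing
  have hXv : X *ᵥ v = v := by
    rw [sub_mulVec, one_mulVec, sub_eq_zero] at hXv; exact hXv
  obtain ⟨M, d, hM, hMv⟩ := exists_complete3 v
  have hMi : M.adjugate * M = 1 := by rw [adjugate_mul, hM, one_smul]
  have hMi' : M * M.adjugate = 1 := by rw [mul_adjugate, hM, one_smul]
  have hd0 : d ≠ 0 := by
    rintro rfl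
    apply hv
    have := congrArg (fun w => M.adjugate *ᵥ w) hMv
    simp only [mulVec_mulVec, hMi, one_mulVec] at this
    rw [this]
    ext i
    fin_cases i <;> simp [mulVec, dotProduct, Fin.sum_univ_three]
  set Y : M3 := M * X * M.adjugate with hY
  have hYM : M * X = Y * M := by rw [hY, mul_assoc, hMi, mul_one]
  have hYv : Y *ᵥ ![d, 0, 0] = ![d, 0, 0] := by
    rw [← hMv, mulVec_mulVec, ← hYM, ← mulVec_mulVec, hXv]
  have c : ∀ i, Y i 0 * d = ![d, 0, 0] i := by
    intro i
    have := congrFun hYv i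
    simpa [mulVec, dotProduct, Fin.sum_univ_three] using this
  have hYX : Rel X Y := ⟨M, Or.inl hM, hYM⟩
  have H := rel_of_fix Y (by simpa [hd0] using c 0) (by simpa [hd0] using c 1)
    (by simpa [hd0] using c 2) ?_ ?_ ?_
  · exact H.imp hYX.trans hYX.trans
  · have := congrArg det hMi'
    rw [det_mul, det_one, hM, one_mul] at this
    rw [hY, det_mul, det_mul, hM, hd, this]; norm_num
  · have : Y * Y * Y = M * (X * ((M.adjugate * M) * X * (M.adjugate * M)) * X) * M.adjugate := by
      rw [hY]; noncomm_ring
    rw [this, hMi, one_mul, mul_one, h3, mul_one, hMi']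
  · intro h1
    apply hne
    rw [h1, one_mul] at hYM
    calc X = (M.adjugate * M) * X := by rw [hMi, one_mul]
      _ = 1 := by rw [mul_assoc, hYM, hMi]

abbrev G3 := Matrix.SpecialLinearGroup (Fin 3) ℤ

lemma conj_of_rel (X Y : G3) (h : Rel X.1 Y.1) : ∃ g : G3, g * X * g⁻¹ = Y := by
  obtain ⟨M, hM, e⟩ := h
  obtain ⟨N, hN, e⟩ : ∃ N : M3, N.det = 1 ∧ N * X.1 = Y.1 * N := by
    rcases hM with h | h
    · exact ⟨M, h, e⟩
    · refine ⟨-M, ?_, by rw [neg_mul, e, mul_neg]⟩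
      rw [det_neg, h]; norm_num
  obtain ⟨g, rfl⟩ : ∃ g : G3, g.1 = N := ⟨⟨N, hN⟩, rfl⟩
  refine ⟨g, ?_⟩
  rw [mul_inv_eq_iff_eq_mul]
  exact Subtype.ext e

def D : G3 := ⟨Dm, by simp [Dm, tri, det_fin_three]⟩
def E : G3 := ⟨Em, by simp [Em, tri, det_fin_three]⟩

lemma D3 : D ^ 3 = 1 := by
  apply Subtype.ext
  show Dm ^ 3 = 1
  decide

lemma E3 : E ^ 3 = 1 := by
  apply Subtype.ext
  show Em ^ 3 = 1
  decide

lemma D1 : D ≠ 1 := by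
  intro h
  exact absurd (congrArg Subtype.val h) (show Dm ≠ 1 by decide)

lemma E1 : E ≠ 1 := by
  intro h
  exact absurd (congrArg Subtype.val h) (show Em ≠ 1 by decide)

lemma exists_conj (X : G3) (h3 : X ^ 3 = 1) (hne : X ≠ 1) :
    (∃ g : G3, g * X * g⁻¹ = D) ∨ ∃ g : G3, g * X * g⁻¹ = E := by
  have h := classify X.1 X.2 (by
    have := congrArg Subtype.val h3
    rw [pow_succ, pow_two] at this
    exact this) (fun h => hne (Subtype.ext h))
  exact h.imp (conj_of_rel X D) (conj_of_rel X E)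

lemma norm_form (x y : ℤ) (h : x ^ 2 - x * y + y ^ 2 = 1) :
    (x = 1 ∧ y = 0) ∨ (x = 0 ∧ y = 1) ∨ (x = -1 ∧ y = -1) ∨
    (x = -1 ∧ y = 0) ∨ (x = 0 ∧ y = -1) ∨ (x = 1 ∧ y = 1) := by
  have h1 : x ≤ 1 := by nlinarith [sq_nonneg (x - 2 * y)]
  have h2 : -1 ≤ x := by nlinarith [sq_nonneg (x - 2 * y)]
  have h3 : y ≤ 1 := by nlinarith [sq_nonneg (y - 2 * x)]
  have h4 : -1 ≤ y := by nlinarith [sq_nonneg (y - 2 * x)]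
  interval_cases x <;> interval_cases y <;> simp_all

/-- Matrices commuting with `tri a 0 0 (-1) 1`. -/
lemma centralizer_aux (a : ℤ) (X : M3) (hd : X.det = 1)
    (hc : X * tri a 0 0 (-1) 1 = tri a 0 0 (-1) 1 * X) :
    ∃ x y m k : ℤ, X = !![1, m, k; 0, x, -y; 0, y, x - y] ∧ x ^ 2 - x * y + y ^ 2 = 1 ∧
      a + k = m + a * x ∧ -m - k = k - a * y := by
  have e := fun i j => congrFun (congrFun hc i) j
  have e00 := e 0 0
  have e01 := e 0 1
  have e02 := e 0 2
  have e10 := e 1 0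
  have e11 := e 1 1
  have e12 := e 1 2
  have e20 := e 2 0
  have e21 := e 2 1
  have e22 := e 2 2
  simp [tri, mul_apply, Fin.sum_univ_three] at e00 e01 e02 e10 e11 e12 e20 e21 e22
  have z1 : X 1 0 = 0 := by linarith
  have z2 : X 2 0 = 0 := by linarith
  rw [det_fin_three] at hd
  simp only [z1, z2, mul_zero, zero_mul] at hd e01 e02 e11 e12 e21 e22
  have f1 : X 1 2 = -X 2 1 := by linarith
  have f2 : X 2 2 = X 1 1 - X 2 1 := by linarith
  rw [f1, f2] at hd
  have hd' : X 0 0 * ((X 1 1) ^ 2 - X 1 1 * X 2 1 + (X 2 1) ^ 2) = 1 := by linarith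
  have hpos : 0 ≤ (X 1 1) ^ 2 - X 1 1 * X 2 1 + (X 2 1) ^ 2 := by
    nlinarith [sq_nonneg (X 1 1 - X 2 1), sq_nonneg (X 1 1), sq_nonneg (X 2 1)]
  have h00 : X 0 0 = 1 := by
    rcases Int.eq_one_or_neg_one_of_mul_eq_one hd' with h | h
    · exact h
    · rw [h] at hd'; linarith
  rw [h00, one_mul] at hd'
  refine ⟨X 1 1, X 2 1, X 0 1, X 0 2, ?_, hd', ?_, ?_⟩
  · ext i j
    fin_cases i <;> fin_cases j <;> simp [z1, z2, f1, f2, h00]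
  · rw [h00] at e01; linarith
  · rw [f1] at e02; linarith

lemma centralizer_E (X : M3) (hd : X.det = 1) (hc : X * Em = Em * X) :
    X = 1 ∨ X = Em ∨ X = Em ^ 2 := by
  obtain ⟨x, y, m, k, rfl, h, h1, h2⟩ := centralizer_aux 1 X hd hc
  rcases norm_form x y h with ⟨rfl, rfl⟩ | ⟨rfl, rfl⟩ | ⟨rfl, rfl⟩ | ⟨rfl, rfl⟩ | ⟨rfl, rfl⟩ | ⟨rfl, rfl⟩
  · obtain rfl : m = 0 := by omega
    obtain rfl : k = 0 := by omega
    left; decide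
  · obtain rfl : m = 1 := by omega
    obtain rfl : k = 0 := by omega
    right; left; decide
  · obtain rfl : m = 1 := by omega
    obtain rfl : k = -1 := by omega
    right; right; decide
  all_goals omega

lemma centralizer_D (X : M3) (hd : X.det = 1) (hc : X * Dm = Dm * X) (h6 : X ^ 6 = 1 → X ^ 3 = 1) :
    X = 1 ∨ X = Dm ∨ X = Dm ^ 2 := by
  obtain ⟨x, y, m, k, rfl, h, h1, h2⟩ := centralizer_aux 0 X hd hc
  obtain rfl : m = 0 := by omega
  obtain rfl : k = 0 := by omega
  rcases norm_form x y h with ⟨rfl, rfl⟩ | ⟨rfl, rfl⟩ | ⟨rfl, rfl⟩ | ⟨rfl, rfl⟩ | ⟨rfl, rfl⟩ | ⟨rfl, rfl⟩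
  · left; decide
  · right; left; decide
  · right; right; decide
  all_goals exact absurd (h6 (by decide)) (by decide)

lemma six_three {G : Type*} [Group G] (x : G) (k : ℕ) (h : orderOf x = 3 ^ k) (h6 : x ^ 6 = 1) :
    x ^ 3 = 1 := by
  rw [← orderOf_dvd_iff_pow_eq_one] at h6 ⊢
  have : (orderOf x).Coprime 2 := by rw [h]; exact Nat.Coprime.pow_left _ (by norm_num)
  exact this.dvd_of_dvd_mul_right (k := orderOf x) (m := 3) h6

lemma cent_E (X : G3) (hc : Commute X E) : ∃ e : ZMod 3, X = E ^ e.val := by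
  rcases centralizer_E X.1 X.2 (congrArg Subtype.val hc) with h | h | h
  · exact ⟨0, Subtype.ext h⟩
  · exact ⟨1, Subtype.ext (by rw [h]; exact (pow_one Em).symm)⟩
  · exact ⟨2, Subtype.ext h⟩

lemma cent_D (X : G3) (hc : Commute X D) (k : ℕ) (hk : orderOf X = 3 ^ k) :
    ∃ e : ZMod 3, X = D ^ e.val := by
  rcases centralizer_D X.1 X.2 (congrArg Subtype.val hc) (fun h6 =>
    congrArg Subtype.val (six_three X k hk (Subtype.ext h6))) with h | h | h
  · exact ⟨0, Subtype.ext h⟩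
  · exact ⟨1, Subtype.ext (by rw [h]; exact (pow_one Dm).symm)⟩
  · exact ⟨2, Subtype.ext h⟩

lemma inv_D : ∃ g : G3, g * D * g⁻¹ = D ^ 2 := by
  apply conj_of_rel
  show Rel Dm (Dm ^ 2)
  exact ⟨!![1, 0, 0; 0, 0, 1; 0, 1, 0], Or.inr (by simp [det_fin_three]), by decide⟩

lemma inv_E : ∃ g : G3, g * E * g⁻¹ = E ^ 2 := by
  apply conj_of_rel
  show Rel Em (Em ^ 2)
  exact ⟨!![-1, 0, 0; 0, -1, 1; 0, 0, 1], Or.inl (by simp [det_fin_three]), by decide⟩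

lemma not_conj (g : G3) : g * D * g⁻¹ ≠ E := by
  intro h
  rw [mul_inv_eq_iff_eq_mul] at h
  have h : g.1 * Dm = Em * g.1 := congrArg Subtype.val h
  have h2 : g.1 * ((Dm - 1) * (Dm - 1)) = ((Em - 1) * (Em - 1)) * g.1 := by
    have h' : g.1 * (Dm - 1) = (Em - 1) * g.1 := by rw [mul_sub, sub_mul, h]; simp
    rw [← mul_assoc, h', mul_assoc, h', mul_assoc]
  have hD : (Dm - 1) * (Dm - 1) = (3 : ℤ) • !![0, 0, 0; 0, 0, 1; 0, -1, 1] := by decide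
  have hgg : g.1 * (g⁻¹).1 = 1 := congrArg Subtype.val (mul_inv_cancel g)
  have h3 : (3 : ℤ) • (g.1 * !![0, 0, 0; 0, 0, 1; 0, -1, 1] * (g⁻¹).1) = (Em - 1) * (Em - 1) := by
    rw [← smul_mul_assoc, ← mul_smul_comm, ← hD, h2, mul_assoc, hgg, mul_one]
  have h4 := congrFun (congrFun h3 0) 1
  have h5 : ((Em - 1) * (Em - 1)) 0 1 = -1 := by decide
  rw [h5, Matrix.smul_apply, smul_eq_mul] at h4
  omega

section Counting

lemma pow_val_inj {G : Type*} [Group G] {N : G} (h3 : N ^ 3 = 1) (h1 : N ≠ 1) {e f : ZMod 3}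
    (h : N ^ e.val = N ^ f.val) : e = f := by
  have : Fact (Nat.Prime 3) := ⟨Nat.prime_three⟩
  rw [pow_eq_pow_iff_modEq, orderOf_eq_prime h3 h1] at h
  apply ZMod.val_injective 3
  have := ZMod.val_lt e
  have := ZMod.val_lt f
  unfold Nat.ModEq at h
  omega

lemma pow_val_eq_one {G : Type*} [Group G] {N : G} (h3 : N ^ 3 = 1) (h1 : N ≠ 1) {e : ZMod 3} :
    N ^ e.val = 1 ↔ e = 0 := by
  constructor
  · intro h
    apply pow_val_inj h3 h1
    rw [h, ZMod.val_zero, pow_zero]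
  · rintro rfl; rw [ZMod.val_zero, pow_zero]

lemma conj_neg {G : Type*} [Group G] {N g : G} (h3 : N ^ 3 = 1) (hg : g * N * g⁻¹ = N ^ 2)
    (e : ZMod 3) : g * N ^ e.val * g⁻¹ = N ^ (-e).val := by
  rw [← conj_pow, hg, ← pow_mul]
  have : Fact (Nat.Prime 3) := ⟨Nat.prime_three⟩
  rw [pow_eq_pow_iff_modEq]
  refine Nat.ModEq.of_dvd (orderOf_dvd_of_pow_eq_one h3) ?_
  revert e; decide

/-- The first nonzero entry of `e` is `c`. -/
def Lead {n : ℕ} (c : ZMod 3) (e : Fin n → ZMod 3) : Prop :=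
  ∃ i, e i = c ∧ ∀ j < i, e j = 0

lemma lead_unique {n : ℕ} {c d : ZMod 3} (hc : c ≠ 0) (hd : d ≠ 0) {e : Fin n → ZMod 3}
    (h : Lead c e) (h' : Lead d e) : c = d := by
  obtain ⟨i, hi, hi'⟩ := h
  obtain ⟨j, hj, hj'⟩ := h'
  rcases lt_trichotomy i j with h | h | h
  · exact absurd (hi.symm.trans (hj' i h)) hc
  · rw [← hi, ← hj, h]
  · exact absurd (hj.symm.trans (hi' j h)) hd

lemma lead_neg {n : ℕ} {c : ZMod 3} {e : Fin n → ZMod 3} (h : Lead c e) : Lead (-c) (-e) := by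
  obtain ⟨i, hi, hi'⟩ := h
  exact ⟨i, by simp [hi], fun j hj => by simp [hi' j hj]⟩

lemma lead_exists {n : ℕ} (e : Fin n → ZMod 3) : e = 0 ∨ Lead 1 e ∨ Lead 2 e := by
  by_cases h : ∃ i, e i ≠ 0
  · right
    classical
    have hmin := fun j => Fin.find_min h (j := j)
    have hspec := Fin.find_spec h
    generalize Fin.find _ h = i at *
    have hz : ∀ j < i, e j = 0 := fun j hj => by
      by_contra hc
      exact hmin j hj hc
    have : e i = 1 ∨ e i = 2 := by
      generalize e i = x at *
      revert x; decide
    rcases this with h | h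
    · exact Or.inl ⟨i, h, hz⟩
    · exact Or.inr ⟨i, h, hz⟩
  · push Not at h
    exact Or.inl (funext h)

open Classical in
/-- The generator used for the exponent vector `e`. -/
noncomputable def gen {n : ℕ} (e : Fin n → ZMod 3) : G3 := if Lead 2 e then D else E

lemma eq_one_or_two (x : ZMod 3) (hx : x ≠ 0) : x = 1 ∨ x = 2 := by
  revert x; decide

lemma gen3 {n : ℕ} (e : Fin n → ZMod 3) : gen e ^ 3 = 1 := by
  unfold gen; split_ifs; exacts [D3, E3]

lemma gen1 {n : ℕ} (e : Fin n → ZMod 3) : gen e ≠ 1 := by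
  unfold gen; split_ifs; exacts [D1, E1]

lemma mem_pTuples {n : ℕ} {N : G3} (h3 : N ^ 3 = 1) (e : Fin n → ZMod 3) :
    (fun i => N ^ (e i).val) ∈ pTuples G3 3 n := by
  refine ⟨fun i j => Commute.pow_pow_self N _ _, fun i => ?_⟩
  have : orderOf (N ^ (e i).val) ∣ 3 ^ 1 := by
    apply orderOf_dvd_of_pow_eq_one
    rw [pow_one, ← pow_mul, mul_comm, pow_mul, h3, one_pow]
  obtain ⟨k, -, hk⟩ := (Nat.dvd_prime_pow Nat.prime_three).1 this
  exact ⟨k, hk⟩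

/-- The representative tuple attached to `e`. -/
noncomputable def rep {n : ℕ} (e : Fin n → ZMod 3) : pTuples G3 3 n :=
  ⟨fun i => gen e ^ (e i).val, mem_pTuples (gen3 e) e⟩

lemma tupleConj_equiv {G : Type*} [Group G] {n : ℕ} (s : Set (Fin n → G)) :
    Equivalence (tupleConj s) := by
  refine ⟨fun a => ⟨1, fun i => by simp⟩, ?_, ?_⟩
  · rintro a b ⟨g, h⟩
    exact ⟨g⁻¹, fun i => by rw [← h i]; group⟩
  · rintro a b c ⟨g, h⟩ ⟨g', h'⟩
    exact ⟨g' * g, fun i => by rw [← h' i, ← h i]; group⟩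

lemma not_conj' (g : G3) : g * D ^ 2 * g⁻¹ ≠ E := by
  intro h
  obtain ⟨k, hk⟩ := inv_D
  apply not_conj (g * k)
  rw [← h, ← hk]; group

lemma not_conj'' (g : G3) (x : ZMod 3) (hx : x ≠ 0) : g * D ^ 2 * g⁻¹ ≠ E ^ x.val := by
  have : x = 1 ∨ x = 2 := by revert x; decide
  rcases this with rfl | rfl
  · show _ ≠ E ^ 1
    rw [pow_one]
    exact not_conj' g
  · show _ ≠ E ^ 2
    intro h
    obtain ⟨k, hk⟩ := inv_E
    apply not_conj' (k⁻¹ * g)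
    have : E = k⁻¹ * E ^ 2 * k := by rw [← hk]; group
    rw [this, ← h]; group

lemma conj_same {n : ℕ} {N g : G3} (h3 : N ^ 3 = 1) (h1 : N ≠ 1) (e f : Fin n → ZMod 3)
    (h : ∀ i, g * N ^ (e i).val * g⁻¹ = N ^ (f i).val) (i : Fin n) (hi : e i = f i)
    (hi0 : e i ≠ 0) : e = f := by
  have hgN : g * N * g⁻¹ = N := by
    have := h i
    rw [← hi] at this
    have h12 : e i = 1 ∨ e i = 2 := eq_one_or_two _ hi0
    rcases h12 with h' | h' <;> rw [h'] at this
    · have this : g * N ^ 1 * g⁻¹ = N ^ 1 := this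
      simpa using this
    · have this : g * N ^ 2 * g⁻¹ = N ^ 2 := this
      have hN : N = (N ^ 2) ^ 2 := by
        rw [← pow_mul, show 2 * 2 = 3 + 1 from rfl, pow_add, h3, one_mul, pow_one]
      rw [hN, ← conj_pow, this]
  funext j
  apply pow_val_inj h3 h1
  rw [← h j, ← conj_pow, hgN]

lemma rep_inj {n : ℕ} (e f : Fin n → ZMod 3) (h : tupleConj _ (rep e) (rep f)) : e = f := by
  have hz0 : ∀ i, e i = 0 ↔ f i = 0 := by
    obtain ⟨g, hg⟩ := h
    intro i
    rw [← pow_val_eq_one (gen3 e) (gen1 e), ← pow_val_eq_one (gen3 f) (gen1 f)]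
    have := hg i
    simp only [rep] at this
    rw [← this]
    simp
  -- the mixed case is impossible
  have mixed : ∀ e f : Fin n → ZMod 3, (∀ i, e i = 0 ↔ f i = 0) →
      tupleConj _ (rep e) (rep f) → Lead 2 e → ¬ Lead 2 f → False := by
    rintro e f hz ⟨g, hg⟩ he hf
    have hge : gen e = D := if_pos he
    have hgf : gen f = E := if_neg hf
    obtain ⟨i, hi, -⟩ := he
    have := hg i
    simp only [rep, hge, hgf, hi] at this
    exact not_conj'' g (f i) (fun h0 => by
      rw [(hz i).2 h0] at hi; exact absurd hi (by decide)) this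
  by_cases he : Lead 2 e <;> by_cases hf : Lead 2 f
  · obtain ⟨g, hg⟩ := h
    have hge : gen e = D := if_pos he
    have hgf : gen f = D := if_pos hf
    obtain ⟨i, hi, hi'⟩ := he
    have hfi : Lead (f i) f := ⟨i, rfl, fun j hj => (hz0 j).1 (hi' j hj)⟩
    have hi0 : e i ≠ 0 := by rw [hi]; decide
    have := lead_unique (fun h0 => hi0 ((hz0 i).2 h0)) (by decide) hfi hf
    exact conj_same D3 D1 e f (fun j => by
      have := hg j
      simp only [rep, hge, hgf] at this
      exact this) i (by rw [hi, this]) hi0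
  · exact (mixed e f hz0 h he hf).elim
  · exact (mixed f e (fun i => (hz0 i).symm) ((tupleConj_equiv _).symm h) hf he).elim
  · obtain ⟨g, hg⟩ := h
    have hge : gen e = E := if_neg he
    have hgf : gen f = E := if_neg hf
    rcases lead_exists e with h0 | h1 | h2
    · funext i
      have : e i = 0 := by rw [h0]; rfl
      rw [this, (hz0 i).1 this]
    · obtain ⟨i, hi, hi'⟩ := h1
      have hi0 : e i ≠ 0 := by rw [hi]; decide
      have hfi : Lead (f i) f := ⟨i, rfl, fun j hj => (hz0 j).1 (hi' j hj)⟩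
      have hfi1 : f i = 1 := by
        have hfi0 : f i ≠ 0 := fun h0 => hi0 ((hz0 i).2 h0)
        have hfi2 : f i ≠ 2 := fun h0 => hf (h0 ▸ hfi)
        generalize f i = x at *
        clear hfi
        revert x; decide
      exact conj_same E3 E1 e f (fun j => by
        have := hg j
        simp only [rep, hge, hgf] at this
        exact this) i (by rw [hi, hfi1]) hi0
    · exact absurd h2 he

lemma orderOf_conj' {G : Type*} [Group G] (g x : G) : orderOf (g * x * g⁻¹) = orderOf x :=
  orderOf_injective (MulAut.conj g).toMonoidHom (MulAut.conj g).injective x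

lemma exists_pow_form {n : ℕ} (v : pTuples G3 3 n) :
    ∃ (N : G3) (_ : N = D ∨ N = E) (g : G3) (e : Fin n → ZMod 3),
      ∀ i, g * v.1 i * g⁻¹ = N ^ (e i).val := by
  obtain ⟨v, hcomm, hord⟩ := v
  by_cases h : ∃ i, v i ≠ 1
  · obtain ⟨i, hi⟩ := h
    obtain ⟨k, hk⟩ := hord i
    obtain ⟨m, rfl⟩ : ∃ m, k = m + 1 := by
      rcases k with _ | m
      · rw [pow_zero, orderOf_eq_one_iff] at hk
        exact absurd hk hi
      · exact ⟨m, rfl⟩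
    have x3 : (v i ^ 3 ^ m) ^ 3 = 1 := by
      rw [← pow_mul, ← pow_succ, ← hk, pow_orderOf_eq_one]
    have x1 : v i ^ 3 ^ m ≠ 1 := by
      intro h
      rw [← orderOf_dvd_iff_pow_eq_one, hk, Nat.pow_dvd_pow_iff_le_right (by norm_num)] at h
      omega
    have hc : ∀ (g : G3) (j : Fin n), Commute (g * v j * g⁻¹) (g * (v i ^ 3 ^ m) * g⁻¹) :=
      fun g j => ((hcomm j i).pow_right _).map (MulAut.conj g).toMonoidHom
    rcases exists_conj _ x3 x1 with ⟨g, hg⟩ | ⟨g, hg⟩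
    · have : ∀ j, ∃ e : ZMod 3, g * v j * g⁻¹ = D ^ e.val := fun j => by
        obtain ⟨k, hk⟩ := hord j
        exact cent_D _ (hg ▸ hc g j) k (by rw [orderOf_conj', hk])
      choose e he using this
      exact ⟨D, Or.inl rfl, g, e, he⟩
    · have : ∀ j, ∃ e : ZMod 3, g * v j * g⁻¹ = E ^ e.val := fun j =>
        cent_E _ (hg ▸ hc g j)
      choose e he using this
      exact ⟨E, Or.inr rfl, g, e, he⟩
  · push Not at h
    exact ⟨D, Or.inl rfl, 1, 0, fun i => by simp [h i]⟩

lemma rep_surj {n : ℕ} (v : pTuples G3 3 n) : ∃ e, tupleConj _ (rep e) v := by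
  have key : ∀ e : Fin n → ZMod 3, tupleConj _ v (rep e) → ∃ e, tupleConj _ (rep e) v :=
    fun e h => ⟨e, (tupleConj_equiv _).symm h⟩
  obtain ⟨N, hN, g, e, h⟩ := exists_pow_form v
  have flip : ∀ k : G3, N ^ 3 = 1 → k * N * k⁻¹ = N ^ 2 →
      ∀ i, (k * g) * v.1 i * (k * g)⁻¹ = N ^ ((-e) i).val := by
    intro k h3 hk i
    rw [Pi.neg_apply, ← conj_neg h3 hk, ← h i]; group
  rcases hN with rfl | rfl
  · rcases lead_exists e with h0 | h1 | h2
    · refine key e ⟨g, fun i => ?_⟩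
      rw [h i, h0]
      simp [rep]
    · obtain ⟨k, hk⟩ := inv_D
      refine key (-e) ⟨k * g, fun i => ?_⟩
      have : gen (-e) = D := if_pos (show Lead (-1) (-e) from lead_neg h1)
      simp only [rep, this]
      exact flip k D3 hk i
    · refine key e ⟨g, fun i => ?_⟩
      have : gen e = D := if_pos h2
      simp only [rep, this]
      exact h i
  · by_cases h2 : Lead 2 e
    · obtain ⟨k, hk⟩ := inv_E
      refine key (-e) ⟨k * g, fun i => ?_⟩
      have : gen (-e) = E := if_neg (fun h' =>
        absurd (lead_unique (by decide) (by decide) h' (lead_neg h2)) (by decide))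
      simp only [rep, this]
      exact flip k E3 hk i
    · refine key e ⟨g, fun i => ?_⟩
      have : gen e = E := if_neg h2
      simp only [rep, this]
      exact h i

end Counting

end SL3Three

theorem sl3_orbit_count_three (n : ℕ) (hn : 1 ≤ n) :
    Nat.card (Quot (tupleConj (pTuples (Matrix.SpecialLinearGroup (Fin 3) ℤ) 3 n))) =
      3 ^ n := by
  have hb : Function.Bijective (fun e : Fin n → ZMod 3 =>
      Quot.mk (tupleConj (pTuples (Matrix.SpecialLinearGroup (Fin 3) ℤ) 3 n))
        (SL3Three.rep e)) := by
    constructor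
    · intro e f h
      apply SL3Three.rep_inj
      exact (SL3Three.tupleConj_equiv _).eqvGen_iff.1 (Quot.eqvGen_exact h)
    · intro q
      induction q using Quot.ind with
      | mk v =>
        obtain ⟨e, he⟩ := SL3Three.rep_surj v
        exact ⟨e, Quot.sound he⟩
  rw [← Nat.card_congr (Equiv.ofBijective _ hb)]
  simp [Nat.card_eq_fintype_card, ZMod.card]
end

section
/- Let n ≥ 1. The number of orbits of the simultaneous conjugation action of SL_3(ℤ) on the set SL_3(ℤ)_{n,2} of n-tuples of pairwise commuting elements of 2-power order equals 2^{2n+1} − 2^{n+1} + 1. -/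
namespace SL3Count

/-- `SL₃(ℤ)`. -/
abbrev G3 := Matrix.SpecialLinearGroup (Fin 3) ℤ

/-- Integer `3 × 3` matrices. -/
abbrev M3 := Matrix (Fin 3) (Fin 3) ℤ

lemma G3_ext_iff (g h : G3) : g = h ↔ g.1 = h.1 := Subtype.ext_iff

lemma G3_coe_mul (g h : G3) : (g * h).1 = g.1 * h.1 := rfl

lemma G3_coe_one : (1 : G3).1 = 1 := rfl

/-- The six families: two cyclic groups of order four, four Klein groups. -/
def Emat : Fin 6 → Fin 4 → M3 :=
  ![![!![1, 0, 0; 0, 1, 0; 0, 0, 1],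
      !![1, 0, 0; 0, 0, -1; 0, 1, 0],
      !![1, 0, 0; 0, -1, 0; 0, 0, -1],
      !![1, 0, 0; 0, 0, 1; 0, -1, 0]],
    ![!![1, 0, 0; 0, 1, 0; 0, 0, 1],
      !![1, 0, 1; 0, 0, -1; 0, 1, 0],
      !![1, 1, 1; 0, -1, 0; 0, 0, -1],
      !![1, 1, 0; 0, 0, 1; 0, -1, 0]],
    ![!![1, 0, 0; 0, 1, 0; 0, 0, 1],
      !![1, 0, 0; 0, -1, 0; 0, 0, -1],
      !![-1, 0, 0; 0, 1, 0; 0, 0, -1],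
      !![-1, 0, 0; 0, -1, 0; 0, 0, 1]],
    ![!![1, 0, 0; 0, 1, 0; 0, 0, 1],
      !![1, 0, 0; -1, -1, 0; 0, 0, -1],
      !![-1, 0, 0; 1, 1, 0; 0, 0, -1],
      !![-1, 0, 0; 0, -1, 0; 0, 0, 1]],
    ![!![1, 0, 0; 0, 1, 0; 0, 0, 1],
      !![1, 0, 0; -1, -1, 0; -1, 0, -1],
      !![-1, 0, 0; 1, 1, 0; 0, 0, -1],
      !![-1, 0, 0; 0, -1, 0; 1, 0, 1]],
    ![!![1, 0, 0; 0, 1, 0; 0, 0, 1],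
      !![-1, 0, 0; 2, 1, 0; -1, -1, -1],
      !![1, 0, 0; -2, -1, 0; 1, 0, -1],
      !![-1, 0, 0; 0, -1, 0; 0, 1, 1]]]

lemma Emat_det (c : Fin 6) (a : Fin 4) : (Emat c a).det = 1 := by
  rw [Matrix.det_fin_three]
  revert c a
  decide

/-- The families as elements of `SL₃(ℤ)`. -/
def E (c : Fin 6) (a : Fin 4) : G3 := ⟨Emat c a, Emat_det c a⟩

lemma E_coe (c : Fin 6) (a : Fin 4) : (E c a).1 = Emat c a := rfl

lemma E_eq_iff (c : Fin 6) (a b : Fin 4) : E c a = E c b ↔ a = b := by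
  rw [G3_ext_iff, E_coe, E_coe]
  revert c a b
  decide

lemma E_zero (c : Fin 6) : E c 0 = 1 := by
  rw [G3_ext_iff, E_coe, G3_coe_one]
  revert c
  decide

lemma E_eq_one (c : Fin 6) (a : Fin 4) : E c a = 1 ↔ a = 0 := by
  rw [← E_zero c, E_eq_iff]

/-- The group law on labels. -/
def lmul (c : Fin 6) (a b : Fin 4) : Fin 4 :=
  if c = 0 ∨ c = 1 then a + b
  else (![![0, 1, 2, 3], ![1, 0, 3, 2], ![2, 3, 0, 1], ![3, 2, 1, 0]] : Fin 4 → Fin 4 → Fin 4) a b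

lemma E_mul (c : Fin 6) (a b : Fin 4) : E c a * E c b = E c (lmul c a b) := by
  rw [G3_ext_iff, G3_coe_mul, E_coe, E_coe, E_coe]
  revert c a b
  decide

lemma E_comm (c : Fin 6) (a b : Fin 4) : Commute (E c a) (E c b) := by
  unfold Commute SemiconjBy
  rw [E_mul, E_mul, E_eq_iff]
  revert c a b
  decide

lemma E_pow_two (c : Fin 6) (a : Fin 4) : (E c a) ^ 2 = E c (lmul c a a) := by
  rw [pow_two, E_mul]

lemma E_pow_two_eq_one (c : Fin 6) (a : Fin 4) :
    (E c a) ^ 2 = 1 ↔ ((c = 0 ∨ c = 1) → (a = 0 ∨ a = 2)) := by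
  rw [E_pow_two, E_eq_one]
  revert c a
  decide

lemma E_pow_four (c : Fin 6) (a : Fin 4) : (E c a) ^ 4 = 1 := by
  rw [show 4 = 2 * 2 by norm_num, pow_mul, E_pow_two, E_pow_two, E_eq_one]
  revert c a
  decide

/-- Allowed relabelings. -/
def W (c : Fin 6) : Finset (Fin 4 → Fin 4) :=
  if c = 0 ∨ c = 1 then {![0, 1, 2, 3], ![0, 3, 2, 1]}
  else if c = 3 then {![0, 1, 2, 3], ![0, 2, 1, 3]}
  else {![0, 1, 2, 3], ![0, 2, 1, 3], ![0, 1, 3, 2], ![0, 2, 3, 1], ![0, 3, 1, 2], ![0, 3, 2, 1]}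

/-- The relabeling `σ` is realized by a conjugation. -/
def Real1 (c : Fin 6) (σ : Fin 4 → Fin 4) : Prop := ∃ Q : G3, ∀ a, Q * E c a = E c (σ a) * Q

lemma conj_of_mat {ι : Type*} (A B : ι → G3) (P : M3) (hP : P.det = 1 ∨ P.det = -1)
    (h : ∀ i, P * (A i).1 = (B i).1 * P) : ∃ Q : G3, ∀ i, Q * A i = B i * Q := by
  rcases hP with hP | hP
  · refine ⟨⟨P, hP⟩, fun i => ?_⟩
    rw [G3_ext_iff]
    exact h i
  · refine ⟨⟨-P, ?_⟩, fun i => ?_⟩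
    · rw [Matrix.det_neg, hP]; simp
    · rw [G3_ext_iff]
      change (-P) * (A i).1 = (B i).1 * (-P)
      rw [neg_mul, mul_neg, h i]

lemma Real1.comp {c : Fin 6} {σ τ : Fin 4 → Fin 4} (hσ : Real1 c σ) (hτ : Real1 c τ) :
    Real1 c (σ ∘ τ) := by
  obtain ⟨P, hP⟩ := hσ
  obtain ⟨Q, hQ⟩ := hτ
  refine ⟨P * Q, fun a => ?_⟩
  rw [mul_assoc, hQ, ← mul_assoc, hP, mul_assoc]; rfl

lemma real_id (c : Fin 6) : Real1 c ![0, 1, 2, 3] := by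
  refine ⟨1, fun a => ?_⟩
  have : (![0, 1, 2, 3] : Fin 4 → Fin 4) a = a := by revert a; decide
  rw [this]; simp

lemma real_of_mat (c : Fin 6) (σ : Fin 4 → Fin 4) (P : M3) (hP : P.det = 1 ∨ P.det = -1)
    (h : ∀ i, P * Emat c i = Emat c (σ i) * P) : Real1 c σ :=
  conj_of_mat (fun a => E c a) (fun a => E c (σ a)) P hP h

lemma real_neg0 : Real1 0 ![0, 3, 2, 1] := by
  apply real_of_mat _ _ !![1, 0, 0; 0, 0, 1; 0, 1, 0]
  · simp [Matrix.det_fin_three]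
  · decide
lemma real_neg1 : Real1 1 ![0, 3, 2, 1] := by
  apply real_of_mat _ _ !![1, 0, 0; 0, 0, 1; 0, 1, 0]
  · simp [Matrix.det_fin_three]
  · decide
lemma real_s2 : Real1 2 ![0, 2, 1, 3] := by
  apply real_of_mat _ _ !![0, 1, 0; 1, 0, 0; 0, 0, 1]
  · simp [Matrix.det_fin_three]
  · decide
lemma real_t2 : Real1 2 ![0, 1, 3, 2] := by
  apply real_of_mat _ _ !![1, 0, 0; 0, 0, 1; 0, 1, 0]
  · simp [Matrix.det_fin_three]
  · decide
lemma real_s3 : Real1 3 ![0, 2, 1, 3] := by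
  apply real_of_mat _ _ !![1, 2, 0; 0, -1, 0; 0, 0, 1]
  · simp [Matrix.det_fin_three]
  · decide
lemma real_s4 : Real1 4 ![0, 2, 1, 3] := by
  apply real_of_mat _ _ !![1, 2, 0; 0, -1, 0; 0, -1, 1]
  · simp [Matrix.det_fin_three]
  · decide
lemma real_t4 : Real1 4 ![0, 1, 3, 2] := by
  apply real_of_mat _ _ !![1, 0, 0; 0, 0, 1; 0, 1, 0]
  · simp [Matrix.det_fin_three]
  · decide
lemma real_s5 : Real1 5 ![0, 2, 1, 3] := by
  apply real_of_mat _ _ !![1, 1, 0; 0, -1, 0; 0, 1, 1]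
  · simp [Matrix.det_fin_three]
  · decide
lemma real_t5 : Real1 5 ![0, 1, 3, 2] := by
  apply real_of_mat _ _ !![0, 1, 2; 1, 0, -2; 0, 0, 1]
  · simp [Matrix.det_fin_three]
  · decide

lemma real_S3 (c : Fin 6) (hs : Real1 c ![0, 2, 1, 3]) (ht : Real1 c ![0, 1, 3, 2])
    (σ : Fin 4 → Fin 4) (h : σ ∈ ({![0, 1, 2, 3], ![0, 2, 1, 3], ![0, 1, 3, 2], ![0, 2, 3, 1],
      ![0, 3, 1, 2], ![0, 3, 2, 1]} : Finset (Fin 4 → Fin 4))) : Real1 c σ := by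
  simp only [Finset.mem_insert, Finset.mem_singleton] at h
  rcases h with rfl | rfl | rfl | rfl | rfl | rfl
  · exact real_id c
  · exact hs
  · exact ht
  · have := hs.comp ht
    convert this using 1; decide
  · have := ht.comp hs
    convert this using 1; decide
  · have := hs.comp (ht.comp hs)
    convert this using 1; decide

lemma real_W (c : Fin 6) (σ : Fin 4 → Fin 4) (h : σ ∈ W c) : Real1 c σ := by
  fin_cases c
  · have h' : σ ∈ ({![0, 1, 2, 3], ![0, 3, 2, 1]} : Finset (Fin 4 → Fin 4)) := h
    simp only [Finset.mem_insert, Finset.mem_singleton] at h'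
    rcases h' with rfl | rfl
    · exact real_id _
    · exact real_neg0
  · have h' : σ ∈ ({![0, 1, 2, 3], ![0, 3, 2, 1]} : Finset (Fin 4 → Fin 4)) := h
    simp only [Finset.mem_insert, Finset.mem_singleton] at h'
    rcases h' with rfl | rfl
    · exact real_id _
    · exact real_neg1
  · exact real_S3 2 real_s2 real_t2 σ h
  · have h' : σ ∈ ({![0, 1, 2, 3], ![0, 2, 1, 3]} : Finset (Fin 4 → Fin 4)) := h
    simp only [Finset.mem_insert, Finset.mem_singleton] at h'
    rcases h' with rfl | rfl
    · exact real_id _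
    · exact real_s3
  · exact real_S3 4 real_s4 real_t4 σ h
  · exact real_S3 5 real_s5 real_t5 σ h

/-- Reduction modulo two. -/
def red (g : G3) : Matrix (Fin 3) (Fin 3) (ZMod 2) := g.1.map (Int.cast : ℤ → ZMod 2)

lemma red_mul (g h : G3) : red (g * h) = red g * red h := by
  unfold red
  rw [G3_coe_mul]
  exact Matrix.map_mul (f := Int.castRingHom (ZMod 2))

lemma red_one : red 1 = 1 := by
  unfold red
  rw [G3_coe_one]
  exact Matrix.map_one _ (by simp) (by simp)

lemma red_conj {Q g g' : G3} (h : Q * g = g' * Q) : red g' = red Q * red g * red Q⁻¹ := by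
  rw [← red_mul, ← red_mul, h]; simp

lemma red_inv_mul (Q : G3) : red Q⁻¹ * red Q = 1 := by rw [← red_mul]; simp [red_one]

lemma red_mul_inv (Q : G3) : red Q * red Q⁻¹ = 1 := by rw [← red_mul]; simp [red_one]

lemma conj_symm {Q g g' : G3} (h : Q * g = g' * Q) : Q⁻¹ * g' = g * Q⁻¹ := by
  rw [inv_mul_eq_iff_eq_mul, ← mul_assoc, h]; simp

lemma conj_mul {Q g g' h h' : G3} (hg : Q * g = g' * Q) (hh : Q * h = h' * Q) :
    Q * (g * h) = (g' * h') * Q := by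
  rw [← mul_assoc, hg, mul_assoc, hh, mul_assoc]

lemma conj_eq_iff {Q g g' h h' : G3} (hg : Q * g = g' * Q) (hh : Q * h = h' * Q) :
    g = h ↔ g' = h' := by
  constructor
  · rintro rfl
    exact mul_right_cancel (hg.symm.trans hh)
  · rintro rfl
    exact mul_left_cancel (hg.trans hh.symm)

lemma conj_one (Q : G3) : Q * 1 = 1 * Q := by simp

lemma red_eq_iff {Q g g' h h' : G3} (hg : Q * g = g' * Q) (hh : Q * h = h' * Q) :
    red g = red h ↔ red g' = red h' := by
  constructor
  · intro h
    rw [red_conj hg, red_conj hh, h]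
  · intro h
    rw [red_conj (conj_symm hg), red_conj (conj_symm hh), h]

lemma red_one_iff {Q g g' : G3} (hg : Q * g = g' * Q) : red g = 1 ↔ red g' = 1 := by
  rw [← red_one]
  exact red_eq_iff hg (conj_one Q)

/-- The fixed space mod 2 of the first is contained in that of the second. -/
def Kle (A B : Matrix (Fin 3) (Fin 3) (ZMod 2)) : Prop :=
  ∀ m : Fin 3 → ZMod 2, A.mulVec m = m → B.mulVec m = m

instance (A B : Matrix (Fin 3) (Fin 3) (ZMod 2)) : Decidable (Kle A B) := by
  unfold Kle; infer_instance

lemma Kle_of_conj {Q g g' h h' : G3} (hg : Q * g = g' * Q) (hh : Q * h = h' * Q)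
    (H : Kle (red g) (red h)) : Kle (red g') (red h') := by
  intro m hm
  have h1 := H ((red Q⁻¹).mulVec m) (by
    rw [red_conj (conj_symm hg), inv_inv, Matrix.mulVec_mulVec, mul_assoc, red_mul_inv, mul_one,
      ← Matrix.mulVec_mulVec, hm])
  rw [red_conj (conj_symm hh), inv_inv, Matrix.mulVec_mulVec, mul_assoc, red_mul_inv, mul_one] at h1
  have h2 := congrArg (red Q).mulVec h1
  rwa [Matrix.mulVec_mulVec, Matrix.mulVec_mulVec, ← mul_assoc, red_mul_inv, one_mul,
    Matrix.one_mulVec] at h2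

lemma Kle_iff {Q g g' h h' : G3} (hg : Q * g = g' * Q) (hh : Q * h = h' * Q) :
    Kle (red g) (red h) ↔ Kle (red g') (red h') :=
  ⟨Kle_of_conj hg hh, Kle_of_conj (conj_symm hg) (conj_symm hh)⟩

/-- A conjugation invariant of pairs. -/
def label (A B : Matrix (Fin 3) (Fin 3) (ZMod 2)) : ℕ :=
  if A = 1 then 0 + (if B = 1 then 0 else 1)
  else if B = 1 then 2 else if A = B then 3 else if Kle A B then 4 else 5

lemma label_conj {Q g g' h h' : G3} (hg : Q * g = g' * Q) (hh : Q * h = h' * Q) :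
    label (red g) (red h) = label (red g') (red h') := by
  unfold label
  simp only [red_one_iff hg, red_one_iff hh, red_eq_iff hg hh, Kle_iff hg hh]

/-- Value of `label` on the Klein groups. -/
def lab (c : Fin 6) (a b : Fin 4) : ℕ :=
  if c = 2 then 0 else if c = 3 then (if a = 3 then 1 else if b = 3 then 2 else 3)
  else if c = 4 then 4 else 5

/-- the reductions -/
def Ered (c : Fin 6) (a : Fin 4) : Matrix (Fin 3) (Fin 3) (ZMod 2) :=
  (Emat c a).map (Int.cast : ℤ → ZMod 2)

lemma red_E (c : Fin 6) (a : Fin 4) : red (E c a) = Ered c a := rfl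

set_option maxRecDepth 100000 in
lemma label_E (c : Fin 6) (a b : Fin 4) (hc : ¬ (c = 0 ∨ c = 1)) (ha : a ≠ 0) (hb : b ≠ 0)
    (hab : a ≠ b) : label (red (E c a)) (red (E c b)) = lab c a b := by
  rw [red_E, red_E]
  revert c a b
  decide

lemma lab_type (c c' : Fin 6) (a b a' b' : Fin 4) (hc : ¬ (c = 0 ∨ c = 1))
    (hc' : ¬ (c' = 0 ∨ c' = 1)) (h : lab c a b = lab c' a' b') : c = c' := by
  unfold lab at h
  split_ifs at h <;> omega

set_option maxRecDepth 100000 in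
set_option synthInstance.maxSize 2000 in
set_option synthInstance.maxHeartbeats 400000 in
lemma lab_perm : ∀ (c : Fin 6) (a b a' b' : Fin 4), (¬ (c = 0 ∨ c = 1) ∧ a ≠ 0 ∧ b ≠ 0 ∧ a ≠ b ∧
    a' ≠ 0 ∧ b' ≠ 0 ∧ a' ≠ b' ∧ lab c a b = lab c a' b') →
    ∃ σ ∈ W c, ∀ e f, (e = 0 ↔ f = 0) → (e = a ↔ f = a') → (e = b ↔ f = b') → f = σ e := by
  decide

/-- Two distinct nontrivial labels occur. -/
def Gen {n : ℕ} (x : Fin n → Fin 4) : Prop := ∃ i j, x i ≠ 0 ∧ x j ≠ 0 ∧ x i ≠ x j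

/-- A raw normal form is good. -/
def Good {n : ℕ} (c : Fin 6) (x : Fin n → Fin 4) : Prop :=
  if c = 0 then True else if c = 1 then ∃ i, x i ≠ 0 else Gen x

lemma red_sq_E (c : Fin 6) (a : Fin 4) (hc : c = 0 ∨ c = 1) (ha : ¬ (a = 0 ∨ a = 2)) :
    red (E c a * E c a) = 1 ↔ c = 0 := by
  rw [red_mul, red_E]
  revert c a
  decide

lemma red_two_E (c : Fin 6) (hc : c = 0 ∨ c = 1) : red (E c 2) = 1 ↔ c = 0 := by
  rw [red_E]
  revert c
  decide

lemma E_cube (c : Fin 6) (a : Fin 4) (hc : c = 0 ∨ c = 1) :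
    E c a * E c a * E c a = E c ((![0, 3, 2, 1] : Fin 4 → Fin 4) a) := by
  rw [E_mul, E_mul, E_eq_iff]
  revert c a
  decide

/-- comparing two labels of a cyclic family -/
lemma cyc_perm : ∀ (a a' : Fin 4), ¬ (a = 0 ∨ a = 2) → ¬ (a' = 0 ∨ a' = 2) →
    ∃ σ ∈ ({![0, 1, 2, 3], ![0, 3, 2, 1]} : Finset (Fin 4 → Fin 4)), ∀ e f,
      (e = 0 ↔ f = 0) → (e = a ↔ f = a') →
      (e = (![0, 3, 2, 1] : Fin 4 → Fin 4) a ↔ f = (![0, 3, 2, 1] : Fin 4 → Fin 4) a') →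
      f = σ e := by
  decide

lemma conj_classify {n : ℕ} (c c' : Fin 6) (x y : Fin n → Fin 4) (hx : Good c x) (hy : Good c' y)
    (Q : G3) (hQ : ∀ i, Q * E c (x i) = E c' (y i) * Q) :
    c = c' ∧ ∃ σ ∈ W c, y = σ ∘ x := by
  have h0 : ∀ i, x i = 0 ↔ y i = 0 := fun i => by
    rw [← E_eq_one c, ← E_eq_one c']
    exact conj_eq_iff (hQ i) (conj_one Q)
  have heq : ∀ i j, x i = x j ↔ y i = y j := fun i j => by
    rw [← E_eq_iff c, ← E_eq_iff c']
    exact conj_eq_iff (hQ i) (hQ j)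
  have hsq : ∀ i, (E c (x i)) ^ 2 = 1 ↔ (E c' (y i)) ^ 2 = 1 := fun i => by
    rw [pow_two, pow_two]
    exact conj_eq_iff (conj_mul (hQ i) (hQ i)) (conj_one Q)
  simp only [E_pow_two_eq_one] at hsq
  by_cases hodd : ∃ i, ¬ ((c = 0 ∨ c = 1) → (x i = 0 ∨ x i = 2))
  · obtain ⟨i, hi⟩ := hodd
    have hi' := mt (hsq i).2 hi
    rw [Classical.not_imp] at hi hi'
    obtain ⟨hc, hxi⟩ := hi
    obtain ⟨hc', hyi⟩ := hi'
    have hr := red_one_iff (conj_mul (hQ i) (hQ i))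
    rw [red_sq_E c _ hc hxi, red_sq_E c' _ hc' hyi] at hr
    have hcc : c = c' := by omega
    subst hcc
    refine ⟨rfl, ?_⟩
    obtain ⟨σ, hσ, H⟩ := cyc_perm (x i) (y i) hxi hyi
    refine ⟨σ, by unfold W; rw [if_pos hc]; exact hσ, ?_⟩
    funext k
    refine H _ _ (h0 k) (heq k i) ?_
    rw [← E_eq_iff c, ← E_eq_iff c, ← E_cube c _ hc, ← E_cube c _ hc]
    exact conj_eq_iff (hQ k) (conj_mul (conj_mul (hQ i) (hQ i)) (hQ i))
  · push Not at hodd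
    have hodd' := fun i => (hsq i).1 (hodd i)
    by_cases hc : c = 0 ∨ c = 1
    · have hnc' : c' = 0 ∨ c' = 1 := by
        by_contra hc'
        have hg : Gen y := by
          unfold Good at hy
          rwa [if_neg (fun h => hc' (Or.inl h)), if_neg (fun h => hc' (Or.inr h))] at hy
        obtain ⟨i, j, h1, h2, h3⟩ := hg
        rw [Ne, ← h0] at h1 h2
        rw [Ne, ← heq] at h3
        have := hodd i hc
        have := hodd j hc
        grind
      have hxy : y = x := by
        funext k
        have h1 := hodd k hc
        have h2 := hodd' k hnc'
        have h3 := h0 k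
        grind
      subst hxy
      refine ⟨?_, ![0, 1, 2, 3], ?_, ?_⟩
      · by_cases hz : ∃ i, y i ≠ 0
        · obtain ⟨i, hi⟩ := hz
          have h2 : y i = 2 := (hodd i hc).resolve_left hi
          have hr := red_one_iff (hQ i)
          rw [h2, red_two_E c hc, red_two_E c' hnc'] at hr
          omega
        · have e1 : c = 0 := by
            by_contra h
            have h1 : c = 1 := hc.resolve_left h
            unfold Good at hx
            rw [if_neg h, if_pos h1] at hx
            exact hz hx
          have e2 : c' = 0 := by
            by_contra h
            have h1 : c' = 1 := hnc'.resolve_left h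
            unfold Good at hy
            rw [if_neg h, if_pos h1] at hy
            exact hz hy
          rw [e1, e2]
      · unfold W; rw [if_pos hc]; simp
      · funext k
        have : ∀ a : Fin 4, a = (![0, 1, 2, 3] : Fin 4 → Fin 4) a := by decide
        exact this _
    · have hg : Gen x := by
        unfold Good at hx
        rwa [if_neg (fun h => hc (Or.inl h)), if_neg (fun h => hc (Or.inr h))] at hx
      obtain ⟨i, j, h1, h2, h3⟩ := hg
      have h1' := h1
      have h2' := h2
      have h3' := h3
      rw [Ne, h0] at h1' h2'
      rw [Ne, heq] at h3'
      have hc' : ¬ (c' = 0 ∨ c' = 1) := by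
        intro hc'
        have := hodd' i hc'
        have := hodd' j hc'
        grind
      have hl := label_conj (hQ i) (hQ j)
      rw [label_E c _ _ hc h1 h2 h3, label_E c' _ _ hc' h1' h2' h3'] at hl
      have hcc := lab_type _ _ _ _ _ _ hc hc' hl
      subst hcc
      refine ⟨rfl, ?_⟩
      obtain ⟨σ, hσ, H⟩ := lab_perm c _ _ _ _ ⟨hc, h1, h2, h3, h1', h2', h3', hl⟩
      refine ⟨σ, hσ, ?_⟩
      funext k
      exact H _ _ (h0 k) (heq k i) (heq k j)

lemma adj_identity (A : M3) :
    A.adjugate = A * A - A.trace • A + A.adjugate.trace • (1 : M3) := by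
  ext i j
  fin_cases i <;> fin_cases j <;>
    simp [Matrix.adjugate_fin_three, Matrix.trace_fin_three, Matrix.mul_apply,
      Fin.sum_univ_three, -zsmul_eq_mul, -zsmul_one] <;> ring

lemma trace_sq (A : M3) : (A * A).trace = A.trace ^ 2 - 2 * A.adjugate.trace := by
  simp [Matrix.adjugate_fin_three, Matrix.trace_fin_three, Matrix.mul_apply,
      Fin.sum_univ_three]
  ring

lemma coe_inv_adj (g : G3) : (g⁻¹).1 = g.1.adjugate := Matrix.SpecialLinearGroup.coe_inv g

lemma adj_of_inv {h : G3} (h2 : h * h = 1) : h.1.adjugate = h.1 := by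
  rw [← coe_inv_adj, inv_eq_of_mul_eq_one_right h2]

lemma coe_sq_of_inv {h : G3} (h2 : h * h = 1) : h.1 * h.1 = 1 := by
  rw [← G3_coe_mul, h2, G3_coe_one]

lemma trace_of_inv {h : G3} (h2 : h * h = 1) (h1 : h ≠ 1) : h.1.trace = -1 := by
  have key := adj_identity h.1
  rw [adj_of_inv h2, coe_sq_of_inv h2] at key
  by_contra ht
  apply h1
  rw [G3_ext_iff, G3_coe_one]
  have h3 : (1 + h.1.trace) • (h.1 - 1) = 0 := by
    have : (1 + h.1.trace) • (h.1 - 1)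
        = h.1 - (1 - h.1.trace • h.1 + h.1.trace • (1 : M3)) := by
      rw [add_smul, smul_sub, smul_sub, one_smul, one_smul]; abel
    rw [this, ← key, sub_self]
  rcases smul_eq_zero.1 h3 with h4 | h4
  · omega
  · exact sub_eq_zero.1 h4

lemma pow_eight {x : G3} (h8 : x ^ 8 = 1) : x ^ 4 = 1 := by
  by_contra h4
  have hh : (x ^ 4) * (x ^ 4) = 1 := by rw [← pow_add]; exact h8
  have tr : ∀ y : G3, (y * y).1.trace = y.1.trace ^ 2 - 2 * (y⁻¹).1.trace := fun y => by
    rw [G3_coe_mul, trace_sq, coe_inv_adj]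
  have e1 := tr x
  have e2 := tr x⁻¹
  have e3 := tr (x * x)
  have e4 := tr (x * x)⁻¹
  have f1 : x * x * (x * x) = x ^ 4 := by simp only [pow_succ, pow_zero, one_mul, mul_assoc]
  have f2 : (x * x)⁻¹ * (x * x)⁻¹ = x ^ 4 := by
    rw [← mul_inv_rev, f1]
    exact inv_eq_of_mul_eq_one_right hh
  have f3 : x⁻¹ * x⁻¹ = (x * x)⁻¹ := by group
  rw [f1, trace_of_inv hh h4] at e3
  rw [f2, trace_of_inv hh h4, inv_inv] at e4
  rw [f3, inv_inv] at e2
  generalize (x * x).1.trace = a2 at *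
  generalize ((x * x)⁻¹).1.trace = b2 at *
  generalize x.1.trace = a at *
  generalize (x⁻¹).1.trace = b at *
  subst e1 e2
  have g3 := congrArg (Int.cast : ℤ → ZMod 8) e3
  have g4 := congrArg (Int.cast : ℤ → ZMod 8) e4
  push_cast at g3 g4
  have : ∀ a b : ZMod 8, ¬ (-1 = (a ^ 2 - 2 * b) ^ 2 - 2 * (b ^ 2 - 2 * a) ∧
    -1 = (b ^ 2 - 2 * a) ^ 2 - 2 * (a ^ 2 - 2 * b)) := by decide
  exact this _ _ ⟨g3, g4⟩

lemma pow_four_of_two_pow {g : G3} (k : ℕ) (h : g ^ (2 ^ k) = 1) : g ^ 4 = 1 := by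
  induction k with
  | zero => simp at h; rw [h]; simp
  | succ k ih =>
    rcases Nat.lt_or_ge k 2 with hk | hk
    · interval_cases k
      · norm_num at h; rw [show 4 = 2 * 2 by norm_num, pow_mul, h, one_pow]
      · norm_num at h; exact h
    · apply ih
      obtain ⟨m, rfl⟩ := Nat.exists_eq_add_of_le hk
      have h8 : (g ^ (2 ^ m)) ^ 8 = 1 := by
        rw [← pow_mul, ← h]; congr 1; ring
      have := pow_eight h8
      rw [← pow_mul] at this
      rw [← this]; congr 1; ring

/-- A vector can be moved to a multiple of the first basis vector. -/
lemma vec_reduce2 (a b : ℤ) : ∃ p q r s d : ℤ, p * s - q * r = 1 ∧ p * a + q * b = d ∧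
    r * a + s * b = 0 := by
  by_cases h : a = 0 ∧ b = 0
  · obtain ⟨rfl, rfl⟩ := h
    exact ⟨1, 0, 0, 1, 0, by norm_num, by norm_num, by norm_num⟩
  · have hg : (Int.gcd a b : ℤ) ≠ 0 := by
      intro h0
      apply h
      have : Int.gcd a b = 0 := by exact_mod_cast h0
      exact Int.gcd_eq_zero_iff.1 this
    obtain ⟨a', ha⟩ := Int.gcd_dvd_left a b
    obtain ⟨b', hb⟩ := Int.gcd_dvd_right a b
    have hbez := Int.gcd_eq_gcd_ab a b
    set g : ℤ := (Int.gcd a b : ℤ)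
    refine ⟨Int.gcdA a b, Int.gcdB a b, -b', a', g, ?_, ?_, ?_⟩
    · apply mul_left_cancel₀ hg
      linear_combination (-Int.gcdA a b) * ha - Int.gcdB a b * hb - hbez
    · linear_combination -hbez
    · linear_combination (-b') * ha + a' * hb

lemma vec_reduce3 (u : Fin 3 → ℤ) : ∃ P : M3, P.det = 1 ∧ P.mulVec u 1 = 0 ∧ P.mulVec u 2 = 0 := by
  obtain ⟨p, q, r, s, d, h1, h2, h3⟩ := vec_reduce2 (u 1) (u 2)
  obtain ⟨p', q', r', s', d', h1', h2', h3'⟩ := vec_reduce2 (u 0) d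
  refine ⟨!![p', q' * p, q' * q; r', s' * p, s' * q; 0, r, s], ?_, ?_, ?_⟩
  · simp [Matrix.det_fin_three]
    linear_combination (p' * s' - q' * r') * h1 + h1'
  · simp [Matrix.mulVec, dotProduct, Fin.sum_univ_three]
    linear_combination s' * h2 + h3'
  · simp [Matrix.mulVec, dotProduct, Fin.sum_univ_three]
    linear_combination h3

lemma minors_zero {h : G3} (h2 : h * h = 1) (h1 : h ≠ 1) : (1 + h.1).adjugate = 0 := by
  have ha := adj_of_inv h2
  have ht := trace_of_inv h2 h1
  have : (1 + h.1).adjugate = 1 + h.1.trace • (1 : M3) - h.1 + h.1.adjugate := by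
    ext i j
    fin_cases i <;> fin_cases j <;>
      simp [Matrix.adjugate_fin_three, Matrix.trace_fin_three,
        -zsmul_eq_mul, -zsmul_one] <;> ring
  rw [this, ha, ht]
  simp

/-- rank one matrices: row reduction -/
lemma rank_one_reduce (A : M3) (h0 : A.adjugate = 0) : ∃ P : M3, P.det = 1 ∧
    (∀ j, (P * A) 1 j = 0) ∧ (∀ j, (P * A) 2 j = 0) := by
  by_cases hA : A = 0
  · exact ⟨1, by simp, by simp [hA], by simp [hA]⟩
  · have : ∃ j i, A i j ≠ 0 := by
      by_contra hc
      push Not at hc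
      apply hA
      ext i j
      exact hc j i
    obtain ⟨j, i, hij⟩ := this
    obtain ⟨P, hP, e1, e2⟩ := vec_reduce3 (fun i => A i j)
    refine ⟨P, hP, ?_⟩
    have hadj : (P * A).adjugate = 0 := by rw [Matrix.adjugate_mul_distrib, h0, zero_mul]
    have c1 : (P * A) 1 j = 0 := e1
    have c2 : (P * A) 2 j = 0 := e2
    have c0 : (P * A) 0 j ≠ 0 := by
      intro c0
      apply hij
      have hz : P.mulVec (fun i => A i j) = 0 := by
        funext k
        fin_cases k
        · exact c0
        · exact e1
        · exact e2
      have := congrArg P.adjugate.mulVec hz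
      rw [Matrix.mulVec_mulVec, Matrix.adjugate_mul, hP] at this
      simp at this
      exact congrFun this i
    generalize P * A = B at *
    have hm := fun a b => congrFun (congrFun hadj a) b
    rw [Matrix.adjugate_fin_three] at hm
    have m00 := hm 0 0
    have m01 := hm 0 1
    have m02 := hm 0 2
    have m10 := hm 1 0
    have m11 := hm 1 1
    have m12 := hm 1 2
    have m20 := hm 2 0
    have m21 := hm 2 1
    have m22 := hm 2 2
    simp at m00 m01 m02 m10 m11 m12 m20 m21 m22
    have key1 : ∀ k l, B 0 k * B 1 l = B 0 l * B 1 k := by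
      intro k l
      fin_cases k <;> fin_cases l <;> simp <;> linarith
    have key2 : ∀ k l, B 0 k * B 2 l = B 0 l * B 2 k := by
      intro k l
      fin_cases k <;> fin_cases l <;> simp <;> linarith
    refine ⟨fun k => ?_, fun k => ?_⟩
    · have := key1 j k
      rw [c1, mul_zero] at this
      exact (mul_eq_zero.1 this).resolve_left c0
    · have := key2 j k
      rw [c2, mul_zero] at this
      exact (mul_eq_zero.1 this).resolve_left c0

lemma mul3_entries (A B : M3) (i j : Fin 3) :
    (A * B) i j = A i 0 * B 0 j + A i 1 * B 1 j + A i 2 * B 2 j := by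
  rw [Matrix.mul_apply, Fin.sum_univ_three]

lemma ext9 {A B : M3} (h00 : A 0 0 = B 0 0) (h01 : A 0 1 = B 0 1) (h02 : A 0 2 = B 0 2)
    (h10 : A 1 0 = B 1 0) (h11 : A 1 1 = B 1 1) (h12 : A 1 2 = B 1 2)
    (h20 : A 2 0 = B 2 0) (h21 : A 2 1 = B 2 1) (h22 : A 2 2 = B 2 2) : A = B := by
  ext i j
  fin_cases i <;> fin_cases j <;> assumption

/-- conjugating by one matrix -/
lemma conj_of_mat1 (a b : G3) (P : M3) (hP : P.det = 1 ∨ P.det = -1)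
    (h : P * a.1 = b.1 * P) : ∃ Q : G3, Q * a = b * Q := by
  obtain ⟨Q, hQ⟩ := conj_of_mat (fun _ : Unit => a) (fun _ => b) P hP (fun _ => h)
  exact ⟨Q, hQ ()⟩

/-- the involution in the two cyclic families -/
lemma inv_classify_aux (h : G3) (h10 : h.1 1 0 = 0) (h11 : h.1 1 1 = -1) (h12 : h.1 1 2 = 0)
    (h20 : h.1 2 0 = 0) (h21 : h.1 2 1 = 0) (h22 : h.1 2 2 = -1) :
    ∃ k : Fin 6, (k = 0 ∨ k = 1) ∧ ∃ Q : G3, Q * h = E k 2 * Q := by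
  have hdet := h.2
  rw [Matrix.det_fin_three, h10, h11, h12, h20, h21, h22] at hdet
  have h00 : h.1 0 0 = 1 := by linarith
  obtain ⟨p, q, r, s, d, e1, e2, e3⟩ := vec_reduce2 (h.1 0 1) (h.1 0 2)
  have key : ∀ (κ t : ℤ), d + 2 * t = κ → ∀ k : Fin 6,
      Emat k 2 = !![1, κ, κ; 0, -1, 0; 0, 0, -1] → ∃ Q : G3, Q * h = E k 2 * Q := by
    intro κ t hκ k hk
    obtain ⟨Q, hQ⟩ := conj_of_mat1 (E k 2) h !![1, t, t; 0, p, p + r; 0, q, q + s]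
      (by left; simp [Matrix.det_fin_three]; linear_combination e1)
      (by
        rw [E_coe, hk]
        apply ext9 <;> rw [mul3_entries, mul3_entries] <;>
          simp [h00, h10, h11, h12, h20, h21, h22]
        · linarith
        · linarith)
    exact ⟨Q⁻¹, conj_symm hQ⟩
  rcases Int.emod_two_eq_zero_or_one d with hd | hd
  · exact ⟨0, Or.inl rfl, key 0 (-(d / 2)) (by omega) 0 (by decide)⟩
  · exact ⟨1, Or.inr rfl, key 1 (-(d / 2)) (by omega) 1 (by decide)⟩

lemma inv_classify {h : G3} (h2 : h * h = 1) (h1 : h ≠ 1) :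
    ∃ k : Fin 6, (k = 0 ∨ k = 1) ∧ ∃ Q : G3, Q * h = E k 2 * Q := by
  obtain ⟨P, hP, r1, r2⟩ := rank_one_reduce (1 + h.1) (minors_zero h2 h1)
  obtain ⟨p, hp⟩ : ∃ p : G3, p.1 = P := ⟨⟨P, hP⟩, rfl⟩
  have hpp : p.1 * (p⁻¹).1 = 1 := by rw [← G3_coe_mul]; simp
  have hh : 1 + (p * h * p⁻¹).1 = P * (1 + h.1) * (p⁻¹).1 := by
    rw [G3_coe_mul, G3_coe_mul, ← hp, mul_add, add_mul, mul_one, hpp]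
  have q1 : ∀ j, (1 + (p * h * p⁻¹).1) 1 j = 0 := fun j => by
    rw [hh, mul3_entries, r1, r1, r1]; simp
  have q2 : ∀ j, (1 + (p * h * p⁻¹).1) 2 j = 0 := fun j => by
    rw [hh, mul3_entries, r2, r2, r2]; simp
  have a0 := q1 0
  have a1 := q1 1
  have a2 := q1 2
  have b0 := q2 0
  have b1 := q2 1
  have b2 := q2 2
  rw [Matrix.add_apply] at a0 a1 a2 b0 b1 b2
  simp only [Matrix.one_apply] at a0 a1 a2 b0 b1 b2
  simp at a0 a1 a2 b0 b1 b2
  obtain ⟨k, hk, Q, hQ⟩ := inv_classify_aux (p * h * p⁻¹) (by simpa using a0)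
    (by have : 1 + (p * h * p⁻¹).1 1 1 = 0 := by simpa using a1
        linarith) (by simpa using a2) (by simpa using b0) (by simpa using b1)
    (by have : 1 + (p * h * p⁻¹).1 2 2 = 0 := by simpa using b2
        linarith)
  refine ⟨k, hk, Q * p, ?_⟩
  have : Q * (p * h * p⁻¹) * p = E k 2 * Q * p := by rw [hQ]
  simpa [mul_assoc] using this

lemma form_unit (N : ℕ) : ∀ a b c : ℤ, c.natAbs ≤ N → a ^ 2 + b * c = -1 →
    ∃ p q : ℤ, c * p ^ 2 - 2 * a * p * q - b * q ^ 2 = 1 ∨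
      c * p ^ 2 - 2 * a * p * q - b * q ^ 2 = -1 := by
  induction N with
  | zero =>
    intro a b c hc h
    have : c = 0 := by omega
    subst this
    nlinarith [sq_nonneg a]
  | succ N ih =>
    intro a b c hc h
    have hc0 : c ≠ 0 := by
      rintro rfl
      nlinarith [sq_nonneg a]
    by_cases h1 : c.natAbs = 1
    · refine ⟨1, 0, ?_⟩
      rcases Int.natAbs_eq c with h2 | h2 <;> rw [h1] at h2 <;> simp at h2 <;> simp [h2]
    · have hr0 := Int.emod_nonneg a hc0
      have hr1 := Int.emod_lt_abs a hc0
      have hdiv := Int.emod_add_mul_ediv a c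
      set r := a % c
      set t := a / c
      set b' := b + 2 * a * t - c * t ^ 2 with hb'
      have hr : r ^ 2 + b' * c = -1 := by
        have : r = a - c * t := by linarith
        rw [this, hb']; linear_combination h
      have hlt : b'.natAbs < c.natAbs := by
        have e : |b'| * |c| = r ^ 2 + 1 := by
          rw [← abs_mul, show b' * c = -(r ^ 2 + 1) by linarith, abs_neg, abs_of_nonneg]
          positivity
        have hc2 : 2 ≤ |c| := by
          rw [Int.abs_eq_natAbs]
          omega
        have : |b'| < |c| := by
          by_contra hcon
          push Not at hcon
          nlinarith
        rw [Int.abs_eq_natAbs, Int.abs_eq_natAbs] at this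
        omega
      obtain ⟨p, q, hpq⟩ := ih r (-c) (-b') (by omega) (by linarith)
      refine ⟨q + t * p, p, ?_⟩
      have : c * (q + t * p) ^ 2 - 2 * a * (q + t * p) * p - b * p ^ 2
          = -b' * p ^ 2 - 2 * r * p * q - -c * q ^ 2 := by
        have : r = a - c * t := by linarith
        rw [this, hb']; ring
      rw [this]
      exact hpq

lemma four_classify {g : G3} (h4 : g ^ 4 = 1) (h2 : g ^ 2 ≠ 1) :
    ∃ k : Fin 6, (k = 0 ∨ k = 1) ∧ ∃ Q : G3, Q * g = E k 1 * Q := by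
  have hh : g ^ 2 * g ^ 2 = 1 := by rw [← pow_add]; exact h4
  obtain ⟨k, hk, Q, hQ⟩ := inv_classify hh h2
  obtain ⟨g', hg'⟩ : ∃ g' : G3, Q * g = g' * Q := ⟨Q * g * Q⁻¹, by simp⟩
  have hsq : g' * g' = E k 2 := by
    have h3 := conj_mul hg' hg'
    rw [← pow_two, hQ] at h3
    exact (mul_right_cancel h3).symm
  have hcomm : g' * E k 2 = E k 2 * g' := by rw [← hsq, mul_assoc]
  suffices H : ∃ k : Fin 6, (k = 0 ∨ k = 1) ∧ ∃ Q : G3, Q * g' = E k 1 * Q by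
    obtain ⟨k', hk', R, hR⟩ := H
    refine ⟨k', hk', R * Q, ?_⟩
    rw [mul_assoc, hg', ← mul_assoc, hR, mul_assoc]
  obtain ⟨κ, hκ⟩ : ∃ κ : ℤ, Emat k 2 = !![1, κ, κ; 0, -1, 0; 0, 0, -1] := by
    rcases hk with rfl | rfl
    · exact ⟨0, by decide⟩
    · exact ⟨1, by decide⟩
  rw [G3_ext_iff, G3_coe_mul, E_coe, hκ] at hsq
  rw [G3_ext_iff, G3_coe_mul, G3_coe_mul, E_coe, hκ] at hcomm
  have hdet := g'.2
  rw [Matrix.det_fin_three] at hdet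
  have S := fun i j => congrFun (congrFun hsq i) j
  have C := fun i j => congrFun (congrFun hcomm i) j
  simp only [mul3_entries] at S C
  have c10 := C 1 0
  have c20 := C 2 0
  simp at c10 c20
  have m10 : g'.1 1 0 = 0 := by linarith
  have m20 : g'.1 2 0 = 0 := by linarith
  have s01 := S 0 1
  have s02 := S 0 2
  have s11 := S 1 1
  have s12 := S 1 2
  have s21 := S 2 1
  have s22 := S 2 2
  simp [m10, m20] at s01 s02 s11 s12 s21 s22
  rw [m10, m20] at hdet
  have e0 : ∃ e, e = g'.1 0 0 := ⟨_, rfl⟩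
  obtain ⟨e, he⟩ := e0
  obtain ⟨x, hx⟩ : ∃ e, e = g'.1 0 1 := ⟨_, rfl⟩
  obtain ⟨y, hy⟩ : ∃ e, e = g'.1 0 2 := ⟨_, rfl⟩
  obtain ⟨a, ha⟩ : ∃ e, e = g'.1 1 1 := ⟨_, rfl⟩
  obtain ⟨b, hb⟩ : ∃ e, e = g'.1 1 2 := ⟨_, rfl⟩
  obtain ⟨c, hc⟩ : ∃ e, e = g'.1 2 1 := ⟨_, rfl⟩
  obtain ⟨d, hd⟩ : ∃ e, e = g'.1 2 2 := ⟨_, rfl⟩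
  rw [← he, ← hx, ← hy, ← ha, ← hc] at s01
  rw [← he, ← hy, ← hx, ← hb, ← hd] at s02
  rw [← ha, ← hb, ← hc] at s11
  rw [← ha, ← hb, ← hd] at s12
  rw [← hc, ← hb, ← hd] at s22
  rw [← he, ← hx, ← hy, ← ha, ← hb, ← hc, ← hd] at hdet
  have hb0 : b ≠ 0 := by
    rintro h0
    rw [h0] at s11
    nlinarith [sq_nonneg a]
  have had : d = -a := by
    have : b * (a + d) = 0 := by linarith
    rcases mul_eq_zero.1 this with h | h
    · exact absurd h hb0
    · linarith
  subst had
  have he1 : e = 1 := by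
    have : -a * a - b * c = 1 := by linarith
    linear_combination hdet - e * this
  subst he1
  obtain ⟨p, q, hpq⟩ := form_unit c.natAbs a b c le_rfl (by linarith)
  have key : ∀ (κ' t : ℤ), 2 * t + κ * (p + q) = κ' → ∀ k : Fin 6,
      Emat k 1 = !![1, 0, κ'; 0, 0, -1; 0, 1, 0] → ∃ Q : G3, Q * g' = E k 1 * Q := by
    intro κ' t hκ' k hk
    obtain ⟨Q, hQ⟩ := conj_of_mat1 (E k 1) g'
      !![1, t, x * p + y * q + t; 0, p, a * p + b * q; 0, q, c * p - a * q]
      (by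
        simp [Matrix.det_fin_three]
        rcases hpq with h | h
        · left; linear_combination h
        · right; linear_combination h)
      (by
        rw [E_coe, hk]
        apply ext9 <;> rw [mul3_entries, mul3_entries] <;>
          simp [m10, m20, ← he, ← hx, ← hy, ← ha, ← hb, ← hc, ← hd]
        · ring
        · linear_combination (-p) * s01 - q * s02 - hκ'
        · linear_combination (-p) * s11
        · ring
        · linear_combination (-q) * s11)
    exact ⟨Q⁻¹, conj_symm hQ⟩
  rcases Int.emod_two_eq_zero_or_one (κ * (p + q)) with hd | hd
  · exact ⟨0, Or.inl rfl, key 0 (-(κ * (p + q) / 2)) (by omega) 0 (by decide)⟩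
  · exact ⟨1, Or.inr rfl, key 1 (-(κ * (p + q) / 2)) (by omega) 1 (by decide)⟩

lemma cent_cyc (k : Fin 6) (hk : k = 0 ∨ k = 1) (x : G3) (hx : x * E k 1 = E k 1 * x) :
    ∃ a, x = E k a := by
  obtain ⟨κ, hκ, hE1, hE2, hE3⟩ : ∃ κ : ℤ, Emat k 1 = !![1, 0, κ; 0, 0, -1; 0, 1, 0] ∧
      Emat k 0 = 1 ∧ Emat k 2 = !![1, κ, κ; 0, -1, 0; 0, 0, -1] ∧
      Emat k 3 = !![1, κ, 0; 0, 0, 1; 0, -1, 0] := by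
    rcases hk with rfl | rfl
    · exact ⟨0, by decide⟩
    · exact ⟨1, by decide⟩
  rw [G3_ext_iff, G3_coe_mul, G3_coe_mul, E_coe, hκ] at hx
  have C := fun i j => congrFun (congrFun hx i) j
  simp only [mul3_entries] at C
  have hdet := x.2
  rw [Matrix.det_fin_three] at hdet
  have c01 := C 0 1
  have c02 := C 0 2
  have c10 := C 1 0
  have c20 := C 2 0
  have c11 := C 1 1
  have c12 := C 1 2
  have c21 := C 2 1
  have c22 := C 2 2
  simp at c01 c02 c10 c20 c11 c12 c21 c22
  have m10 : x.1 1 0 = 0 := by linarith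
  have m20 : x.1 2 0 = 0 := by linarith
  rw [m10] at c12
  rw [m20] at c22
  have m12 : x.1 1 2 = - x.1 2 1 := by linarith
  have m22 : x.1 2 2 = x.1 1 1 := by linarith
  rw [m10, m20, m12, m22] at hdet
  have hu : x.1 0 0 * (x.1 1 1 ^ 2 + x.1 2 1 ^ 2) = 1 := by linarith
  have hs : x.1 1 1 ^ 2 + x.1 2 1 ^ 2 = 1 := by
    rcases Int.isUnit_iff.1 (IsUnit.of_mul_eq_one _ ((mul_comm _ _).trans hu)) with h | h
    · exact h
    · nlinarith [sq_nonneg (x.1 1 1), sq_nonneg (x.1 2 1)]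
  have m00 : x.1 0 0 = 1 := by rw [hs] at hu; linarith
  have b1 : x.1 1 1 ≤ 1 := by nlinarith [sq_nonneg (x.1 2 1)]
  have b2 : -1 ≤ x.1 1 1 := by nlinarith [sq_nonneg (x.1 2 1)]
  have b3 : x.1 2 1 ≤ 1 := by nlinarith [sq_nonneg (x.1 1 1)]
  have b4 : -1 ≤ x.1 2 1 := by nlinarith [sq_nonneg (x.1 1 1)]
  have cases4 : (x.1 1 1 = 1 ∧ x.1 2 1 = 0) ∨ (x.1 1 1 = 0 ∧ x.1 2 1 = 1) ∨
      (x.1 1 1 = -1 ∧ x.1 2 1 = 0) ∨ (x.1 1 1 = 0 ∧ x.1 2 1 = -1) := by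
    generalize x.1 1 1 = u at *
    generalize x.1 2 1 = v at *
    interval_cases u <;> interval_cases v <;> simp at hs ⊢
  rw [m22, m00] at c02
  rcases cases4 with ⟨u, v⟩ | ⟨u, v⟩ | ⟨u, v⟩ | ⟨u, v⟩ <;> rw [u] at m22 c02 <;>
    rw [v] at m12 c01
  · refine ⟨0, (G3_ext_iff _ _).2 ?_⟩
    rw [E_coe, hE1]
    apply ext9 <;> simp [m00, m10, m20, m12, m22, u, v] <;> linarith
  · refine ⟨1, (G3_ext_iff _ _).2 ?_⟩
    rw [E_coe, hκ]
    apply ext9 <;> simp [m00, m10, m20, m12, m22, u, v] <;> linarith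
  · refine ⟨2, (G3_ext_iff _ _).2 ?_⟩
    rw [E_coe, hE2]
    apply ext9 <;> simp [m00, m10, m20, m12, m22, u, v] <;> linarith
  · refine ⟨3, (G3_ext_iff _ _).2 ?_⟩
    rw [E_coe, hE3]
    apply ext9 <;> simp [m00, m10, m20, m12, m22, u, v] <;> linarith

lemma coe_inv_mul (p : G3) : (p⁻¹).1 * p.1 = 1 := by
  rw [← G3_coe_mul]; simp

lemma coe_mul_inv (p : G3) : p.1 * (p⁻¹).1 = 1 := by
  rw [← G3_coe_mul]; simp

/-- An involution is `v w - 1` with `w v = 2` and `v` not even. -/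
lemma inv_vw {h : G3} (h2 : h * h = 1) (h1 : h ≠ 1) :
    ∃ v w : Fin 3 → ℤ, (∀ i j, (1 + h.1) i j = v i * w j) ∧
      w 0 * v 0 + w 1 * v 1 + w 2 * v 2 = 2 ∧ ∃ i, ¬ (2 ∣ v i) := by
  obtain ⟨P, hP, r1, r2⟩ := rank_one_reduce (1 + h.1) (minors_zero h2 h1)
  obtain ⟨p, hp⟩ : ∃ p : G3, p.1 = P := ⟨⟨P, hP⟩, rfl⟩
  have e1 : ∀ i j, (1 + h.1) i j = (p⁻¹).1 i 0 * (P * (1 + h.1)) 0 j := by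
    intro i j
    have : 1 + h.1 = (p⁻¹).1 * (P * (1 + h.1)) := by
      rw [← hp, ← mul_assoc, coe_inv_mul, one_mul]
    conv_lhs => rw [this]
    rw [mul3_entries, r1, r2]
    ring
  refine ⟨fun i => (p⁻¹).1 i 0, fun j => (P * (1 + h.1)) 0 j, e1, ?_, ?_⟩
  · have ht := trace_of_inv h2 h1
    rw [Matrix.trace_fin_three] at ht
    have a0 := e1 0 0
    have a1 := e1 1 1
    have a2 := e1 2 2
    rw [Matrix.add_apply, Matrix.one_apply_eq] at a0 a1 a2
    simp only
    linarith
  · by_contra hcon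
    push Not at hcon
    have h00 := congrFun (congrFun (coe_mul_inv p) 0) 0
    rw [mul3_entries, Matrix.one_apply_eq] at h00
    have d : (2 : ℤ) ∣ 1 := by
      rw [← h00]
      exact dvd_add (dvd_add ((hcon 0).mul_left _) ((hcon 1).mul_left _)) ((hcon 2).mul_left _)
    norm_num at d

/-- Two distinct commuting involutions satisfy `(1 + g) (1 + h) = 0`. -/
lemma pair_zero {g h : G3} (g2 : g * g = 1) (h2 : h * h = 1) (g1 : g ≠ 1) (h1 : h ≠ 1)
    (hgh : g ≠ h) (hc : g * h = h * g) : (1 + g.1) * (1 + h.1) = 0 := by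
  obtain ⟨v, w, e, -, -⟩ := inv_vw g2 g1
  obtain ⟨v', w', e', -, -⟩ := inv_vw h2 h1
  have hcm : (1 + g.1) * (1 + h.1) = (1 + h.1) * (1 + g.1) := by
    have : g.1 * h.1 = h.1 * g.1 := by rw [← G3_coe_mul, hc, G3_coe_mul]
    rw [mul_add, add_mul, add_mul, mul_add, add_mul, add_mul, this]
    simp only [mul_one, one_mul]
    abel
  have tr : ((1 + g.1) * (1 + h.1)).trace = 0 := by
    have gh2 : (g * h) * (g * h) = 1 := by
      calc (g * h) * (g * h) = g * (h * g) * h := by group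
        _ = (g * g) * (h * h) := by rw [← hc]; group
        _ = 1 := by rw [g2, h2, one_mul]
    have gh1 : g * h ≠ 1 := by
      intro hh
      apply hgh
      calc g = g * (h * h) := by rw [h2, mul_one]
        _ = (g * h) * h := by group
        _ = h := by rw [hh, one_mul]
    have t1 := trace_of_inv g2 g1
    have t2 := trace_of_inv h2 h1
    have t3 := trace_of_inv gh2 gh1
    rw [G3_coe_mul] at t3
    rw [mul_add, add_mul, add_mul, mul_one, one_mul, mul_one, Matrix.trace_add, Matrix.trace_add,
      Matrix.trace_add, t1, t2, t3]
    simp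
  have S : ∀ i j, ((1 + g.1) * (1 + h.1)) i j =
      v i * (w 0 * v' 0 + w 1 * v' 1 + w 2 * v' 2) * w' j := by
    intro i j
    rw [mul3_entries, e, e, e, e', e', e']; ring
  have S' : ∀ i j, ((1 + g.1) * (1 + h.1)) i j =
      v' i * (w' 0 * v 0 + w' 1 * v 1 + w' 2 * v 2) * w j := by
    intro i j
    rw [hcm, mul3_entries, e, e, e, e', e', e']; ring
  have : (w 0 * v' 0 + w 1 * v' 1 + w 2 * v' 2) * (w' 0 * v 0 + w' 1 * v 1 + w' 2 * v 2) = 0 := by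
    rw [Matrix.trace_fin_three, S, S, S] at tr
    linarith
  rcases mul_eq_zero.1 this with h0 | h0
  · ext i j; rw [S, h0]; simp
  · ext i j; rw [S', h0]; simp

/-- four element relation -/
lemma klein_sum {g h : G3} (g2 : g * g = 1) (h2 : h * h = 1) (g1 : g ≠ 1) (h1 : h ≠ 1)
    (hgh : g ≠ h) (hc : g * h = h * g) : 1 + g.1 + h.1 + (g * h).1 = 0 := by
  rw [← pair_zero g2 h2 g1 h1 hgh hc, G3_coe_mul, mul_add, add_mul, add_mul]
  simp only [mul_one, one_mul]
  abel

lemma gh_inv {g h : G3} (g2 : g * g = 1) (h2 : h * h = 1) (hc : g * h = h * g) :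
    (g * h) * (g * h) = 1 := by
  calc (g * h) * (g * h) = g * (h * g) * h := by group
    _ = (g * g) * (h * h) := by rw [← hc]; group
    _ = 1 := by rw [g2, h2, one_mul]

lemma gh_ne_one {g h : G3} (h2 : h * h = 1) (hgh : g ≠ h) : g * h ≠ 1 := by
  intro hh
  apply hgh
  calc g = g * (h * h) := by rw [h2, mul_one]
    _ = (g * h) * h := by group
    _ = h := by rw [hh, one_mul]

/-- An elementary abelian 2-subgroup has at most four elements. -/
lemma klein_mem {g h x : G3} (g2 : g * g = 1) (h2 : h * h = 1) (g1 : g ≠ 1) (h1 : h ≠ 1)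
    (hgh : g ≠ h) (hc : g * h = h * g) (x2 : x * x = 1) (xg : g * x = x * g)
    (xh : h * x = x * h) : x = 1 ∨ x = g ∨ x = h ∨ x = g * h := by
  by_contra hcon
  push Not at hcon
  obtain ⟨n1, ng, nh, ngh⟩ := hcon
  have a := pair_zero g2 x2 g1 n1 ng.symm xg
  have b := pair_zero h2 x2 h1 n1 nh.symm xh
  have c := pair_zero (gh_inv g2 h2 hc) x2 (gh_ne_one h2 hgh) n1 ngh.symm
    (by rw [mul_assoc, xh, ← mul_assoc, xg, mul_assoc])
  have k := klein_sum g2 h2 g1 h1 hgh hc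
  have s : (1 + g.1 + (1 + h.1) + (1 + (g * h).1)) * (1 + x.1) = 0 := by
    rw [add_mul, add_mul, a, b, c]; simp
  have e : 1 + g.1 + (1 + h.1) + (1 + (g * h).1) = (2 : ℤ) • (1 : M3) := by
    have : 1 + g.1 + (1 + h.1) + (1 + (g * h).1) = (1 + g.1 + h.1 + (g * h).1) + (2 : ℤ) • 1 := by
      rw [two_smul]; abel
    rw [this, k, zero_add]
  rw [e, Matrix.smul_mul, one_mul] at s
  have t : ∀ i j, x.1 i j = - (1 : M3) i j := by
    intro i j
    have := congrFun (congrFun s i) j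
    simp only [Matrix.smul_apply, Matrix.add_apply, Matrix.zero_apply, smul_eq_mul] at this
    linarith
  have hd := x.2
  rw [Matrix.det_fin_three] at hd
  simp only [t] at hd
  revert hd
  decide

/-- the sign matrices -/
def Dl (i : Fin 3) : M3 := Matrix.diagonal (fun j => if j = i then 1 else -1)

lemma klein_WB (h : Fin 3 → G3) (hi : ∀ i, h i * h i = 1) (h1 : ∀ i, h i ≠ 1)
    (hp : ∀ i j, i ≠ j → (1 + (h i).1) * (1 + (h j).1) = 0)
    (hs : 1 + (h 0).1 + (h 1).1 + (h 2).1 = 0) :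
    ∃ W B : M3, W * B = (2 : ℤ) • 1 ∧ B * W = (2 : ℤ) • 1 ∧ (∀ i, W * (h i).1 = Dl i * W) ∧
      ∀ i, ∃ j, ¬ (2 ∣ B j i) := by
  choose v w e t o using fun i => inv_vw (hi i) (h1 i)
  have hw : ∀ i, ∃ j, w i j ≠ 0 := by
    intro i
    by_contra hcon
    push Not at hcon
    have := t i
    rw [hcon, hcon, hcon] at this
    simp at this
  have orth : ∀ i j, i ≠ j → w i 0 * v j 0 + w i 1 * v j 1 + w i 2 * v j 2 = 0 := by
    intro i j hij
    obtain ⟨a, ha⟩ := o i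
    obtain ⟨b, hb⟩ := hw j
    have := congrFun (congrFun (hp i j hij) a) b
    rw [mul3_entries, e, e, e, e, e, e, Matrix.zero_apply] at this
    have h3 : v i a * (w i 0 * v j 0 + w i 1 * v j 1 + w i 2 * v j 2) * w j b = 0 := by
      linarith
    have ha' : v i a ≠ 0 := by
      intro h0
      rw [h0] at ha
      simp at ha
    simpa [ha', hb] using h3
  refine ⟨Matrix.of w, Matrix.of (fun j i => v i j), ?_, ?_, ?_, o⟩
  · ext i j
    rw [mul3_entries]
    simp only [Matrix.of_apply, Matrix.smul_apply, smul_eq_mul]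
    by_cases hij : i = j
    · subst hij
      rw [t i, Matrix.one_apply_eq]; norm_num
    · rw [orth i j hij, Matrix.one_apply_ne hij]; norm_num
  · ext i j
    rw [mul3_entries]
    simp only [Matrix.of_apply, Matrix.smul_apply, smul_eq_mul]
    rw [← e, ← e, ← e]
    have := congrFun (congrFun hs i) j
    simp only [Matrix.add_apply, Matrix.zero_apply] at this ⊢
    linarith
  · intro k
    have hk : ∀ i j, (h k).1 i j = v k i * w k j - (1 : M3) i j := by
      intro i j
      have := e k i j
      rw [Matrix.add_apply] at this
      linarith
    ext i j
    rw [Dl, Matrix.diagonal_mul]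
    have : (Matrix.of w * (h k).1) i j =
        (w i 0 * v k 0 + w i 1 * v k 1 + w i 2 * v k 2) * w k j - w i j := by
      rw [mul3_entries, hk, hk, hk]
      simp only [Matrix.of_apply]
      have e1 : w i 0 * (1 : M3) 0 j + w i 1 * (1 : M3) 1 j + w i 2 * (1 : M3) 2 j = w i j := by
        have h3 := congrFun (congrFun (mul_one (Matrix.of w : M3)) i) j
        rw [mul3_entries] at h3
        exact h3
      linear_combination -e1
    rw [this]
    simp only [Matrix.of_apply]
    by_cases hik : i = k
    · subst hik
      rw [t i, if_pos rfl]; ring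
    · rw [orth i k hik, if_neg hik]; ring

lemma klein_finish (h : Fin 3 → G3) (W K : M3)
    (hK : K.det ≠ 0) (hWh : ∀ i, W * (h i).1 = Dl i * W) (c : Fin 6) (s : Fin 3 → Fin 4)
    (hs : ∀ i, K * Emat c (s i) = Dl i * K)
    (hin : ∀ x : Fin 3 → ℤ, ∃ y : Fin 3 → ℤ, K.mulVec y = W.mulVec x)
    (hout : ∀ x : Fin 3 → ℤ, ∃ y : Fin 3 → ℤ, W.mulVec y = K.mulVec x) :
    ∃ Q : G3, ∀ i, Q * h i = E c (s i) * Q := by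
  have fac : ∀ A B : M3, (∀ x : Fin 3 → ℤ, ∃ y : Fin 3 → ℤ, A.mulVec y = B.mulVec x) →
      ∃ X : M3, A * X = B := by
    intro A B hAB
    choose f hf using fun j : Fin 3 => hAB (Pi.single j 1)
    refine ⟨Matrix.of (fun i j => f j i), ?_⟩
    ext i j
    have := congrFun (hf j) i
    rw [Matrix.mulVec_single_one] at this
    simpa [Matrix.mulVec, dotProduct, Matrix.mul_apply] using this
  obtain ⟨X, hX⟩ := fac K W hin
  obtain ⟨Y, hY⟩ := fac W K hout
  have cancel : ∀ A B : M3, K * A = K * B → A = B := by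
    intro A B hAB
    have h2 : K.adjugate * (K * A) = K.adjugate * (K * B) := by rw [hAB]
    rw [← mul_assoc, ← mul_assoc, Matrix.adjugate_mul, Matrix.smul_mul, Matrix.smul_mul, one_mul,
      one_mul] at h2
    exact smul_right_injective _ hK h2
  have hXY : X * Y = 1 := by
    apply cancel
    rw [← mul_assoc, hX, hY, mul_one]
  have hXd : IsUnit X.det := by
    have : X.det * Y.det = 1 := by rw [← Matrix.det_mul, hXY, Matrix.det_one]
    exact IsUnit.of_mul_eq_one _ this
  apply conj_of_mat _ _ X (Int.isUnit_iff.1 hXd)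
  intro i
  apply cancel
  rw [E_coe, ← mul_assoc, hX, hWh, ← mul_assoc, hs, mul_assoc, hX]

lemma klein_core (h : Fin 3 → G3) (W B : M3) (hWB : W * B = (2 : ℤ) • 1)
    (hBW : B * W = (2 : ℤ) • 1) (hWh : ∀ i, W * (h i).1 = Dl i * W)
    (hB : ∀ i, ∃ j, ¬ (2 ∣ B j i)) :
    ∃ (c : Fin 6) (s : Fin 3 → Fin 4), 2 ≤ c ∧ s 0 ≠ 0 ∧ s 1 ≠ 0 ∧ s 0 ≠ s 1 ∧
      ∃ Q : G3, ∀ i, Q * h i = E c (s i) * Q := by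
  obtain ⟨q, hq⟩ : ∃ q : ℤ → ℤ → ℤ → Prop, ∀ a b c, q a b c ↔ ∃ m, W.mulVec m = ![a, b, c] :=
    ⟨fun a b c => ∃ m, W.mulVec m = ![a, b, c], fun _ _ _ => Iff.rfl⟩
  have qadd : ∀ {a b c a' b' c'}, q a b c → q a' b' c' → q (a + a') (b + b') (c + c') := by
    intro a b c a' b' c' h1 h2
    rw [hq] at *
    obtain ⟨m, hm⟩ := h1
    obtain ⟨m', hm'⟩ := h2
    exact ⟨m + m', by rw [Matrix.mulVec_add, hm, hm']; simp⟩
  have qtwo : ∀ a b c, q (2 * a) (2 * b) (2 * c) := by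
    intro a b c
    rw [hq]
    refine ⟨B.mulVec ![a, b, c], ?_⟩
    rw [Matrix.mulVec_mulVec, hWB, Matrix.smul_mulVec, Matrix.one_mulVec]
    simp
  have qpar : ∀ {a b c} (a' b' c' : ℤ), q a b c → a % 2 = a' % 2 → b % 2 = b' % 2 →
      c % 2 = c' % 2 → q a' b' c' := by
    intro a b c a' b' c' h0 h1 h2 h3
    have := qadd h0 (qtwo ((a' - a) / 2) ((b' - b) / 2) ((c' - c) / 2))
    rwa [show a + 2 * ((a' - a) / 2) = a' by omega, show b + 2 * ((b' - b) / 2) = b' by omega,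
      show c + 2 * ((c' - c) / 2) = c' by omega] at this
  have noe : ∀ i : Fin 3, ¬ ∃ m, W.mulVec m = Pi.single i 1 := by
    rintro i ⟨m, hm⟩
    obtain ⟨j, hj⟩ := hB i
    apply hj
    have h3 : B.mulVec (W.mulVec m) = B.mulVec (Pi.single i 1) := by rw [hm]
    rw [Matrix.mulVec_mulVec, hBW, Matrix.smul_mulVec, Matrix.one_mulVec,
      Matrix.mulVec_single_one] at h3
    have h4 := congrFun h3 j
    simp at h4
    exact ⟨m j, h4.symm⟩
  have n0 : ¬ q 1 0 0 := by
    rw [hq]; rw [show (![1, 0, 0] : Fin 3 → ℤ) = Pi.single 0 1 by decide]; exact noe 0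
  have n1 : ¬ q 0 1 0 := by
    rw [hq]; rw [show (![0, 1, 0] : Fin 3 → ℤ) = Pi.single 1 1 by decide]; exact noe 1
  have n2 : ¬ q 0 0 1 := by
    rw [hq]; rw [show (![0, 0, 1] : Fin 3 → ℤ) = Pi.single 2 1 by decide]; exact noe 2
  have bits : ∀ {a b c}, q a b c → q (a % 2) (b % 2) (c % 2) := by
    intro a b c h0
    exact qpar _ _ _ h0 (by omega) (by omega) (by omega)
  have q0 : q 0 0 0 := qtwo 0 0 0
  have fin : ∀ (k00 k01 k02 k10 k11 k12 k20 k21 k22 : ℤ) (c : Fin 6) (s : Fin 3 → Fin 4),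
      (!![k00, k01, k02; k10, k11, k12; k20, k21, k22] : M3).det ≠ 0 →
      (∀ i, !![k00, k01, k02; k10, k11, k12; k20, k21, k22] * Emat c (s i) =
        Dl i * !![k00, k01, k02; k10, k11, k12; k20, k21, k22]) →
      (2 ≤ c ∧ s 0 ≠ 0 ∧ s 1 ≠ 0 ∧ s 0 ≠ s 1) →
      (∀ a b c, q a b c → q (a % 2) (b % 2) (c % 2) →
        ∃ x y z : ℤ, k00 * x + k01 * y + k02 * z = a ∧
        k10 * x + k11 * y + k12 * z = b ∧ k20 * x + k21 * y + k22 * z = c) →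
      (∀ x y z : ℤ, q (k00 * x + k01 * y + k02 * z) (k10 * x + k11 * y + k12 * z)
        (k20 * x + k21 * y + k22 * z)) →
      ∃ (c : Fin 6) (s : Fin 3 → Fin 4), 2 ≤ c ∧ s 0 ≠ 0 ∧ s 1 ≠ 0 ∧ s 0 ≠ s 1 ∧
        ∃ Q : G3, ∀ i, Q * h i = E c (s i) * Q := by
    intro k00 k01 k02 k10 k11 k12 k20 k21 k22 c s hK hs hc hqK hqK'
    have v3 : ∀ f : Fin 3 → ℤ, ![f 0, f 1, f 2] = f := by
      intro f; ext i; fin_cases i <;> rfl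
    refine ⟨c, s, hc.1, hc.2.1, hc.2.2.1, hc.2.2.2, klein_finish h W _ hK hWh c s hs ?_ ?_⟩
    · intro x
      have hx := (hq (W.mulVec x 0) (W.mulVec x 1) (W.mulVec x 2)).2 ⟨x, (v3 _).symm⟩
      obtain ⟨a, b, d, e1, e2, e3⟩ := hqK _ _ _ hx (bits hx)
      refine ⟨![a, b, d], ?_⟩
      rw [← v3 (W.mulVec x), ← e1, ← e2, ← e3]
      ext i
      fin_cases i <;> simp [Matrix.mulVec, dotProduct, Fin.sum_univ_three]
    · intro x
      obtain ⟨m, hm⟩ := (hq _ _ _).1 (hqK' (x 0) (x 1) (x 2))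
      refine ⟨m, hm.trans ?_⟩
      ext i
      fin_cases i <;> simp [Matrix.mulVec, dotProduct, Fin.sum_univ_three]
  by_cases q7 : q 1 1 1
  · have m0 : ¬ q 0 1 1 := fun h0 => n0 (qpar _ _ _ (qadd q7 h0) rfl rfl rfl)
    have m1 : ¬ q 1 0 1 := fun h0 => n1 (qpar _ _ _ (qadd q7 h0) rfl rfl rfl)
    have m2 : ¬ q 1 1 0 := fun h0 => n2 (qpar _ _ _ (qadd q7 h0) rfl rfl rfl)
    refine fin 1 0 0 1 2 0 1 0 2 4 ![1, 2, 3] (by rw [Matrix.det_fin_three]; decide)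
      (by unfold Dl; decide) (by decide) ?_ ?_
    · intro a b c h0 h1
      rcases Int.emod_two_eq_zero_or_one a with ha | ha <;>
        rcases Int.emod_two_eq_zero_or_one b with hb | hb <;>
        rcases Int.emod_two_eq_zero_or_one c with hc | hc <;> rw [ha, hb, hc] at h1 <;>
        first
        | contradiction
        | exact ⟨a, (b - a) / 2, (c - a) / 2, by omega, by omega, by omega⟩
    · intro x y z
      rcases Int.emod_two_eq_zero_or_one x with ha | ha <;>
        rcases Int.emod_two_eq_zero_or_one y with hb | hb <;>
        first
        | exact qpar _ _ _ q0 (by omega) (by omega) (by omega)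
        | exact qpar _ _ _ q7 (by omega) (by omega) (by omega)
  have cF : q 0 1 1 → q 1 0 1 → q 1 1 0 → ∃ (c : Fin 6) (s : Fin 3 → Fin 4), 2 ≤ c ∧ s 0 ≠ 0 ∧
      s 1 ≠ 0 ∧ s 0 ≠ s 1 ∧ ∃ Q : G3, ∀ i, Q * h i = E c (s i) * Q := by
    intro q1 q2 q3
    refine fin 1 1 0 1 0 0 0 1 2 5 ![1, 2, 3] (by rw [Matrix.det_fin_three]; decide)
      (by unfold Dl; decide) (by decide) ?_ ?_
    · intro a b c h0 h1
      rcases Int.emod_two_eq_zero_or_one a with ha | ha <;>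
        rcases Int.emod_two_eq_zero_or_one b with hb | hb <;>
        rcases Int.emod_two_eq_zero_or_one c with hc | hc <;> rw [ha, hb, hc] at h1 <;>
        first
        | contradiction
        | exact ⟨b, a - b, (c - a + b) / 2, by omega, by omega, by omega⟩
    · intro x y z
      rcases Int.emod_two_eq_zero_or_one x with ha | ha <;>
        rcases Int.emod_two_eq_zero_or_one y with hb | hb <;>
        first
        | exact qpar _ _ _ q0 (by omega) (by omega) (by omega)
        | exact qpar _ _ _ q1 (by omega) (by omega) (by omega)
        | exact qpar _ _ _ q2 (by omega) (by omega) (by omega)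
        | exact qpar _ _ _ q3 (by omega) (by omega) (by omega)
  by_cases q1 : q 0 1 1
  · by_cases q2 : q 1 0 1
    · exact cF q1 q2 (qpar _ _ _ (qadd q1 q2) rfl rfl rfl)
    by_cases q3 : q 1 1 0
    · exact cF q1 (qpar _ _ _ (qadd q1 q3) rfl rfl rfl) q3
    refine fin 0 0 2 1 0 0 1 2 0 3 ![3, 1, 2] (by rw [Matrix.det_fin_three]; decide)
      (by unfold Dl; decide) (by decide) ?_ ?_
    · intro a b c h0 h1
      rcases Int.emod_two_eq_zero_or_one a with ha | ha <;>
        rcases Int.emod_two_eq_zero_or_one b with hb | hb <;>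
        rcases Int.emod_two_eq_zero_or_one c with hc | hc <;> rw [ha, hb, hc] at h1 <;>
        first
        | contradiction
        | exact ⟨b, (c - b) / 2, a / 2, by omega, by omega, by omega⟩
    · intro x y z
      rcases Int.emod_two_eq_zero_or_one x with ha | ha <;>
        rcases Int.emod_two_eq_zero_or_one y with hb | hb <;>
        first
        | exact qpar _ _ _ q0 (by omega) (by omega) (by omega)
        | exact qpar _ _ _ q1 (by omega) (by omega) (by omega)
  by_cases q2 : q 1 0 1
  · by_cases q3 : q 1 1 0
    · exact cF (qpar _ _ _ (qadd q2 q3) rfl rfl rfl) q2 q3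
    refine fin 1 0 0 0 0 2 1 2 0 3 ![1, 3, 2] (by rw [Matrix.det_fin_three]; decide)
      (by unfold Dl; decide) (by decide) ?_ ?_
    · intro a b c h0 h1
      rcases Int.emod_two_eq_zero_or_one a with ha | ha <;>
        rcases Int.emod_two_eq_zero_or_one b with hb | hb <;>
        rcases Int.emod_two_eq_zero_or_one c with hc | hc <;> rw [ha, hb, hc] at h1 <;>
        first
        | contradiction
        | exact ⟨a, (c - a) / 2, b / 2, by omega, by omega, by omega⟩
    · intro x y z
      rcases Int.emod_two_eq_zero_or_one x with ha | ha <;>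
        rcases Int.emod_two_eq_zero_or_one y with hb | hb <;>
        first
        | exact qpar _ _ _ q0 (by omega) (by omega) (by omega)
        | exact qpar _ _ _ q2 (by omega) (by omega) (by omega)
  by_cases q3 : q 1 1 0
  · refine fin 1 0 0 1 2 0 0 0 2 3 ![1, 2, 3] (by rw [Matrix.det_fin_three]; decide)
      (by unfold Dl; decide) (by decide) ?_ ?_
    · intro a b c h0 h1
      rcases Int.emod_two_eq_zero_or_one a with ha | ha <;>
        rcases Int.emod_two_eq_zero_or_one b with hb | hb <;>
        rcases Int.emod_two_eq_zero_or_one c with hc | hc <;> rw [ha, hb, hc] at h1 <;>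
        first
        | contradiction
        | exact ⟨a, (b - a) / 2, c / 2, by omega, by omega, by omega⟩
    · intro x y z
      rcases Int.emod_two_eq_zero_or_one x with ha | ha <;>
        rcases Int.emod_two_eq_zero_or_one y with hb | hb <;>
        first
        | exact qpar _ _ _ q0 (by omega) (by omega) (by omega)
        | exact qpar _ _ _ q3 (by omega) (by omega) (by omega)
  refine fin 2 0 0 0 2 0 0 0 2 2 ![1, 2, 3] (by rw [Matrix.det_fin_three]; decide)
    (by unfold Dl; decide) (by decide) ?_ ?_
  · intro a b c h0 h1
    rcases Int.emod_two_eq_zero_or_one a with ha | ha <;>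
      rcases Int.emod_two_eq_zero_or_one b with hb | hb <;>
      rcases Int.emod_two_eq_zero_or_one c with hc | hc <;> rw [ha, hb, hc] at h1 <;>
      first
      | contradiction
      | exact ⟨a / 2, b / 2, c / 2, by omega, by omega, by omega⟩
  · intro x y z
    rcases Int.emod_two_eq_zero_or_one x with ha | ha <;>
      rcases Int.emod_two_eq_zero_or_one y with hb | hb <;>
      first
      | exact qpar _ _ _ q0 (by omega) (by omega) (by omega)

/-- Classification of pairs of distinct commuting involutions. -/
lemma klein_classify {g h : G3} (g2 : g * g = 1) (h2 : h * h = 1) (g1 : g ≠ 1) (h1 : h ≠ 1)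
    (hgh : g ≠ h) (hc : g * h = h * g) :
    ∃ (c : Fin 6) (a b : Fin 4), 2 ≤ c ∧ a ≠ 0 ∧ b ≠ 0 ∧ a ≠ b ∧
      ∃ Q : G3, Q * g = E c a * Q ∧ Q * h = E c b * Q := by
  have k2 := gh_inv g2 h2 hc
  have k1 : g * h ≠ 1 := gh_ne_one h2 hgh
  have kg : g ≠ g * h := fun h0 => h1 (by simpa using h0.symm)
  have kh : h ≠ g * h := fun h0 => g1 (by simpa using h0.symm)
  have cg : g * (g * h) = (g * h) * g := by rw [hc, ← mul_assoc, hc]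
  have ch : h * (g * h) = (g * h) * h := by rw [← mul_assoc, ← hc]
  obtain ⟨W, B, e1, e2, e3, e4⟩ := klein_WB ![g, h, g * h]
    (by intro i; fin_cases i <;> assumption) (by intro i; fin_cases i <;> assumption)
    (by
      intro i j hij
      fin_cases i <;> fin_cases j
      · exact absurd rfl hij
      · exact pair_zero g2 h2 g1 h1 hgh hc
      · exact pair_zero g2 k2 g1 k1 kg cg
      · exact pair_zero h2 g2 h1 g1 hgh.symm hc.symm
      · exact absurd rfl hij
      · exact pair_zero h2 k2 h1 k1 kh ch
      · exact pair_zero k2 g2 k1 g1 kg.symm cg.symm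
      · exact pair_zero k2 h2 k1 h1 kh.symm ch.symm
      · exact absurd rfl hij)
    (klein_sum g2 h2 g1 h1 hgh hc)
  obtain ⟨c, s, hc2, s0, s1, s01, Q, hQ⟩ := klein_core _ W B e1 e2 e3 e4
  exact ⟨c, s 0, s 1, hc2, s0, s1, s01, Q, hQ 0, hQ 1⟩

/-- Every tuple is conjugate to a standard one. -/
lemma surj_std {n : ℕ} (t : Fin n → G3) (hc : ∀ i j, t i * t j = t j * t i)
    (h4 : ∀ i, t i ^ 4 = 1) :
    ∃ (c : Fin 6) (x : Fin n → Fin 4), Good c x ∧ ∃ Q : G3, ∀ i, Q * t i = E c (x i) * Q := by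
  by_cases hsq : ∃ i, t i ^ 2 ≠ 1
  · obtain ⟨i, hi⟩ := hsq
    obtain ⟨k, hk, Q, hQ⟩ := four_classify (h4 i) hi
    have hall : ∀ j, ∃ a, Q * t j * Q⁻¹ = E k a := by
      intro j
      apply cent_cyc k hk
      have e : E k 1 = Q * t i * Q⁻¹ := by rw [hQ]; simp
      rw [e]
      calc Q * t j * Q⁻¹ * (Q * t i * Q⁻¹) = Q * (t j * t i) * Q⁻¹ := by group
        _ = Q * (t i * t j) * Q⁻¹ := by rw [hc]
        _ = _ := by group
    choose x hx using hall
    have hxi : x i ≠ 0 := by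
      intro h0
      have := hx i
      rw [h0, E_zero] at this
      have h1 : t i = 1 := by
        have h3 : Q * t i = Q := by simpa using mul_inv_eq_one.1 this
        simpa using h3
      exact hi (by rw [h1, one_pow])
    refine ⟨k, x, ?_, Q, fun j => ?_⟩
    · rcases hk with rfl | rfl
      · simp [Good]
      · simp [Good]; exact ⟨i, hxi⟩
    · rw [← hx]; simp
  push Not at hsq
  have hs : ∀ i, t i * t i = 1 := fun i => by rw [← pow_two]; exact hsq i
  by_cases h1 : ∃ i, t i ≠ 1
  · obtain ⟨i, hi⟩ := h1
    by_cases h2 : ∃ j, t j ≠ 1 ∧ t j ≠ t i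
    · obtain ⟨j, hj, hji⟩ := h2
      obtain ⟨c, a, b, hc2, ha, hb, hab, Q, qa, qb⟩ :=
        klein_classify (hs i) (hs j) hi hj hji.symm (hc i j)
      have hall : ∀ k, ∃ d, Q * t k = E c d * Q := by
        intro k
        rcases klein_mem (hs i) (hs j) hi hj hji.symm (hc i j) (hs k) (hc i k) (hc j k)
          with h0 | h0 | h0 | h0 <;> rw [h0]
        · exact ⟨0, by rw [E_zero]; simp⟩
        · exact ⟨a, qa⟩
        · exact ⟨b, qb⟩
        · exact ⟨lmul c a b, by rw [← E_mul]; exact conj_mul qa qb⟩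
      choose x hx using hall
      have hxi : x i = a := by
        have := hx i
        rw [qa] at this
        exact ((E_eq_iff c _ _).1 (mul_right_cancel this)).symm
      have hxj : x j = b := by
        have := hx j
        rw [qb] at this
        exact ((E_eq_iff c _ _).1 (mul_right_cancel this)).symm
      refine ⟨c, x, ?_, Q, hx⟩
      have c0 : c ≠ 0 := by rintro rfl; revert hc2; decide
      have c1 : c ≠ 1 := by rintro rfl; revert hc2; decide
      simp only [Good, c0, c1, if_false]
      exact ⟨i, j, by rw [hxi]; exact ha, by rw [hxj]; exact hb, by rw [hxi, hxj]; exact hab⟩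
    · push Not at h2
      obtain ⟨k, hk, Q, hQ⟩ := inv_classify (hs i) hi
      have hall : ∀ j, ∃ d, Q * t j = E k d * Q := by
        intro j
        by_cases hj : t j = 1
        · exact ⟨0, by rw [E_zero, hj]; simp⟩
        · exact ⟨2, by rw [h2 j hj, hQ]⟩
      choose x hx using hall
      refine ⟨k, x, ?_, Q, hx⟩
      have hxi : x i ≠ 0 := by
        intro h0
        have := hx i
        rw [h0, E_zero] at this
        exact hi (by simpa using this)
      rcases hk with rfl | rfl
      · simp [Good]
      · simp [Good]; exact ⟨i, hxi⟩
  · push Not at h1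
    exact ⟨0, fun _ => 0, by simp [Good], 1, fun i => by rw [h1, E_zero]⟩

lemma std_mem {n : ℕ} (c : Fin 6) (x : Fin n → Fin 4) : (fun i => E c (x i)) ∈ pTuples G3 2 n := by
  refine ⟨fun i j => E_comm c _ _, fun i => ?_⟩
  have : orderOf (E c (x i)) ∣ 2 ^ 2 := orderOf_dvd_of_pow_eq_one (E_pow_four c _)
  obtain ⟨k, -, hk⟩ := (Nat.dvd_prime_pow Nat.prime_two).1 this
  exact ⟨k, hk⟩

lemma tupleConj_equiv {n : ℕ} : Equivalence (tupleConj (pTuples G3 2 n)) := by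
  refine ⟨fun a => ⟨1, fun i => by simp⟩, ?_, ?_⟩
  · rintro a b ⟨g, hg⟩
    exact ⟨g⁻¹, fun i => by rw [← hg]; group⟩
  · rintro a b c ⟨g, hg⟩ ⟨h, hh⟩
    exact ⟨h * g, fun i => by rw [← hh, ← hg]; group⟩

/-- raw standard data -/
abbrev Raw (n : ℕ) := Fin 6 × (Fin n → Fin 4)

/-- orbit of standard data -/
def orb {n : ℕ} (s : Raw n) : Quot (tupleConj (pTuples G3 2 n)) :=
  Quot.mk _ ⟨fun i => E s.1 (s.2 i), std_mem s.1 s.2⟩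

lemma orb_surj {n : ℕ} (o : Quot (tupleConj (pTuples G3 2 n))) :
    ∃ s : Raw n, Good s.1 s.2 ∧ orb s = o := by
  obtain ⟨t, rfl⟩ := Quot.exists_rep o
  obtain ⟨c, x, hg, Q, hQ⟩ := surj_std t.1 (fun i j => t.2.1 i j) (fun i => by
    obtain ⟨k, hk⟩ := t.2.2 i
    exact pow_four_of_two_pow k (by rw [← hk]; exact pow_orderOf_eq_one _))
  refine ⟨(c, x), hg, ?_⟩
  apply (Quot.sound _).symm
  exact ⟨Q, fun i => by rw [hQ i]; simp⟩

lemma orb_eq_iff {n : ℕ} (s s' : Raw n) (h : Good s.1 s.2) (h' : Good s'.1 s'.2) :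
    orb s = orb s' ↔ s.1 = s'.1 ∧ ∃ σ ∈ W s.1, s'.2 = σ ∘ s.2 := by
  constructor
  · intro he
    have := Quot.eqvGen_exact he
    rw [tupleConj_equiv.eqvGen_iff] at this
    obtain ⟨g, hg⟩ := this
    refine conj_classify s.1 s'.1 s.2 s'.2 h h' g (fun i => ?_)
    have := hg i
    simp only at this
    rw [← this]; simp
  · rintro ⟨hc, σ, hσ, hx⟩
    obtain ⟨c, x⟩ := s
    obtain ⟨c', x'⟩ := s'
    simp only at hc hx hσ
    subst hc hx
    obtain ⟨Q, hQ⟩ := real_W c σ hσ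
    apply Quot.sound
    refine ⟨Q, fun i => ?_⟩
    simp only [Function.comp]
    rw [hQ]; simp

open Classical in
lemma card_eq_sum_fiber {α β : Type*} [Fintype α] [Fintype β] (X : Finset α) (f : α → β)
    (hf : ∀ b, ∃ a ∈ X, f a = b) :
    (Fintype.card β : ℚ) = ∑ a ∈ X, (1 : ℚ) / ((X.filter (fun a' => f a' = f a)).card : ℚ) := by
  rw [← Finset.sum_fiberwise X f]
  have : ∀ b : β, ∑ a ∈ X.filter (fun a => f a = b),
      (1 : ℚ) / ((X.filter (fun a' => f a' = f a)).card : ℚ) = 1 := by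
    intro b
    obtain ⟨a0, h0, h1⟩ := hf b
    have hne : ((X.filter (fun a' => f a' = b)).card : ℚ) ≠ 0 := by
      rw [Nat.cast_ne_zero, ← Nat.pos_iff_ne_zero, Finset.card_pos]
      exact ⟨a0, by simp [h0, h1]⟩
    rw [Finset.sum_congr rfl (g := fun _ => (1 : ℚ) / ((X.filter (fun a' => f a' = b)).card : ℚ))]
    · rw [Finset.sum_const, nsmul_eq_mul]
      field_simp
    · intro a ha
      rw [(Finset.mem_filter.1 ha).2]
  rw [Finset.sum_congr rfl (fun b _ => this b)]
  simp

set_option maxRecDepth 100000 in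
lemma W_zero : ∀ c : Fin 6, ∀ σ ∈ W c, ∀ a, σ a = 0 ↔ a = 0 := by decide

set_option maxRecDepth 100000 in
lemma W_inj : ∀ c : Fin 6, ∀ σ ∈ W c, ∀ a b, σ a = σ b → a = b := by decide

set_option maxRecDepth 100000 in
lemma W_faithful : ∀ c : Fin 6, ∀ σ ∈ W c, ∀ τ ∈ W c, ∀ a b, a ≠ 0 → b ≠ 0 → a ≠ b →
    σ a = τ a → σ b = τ b → σ = τ := by decide

set_option maxRecDepth 100000 in
lemma W_faithful' : ∀ c : Fin 6, (c = 0 ∨ c = 1) → ∀ σ ∈ W c, ∀ τ ∈ W c, ∀ a, a ≠ 0 → a ≠ 2 →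
    σ a = τ a → σ = τ := by decide

set_option maxRecDepth 100000 in
lemma W_even : ∀ c : Fin 6, (c = 0 ∨ c = 1) → ∀ σ ∈ W c, ∀ a, (a = 0 ∨ a = 2) → σ a = a := by
  decide

set_option maxRecDepth 100000 in
lemma W_nonempty : ∀ c : Fin 6, (W c).Nonempty := by decide

lemma Gen_comp {n : ℕ} {c : Fin 6} {σ : Fin 4 → Fin 4} (hσ : σ ∈ W c) {x : Fin n → Fin 4}
    (h : Gen x) : Gen (σ ∘ x) := by
  obtain ⟨i, j, h1, h2, h3⟩ := h
  exact ⟨i, j, fun h0 => h1 ((W_zero c σ hσ _).1 h0), fun h0 => h2 ((W_zero c σ hσ _).1 h0),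
    fun h0 => h3 (W_inj c σ hσ _ _ h0)⟩

lemma Good_comp {n : ℕ} {c : Fin 6} {σ : Fin 4 → Fin 4} (hσ : σ ∈ W c) {x : Fin n → Fin 4}
    (h : Good c x) : Good c (σ ∘ x) := by
  unfold Good at *
  by_cases h0 : c = 0
  · rw [if_pos h0]; trivial
  · rw [if_neg h0] at *
    by_cases h1 : c = 1
    · rw [if_pos h1] at *
      obtain ⟨i, hi⟩ := h
      exact ⟨i, fun h0 => hi ((W_zero c σ hσ _).1 h0)⟩
    · rw [if_neg h1] at *
      exact Gen_comp hσ h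

/-- size of the set of relabelings of `x` -/
def msz {n : ℕ} (c : Fin 6) (x : Fin n → Fin 4) : ℕ := ((W c).image (fun σ => σ ∘ x)).card

lemma msz_gen {n : ℕ} (c : Fin 6) (x : Fin n → Fin 4) (h : Gen x) : msz c x = (W c).card := by
  apply Finset.card_image_of_injOn
  intro σ hσ τ hτ he
  obtain ⟨i, j, h1, h2, h3⟩ := h
  exact W_faithful c σ hσ τ hτ _ _ h1 h2 h3 (congrFun he i) (congrFun he j)

lemma msz_odd {n : ℕ} (c : Fin 6) (hc : c = 0 ∨ c = 1) (x : Fin n → Fin 4)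
    (h : ¬ ∀ i, x i = 0 ∨ x i = 2) : msz c x = (W c).card := by
  push Not at h
  obtain ⟨i, h1, h2⟩ := h
  apply Finset.card_image_of_injOn
  intro σ hσ τ hτ he
  exact W_faithful' c hc σ hσ τ hτ _ h1 h2 (congrFun he i)

lemma msz_even {n : ℕ} (c : Fin 6) (hc : c = 0 ∨ c = 1) (x : Fin n → Fin 4)
    (h : ∀ i, x i = 0 ∨ x i = 2) : msz c x = 1 := by
  rw [msz, Finset.card_eq_one]
  refine ⟨x, ?_⟩
  rw [Finset.eq_singleton_iff_nonempty_unique_mem]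
  refine ⟨(W_nonempty c).image _, ?_⟩
  intro y hy
  obtain ⟨σ, hσ, rfl⟩ := Finset.mem_image.1 hy
  funext i
  exact W_even c hc σ hσ _ (h i)

open Classical in
lemma card_orb_sum (n : ℕ) : (Nat.card (Quot (tupleConj (pTuples G3 2 n))) : ℚ) =
    ∑ c : Fin 6, ∑ x : Fin n → Fin 4, if Good c x then (1 : ℚ) / (msz c x : ℚ) else 0 := by
  have : Finite (Quot (tupleConj (pTuples G3 2 n))) :=
    Finite.of_surjective (orb : Raw n → _) (fun o => by
      obtain ⟨s, -, hs⟩ := orb_surj o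
      exact ⟨s, hs⟩)
  have := Fintype.ofFinite (Quot (tupleConj (pTuples G3 2 n)))
  rw [Nat.card_eq_fintype_card, card_eq_sum_fiber
    ((Finset.univ : Finset (Raw n)).filter (fun s => Good s.1 s.2)) orb (fun o => by
      obtain ⟨s, hs, h2⟩ := orb_surj o
      exact ⟨s, by simpa using hs, h2⟩), Finset.sum_filter, Fintype.sum_prod_type]
  refine Finset.sum_congr rfl fun c _ => Finset.sum_congr rfl fun x _ => ?_
  by_cases hg : Good c x
  · rw [if_pos hg, if_pos hg]
    congr 2
    have : ((Finset.univ : Finset (Raw n)).filter (fun s => Good s.1 s.2)).filter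
        (fun a' => orb a' = orb (c, x)) =
        ((W c).image (fun σ => σ ∘ x)).image (fun y => ((c, y) : Raw n)) := by
      ext ⟨c', y⟩
      simp only [Finset.mem_filter, Finset.mem_univ, true_and, Finset.mem_image]
      constructor
      · rintro ⟨h1, h2⟩
        obtain ⟨h3, σ, h4, h5⟩ := (orb_eq_iff (c, x) (c', y) hg h1).1 h2.symm
        simp only at h3 h4 h5
        exact ⟨y, ⟨σ, h4, h5.symm⟩, by rw [h3]⟩
      · rintro ⟨z, ⟨σ, h4, h5⟩, h6⟩
        rw [Prod.mk.injEq] at h6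
        obtain ⟨rfl, rfl⟩ := h6
        subst h5
        have hg2 := Good_comp h4 hg
        exact ⟨hg2, ((orb_eq_iff (c, x) (c, σ ∘ x) hg hg2).2 ⟨rfl, σ, h4, rfl⟩).symm⟩
    rw [this, Finset.card_image_of_injective, msz]
    intro a b hab
    simpa using hab
  · rw [if_neg hg, if_neg hg]

open Classical in
lemma sum_two (n : ℕ) (a : Fin 4) (ha : a ≠ 0) :
    ∑ x : Fin n → Fin 4, (if ∀ i, x i = 0 ∨ x i = a then (1 : ℚ) else 0) = 2 ^ n := by
  rw [← Finset.sum_filter, Finset.sum_const, nsmul_eq_mul, mul_one]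
  have : (Finset.univ : Finset (Fin n → Fin 4)).filter (fun x => ∀ i, x i = 0 ∨ x i = a) =
      Fintype.piFinset (fun _ => ({0, a} : Finset (Fin 4))) := by
    ext x
    simp [Fintype.mem_piFinset]
  rw [this, Fintype.card_piFinset]
  simp [Finset.card_pair ha.symm]

open Classical in
lemma sum_zero (n : ℕ) :
    ∑ x : Fin n → Fin 4, (if ∀ i, x i = 0 then (1 : ℚ) else 0) = 1 := by
  have : ∀ x : Fin n → Fin 4, (∀ i, x i = 0) ↔ x = 0 := fun x => by
    rw [funext_iff]; rfl
  simp [this]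

lemma sum_all (n : ℕ) : ∑ _x : Fin n → Fin 4, (1 : ℚ) = 4 ^ n := by
  simp

open Classical in
lemma gen_indicator {n : ℕ} (x : Fin n → Fin 4) :
    (if Gen x then (1 : ℚ) else 0) = 1 - (if ∀ i, x i = 0 ∨ x i = 1 then (1 : ℚ) else 0)
      - (if ∀ i, x i = 0 ∨ x i = 2 then (1 : ℚ) else 0)
      - (if ∀ i, x i = 0 ∨ x i = 3 then (1 : ℚ) else 0)
      + 2 * (if ∀ i, x i = 0 then (1 : ℚ) else 0) := by
  by_cases h0 : ∀ i, x i = 0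
  · have hg : ¬ Gen x := by
      rintro ⟨i, -, h1, -⟩
      exact h1 (h0 i)
    simp [h0, hg]
    norm_num
  · push Not at h0
    obtain ⟨i, hi⟩ := h0
    have hz : ¬ ∀ i, x i = 0 := fun h => hi (h i)
    have other : ∀ a, a ≠ x i → ¬ ∀ j, x j = 0 ∨ x j = a := by
      intro a ha h
      rcases h i with h1 | h1
      · exact hi h1
      · exact ha h1.symm
    have self : Gen x ↔ ¬ ∀ j, x j = 0 ∨ x j = x i := by
      constructor
      · rintro ⟨j, k, h1, h2, h3⟩ h
        apply h3
        rw [(h j).resolve_left h1, (h k).resolve_left h2]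
      · intro h
        push Not at h
        obtain ⟨j, h1, h2⟩ := h
        exact ⟨j, i, h1, hi, h2⟩
    have cs : x i = 1 ∨ x i = 2 ∨ x i = 3 := by
      revert hi
      generalize x i = a
      revert a
      decide
    rw [if_neg hz]
    rcases cs with h | h | h <;> rw [h] at other self
    · rw [if_neg (other 2 (by decide)), if_neg (other 3 (by decide))]
      by_cases hg : Gen x
      · rw [if_pos hg, if_neg (self.1 hg)]; norm_num
      · rw [if_neg hg, if_pos (not_not.1 (fun h => hg (self.2 h)))]; norm_num
    · rw [if_neg (other 1 (by decide)), if_neg (other 3 (by decide))]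
      by_cases hg : Gen x
      · rw [if_pos hg, if_neg (self.1 hg)]; norm_num
      · rw [if_neg hg, if_pos (not_not.1 (fun h => hg (self.2 h)))]; norm_num
    · rw [if_neg (other 1 (by decide)), if_neg (other 2 (by decide))]
      by_cases hg : Gen x
      · rw [if_pos hg, if_neg (self.1 hg)]; norm_num
      · rw [if_neg hg, if_pos (not_not.1 (fun h => hg (self.2 h)))]; norm_num

open Classical in
lemma sum_gen (n : ℕ) :
    ∑ x : Fin n → Fin 4, (if Gen x then (1 : ℚ) else 0) = 4 ^ n - 3 * 2 ^ n + 2 := by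
  simp only [gen_indicator]
  rw [Finset.sum_add_distrib, Finset.sum_sub_distrib, Finset.sum_sub_distrib,
    Finset.sum_sub_distrib, ← Finset.mul_sum, sum_two n 1 (by decide), sum_two n 2 (by decide),
    sum_two n 3 (by decide), sum_zero, sum_all]
  ring

open Classical in
lemma sum_klein (n : ℕ) (c : Fin 6) (h0 : c ≠ 0) (h1 : c ≠ 1) :
    ∑ x : Fin n → Fin 4, (if Good c x then (1 : ℚ) / (msz c x : ℚ) else 0) =
      (4 ^ n - 3 * 2 ^ n + 2) / ((W c).card : ℚ) := by
  rw [← sum_gen, Finset.sum_div]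
  refine Finset.sum_congr rfl fun x _ => ?_
  simp only [Good, h0, h1, if_false]
  by_cases hg : Gen x
  · rw [if_pos hg, if_pos hg, msz_gen c x hg]
  · rw [if_neg hg, if_neg hg, zero_div]

lemma msz_cyc {n : ℕ} (c : Fin 6) (hc : c = 0 ∨ c = 1) (x : Fin n → Fin 4)
    [Decidable (∀ i, x i = 0 ∨ x i = 2)] :
    (1 : ℚ) / (msz c x : ℚ) = 1 / 2 + (if ∀ i, x i = 0 ∨ x i = 2 then (1 : ℚ) else 0) / 2 := by
  have hw : (W c).card = 2 := by rcases hc with rfl | rfl <;> decide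
  by_cases h : ∀ i, x i = 0 ∨ x i = 2
  · rw [if_pos h, msz_even c hc x h]; norm_num
  · rw [if_neg h, msz_odd c hc x h, hw]; norm_num

open Classical in
lemma sum_cyc0 (n : ℕ) :
    ∑ x : Fin n → Fin 4, (if Good 0 x then (1 : ℚ) / (msz 0 x : ℚ) else 0) =
      (4 ^ n + 2 ^ n) / 2 := by
  rw [← sum_two n 2 (by decide), ← sum_all, ← Finset.sum_add_distrib, Finset.sum_div]
  refine Finset.sum_congr rfl fun x _ => ?_
  rw [if_pos (by simp [Good]), msz_cyc 0 (Or.inl rfl)]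
  ring

open Classical in
lemma sum_cyc1 (n : ℕ) :
    ∑ x : Fin n → Fin 4, (if Good 1 x then (1 : ℚ) / (msz 1 x : ℚ) else 0) =
      (4 ^ n + 2 ^ n) / 2 - 1 := by
  have hz : ∀ a b : ℚ, a + (∑ x : Fin n → Fin 4, (if ∀ i, x i = 0 then (1 : ℚ) else 0)) = b →
      a = b - 1 := by
    intro a b hab
    rw [sum_zero] at hab
    linarith
  apply hz
  rw [← sum_two n 2 (by decide), ← sum_all, ← Finset.sum_add_distrib,
    ← Finset.sum_add_distrib, Finset.sum_div]
  refine Finset.sum_congr rfl fun x _ => ?_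
  by_cases h : ∀ i, x i = 0
  · rw [if_neg (by simp [Good, h]), if_pos h, if_pos (fun i => Or.inl (h i))]
    norm_num
  · rw [if_pos (by simpa [Good] using h), if_neg h, msz_cyc 1 (Or.inr rfl)]
    ring

theorem main_count (n : ℕ) : Nat.card (Quot (tupleConj (pTuples G3 2 n))) =
    2 ^ (2 * n + 1) - 2 ^ (n + 1) + 1 := by
  have h := card_orb_sum n
  rw [Fin.sum_univ_six, sum_cyc0, sum_cyc1, sum_klein n 2 (by decide) (by decide),
    sum_klein n 3 (by decide) (by decide), sum_klein n 4 (by decide) (by decide),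
    sum_klein n 5 (by decide) (by decide), show (W 2).card = 6 by decide,
    show (W 3).card = 2 by decide, show (W 4).card = 6 by decide,
    show (W 5).card = 6 by decide] at h
  have hle : 2 ^ (n + 1) ≤ 2 ^ (2 * n + 1) := Nat.pow_le_pow_right (by norm_num) (by omega)
  have e4 : (4 : ℚ) ^ n = 2 ^ (2 * n) := by rw [pow_mul]; norm_num
  have : ((Nat.card (Quot (tupleConj (pTuples G3 2 n))) : ℕ) : ℚ) =
      ((2 ^ (2 * n + 1) - 2 ^ (n + 1) + 1 : ℕ) : ℚ) := by
    rw [h]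
    push_cast [Nat.cast_sub hle]
    rw [pow_succ, pow_succ, ← e4]
    ring
  exact_mod_cast this

end SL3Count

/-- The number of orbits of simultaneous conjugation of `SL₃(ℤ)` on the set of
`n`-tuples of pairwise commuting elements of 2-power order equals `2^{2n+1} − 2^{n+1} + 1`. -/
theorem sl3_orbit_count_two (n : ℕ) (hn : 1 ≤ n) :
    Nat.card (Quot (tupleConj (pTuples (Matrix.SpecialLinearGroup (Fin 3) ℤ) 2 n))) =
      2 ^ (2 * n + 1) - 2 ^ (n + 1) + 1 := by
  exact SL3Count.main_count n
end
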